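/- For every n ≥ 4: if n ≢ 0 (mod 6) then D(n,4,3) = ⌊(n/4)·⌊((n−1)/3)·⌊(n−2)/2⌋⌋⌋, and if n ≡ 0 (mod 6) then D(n,4,3) = ⌊(n/4)·(⌊(n−1)(n−2)/6⌋ − 1)⌋. -/

import Mathlib

/-- The packing number D(n,k,t): the maximum number of k-subsets of an n-set
such that every t-subset is contained in at most one of them. -/
noncomputable def packingNumber (n k t : ℕ) : ℕ :=
  sSup {m | ∃ B : Finset (Finset (Fin n)),
    (∀ b ∈ B, b.card = k) ∧
    (∀ T : Finset (Fin n), T.card = t → (B.filter (fun b => T ⊆ b)).card ≤ 1) ∧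
    B.card = m}

/-- insert a number into a sorted list -/
def ins (a : ℕ) : List ℕ → List ℕ
  | [] => [a]
  | b :: t => bif Nat.ble a b then a :: b :: t else b :: ins a t

/-- sort a list of numbers -/
def isort : List ℕ → List ℕ
  | [] => []
  | a :: t => ins a (isort t)

/-- the first `n` images of a block under a permutation given by its table -/
def orb (p : List ℕ) : ℕ → List ℕ → List (List ℕ)
  | 0, _ => []
  | n + 1, l => l :: orb p n (isort (l.map fun x => p.getD x 0))

/-- union of orbits -/
def orbs (p : List ℕ) : List (ℕ × List ℕ) → List (List ℕ)
  | [] => []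
  | r :: t => orb p r.1 r.2 ++ orbs p t

/-- codes of the pairs of entries -/
def prc : List ℕ → List ℕ
  | [] => []
  | a :: t => t.map (fun b => a * 36 + b) ++ prc t

/-- codes of the triples of entries -/
def trc : List ℕ → List ℕ
  | [] => []
  | a :: t => (prc t).map (fun b => a * 1296 + b) ++ trc t

/-- bit mask of a list of numbers -/
def msk : List ℕ → ℕ
  | [] => 0
  | c :: t => (1 <<< c) ||| msk t

/-- check that no triple occurs in two blocks, nor in the bit set `m` -/
def ndp : List (List ℕ) → ℕ → Bool
  | [], _ => true
  | l :: t, m => Nat.beq (m &&& msk (trc l)) 0 &&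
      (match m ||| msk (trc l) with
        | 0 => false
        | k + 1 => ndp t (k + 1))

/-- strictly increasing -/
def inc : List ℕ → Bool
  | [] => true
  | a :: t => t.all (fun b => Nat.blt a b) && inc t

/-- all codes are in range for the weights -/
def rng (w : List ℕ) (l : List ℕ) : Bool := l.all fun m => Nat.blt (m % 6) (w.getD (m / 6) 0)

/-- number of blocks with `n` elements -/
def cnt (n : ℕ) : List (List ℕ) → ℕ
  | [] => 0
  | l :: t => bif Nat.beq l.length n then cnt n t + 1 else cnt n t

/-- global check of an ingredient -/
def chk (w : List ℕ) (D : List (List ℕ)) : Bool :=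
  D.all (fun l => (Nat.beq l.length 4 || Nat.beq l.length 6) && inc l && rng w l) &&
    ndp D 0


def dPr0 : List (List ℕ) := orbs
  [1, 2, 3, 4, 5, 0, 11, 6, 7, 8, 9, 10, 12, 13, 14, 15, 16, 17, 18, 19, 20, 21, 22, 23, 24, 25, 26, 27, 28, 29, 30, 31, 32, 33, 34, 35]
   [(6, [0, 2, 6, 13]), (6, [0, 2, 7, 17]), (6, [0, 2, 8, 12]), (6, [0, 2, 9, 15]),
    (6, [0, 2, 10, 14]), (6, [0, 2, 11, 16]), (3, [0, 3, 6, 9]), (3, [0, 3, 7, 10]),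
    (3, [0, 3, 8, 11]), (3, [0, 3, 12, 14]), (3, [0, 3, 13, 16]), (3, [0, 3, 15, 17]),
    (6, [0, 6, 8, 17]), (6, [0, 6, 10, 16]), (6, [0, 6, 12, 15]), (6, [0, 7, 9, 14]),
    (6, [0, 7, 11, 12]), (6, [0, 7, 13, 15]), (6, [0, 8, 10, 15]), (6, [0, 8, 14, 16]),
    (6, [0, 9, 11, 13]), (6, [0, 9, 12, 16]), (6, [0, 10, 13, 17]), (6, [0, 11, 14, 17]),
    (3, [6, 9, 12, 14]), (3, [6, 9, 13, 16]), (3, [6, 9, 15, 17])]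

def dPr2 : List (List ℕ) := orbs
  [6, 7, 8, 9, 10, 11, 12, 13, 14, 15, 16, 17, 0, 1, 2, 3, 4, 5, 18, 19, 20, 21, 22, 23, 24, 25, 26, 27, 28, 29, 30, 31, 32, 33, 34, 35]
   [(3, [0, 2, 6, 8]), (3, [0, 2, 7, 15]), (3, [0, 2, 9, 17]), (3, [0, 2, 10, 16]),
    (3, [0, 2, 11, 13]), (3, [0, 3, 6, 9]), (3, [0, 3, 7, 11]), (3, [0, 3, 8, 10]),
    (3, [0, 3, 13, 17]), (3, [0, 3, 14, 16]), (3, [0, 4, 6, 10]), (3, [0, 4, 7, 17]),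
    (3, [0, 4, 8, 14]), (3, [0, 4, 9, 13]), (3, [0, 4, 11, 15]), (1, [0, 6, 12, 25]),
    (3, [0, 6, 13, 16]), (3, [0, 6, 14, 17]), (3, [0, 6, 15, 24]), (3, [0, 7, 9, 16]),
    (3, [0, 7, 13, 24]), (3, [0, 7, 14, 25]), (3, [0, 8, 13, 25]), (3, [0, 8, 15, 17]),
    (3, [0, 8, 16, 24]), (3, [0, 9, 11, 14]), (3, [0, 9, 15, 25]), (3, [0, 10, 13, 15]),
    (3, [0, 10, 14, 24]), (3, [0, 10, 17, 25]), (3, [0, 11, 16, 25]), (3, [0, 11, 17, 24]),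
    (3, [1, 3, 7, 9]), (3, [1, 3, 8, 14]), (3, [1, 3, 11, 17]), (3, [1, 4, 7, 10]),
    (3, [1, 4, 8, 11]), (3, [1, 4, 9, 15]), (3, [1, 4, 14, 17]), (3, [1, 5, 7, 11]),
    (3, [1, 5, 8, 16]), (3, [1, 5, 10, 14]), (1, [1, 7, 13, 25]), (3, [1, 7, 14, 16]),
    (3, [1, 7, 15, 17]), (3, [1, 8, 15, 24]), (3, [1, 9, 16, 24]), (3, [1, 9, 17, 25]),
    (3, [1, 10, 16, 25]), (3, [1, 10, 17, 24]), (3, [1, 11, 14, 24]), (3, [1, 11, 15, 25]),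
    (3, [2, 4, 8, 10]), (3, [2, 4, 11, 17]), (3, [2, 5, 8, 11]), (3, [2, 5, 9, 15]),
    (1, [2, 8, 14, 24]), (3, [2, 8, 17, 25]), (3, [2, 9, 16, 25]), (3, [2, 10, 15, 25]),
    (3, [2, 11, 15, 24]), (3, [3, 5, 9, 11]), (3, [3, 5, 10, 16]), (1, [3, 9, 15, 24]),
    (3, [3, 11, 16, 24]), (1, [4, 10, 16, 24]), (1, [5, 11, 17, 25])]

def dPr4 : List (List ℕ) := orbs
  [6, 7, 8, 9, 10, 11, 12, 13, 14, 15, 16, 17, 0, 1, 2, 3, 4, 5, 18, 19, 20, 21, 22, 23, 24, 25, 26, 27, 28, 29, 30, 31, 32, 33, 34, 35]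
   [(3, [0, 2, 6, 8]), (3, [0, 2, 7, 9]), (3, [0, 2, 10, 16]), (3, [0, 2, 11, 13]),
    (3, [0, 2, 15, 17]), (3, [0, 3, 6, 9]), (3, [0, 3, 7, 10]), (3, [0, 3, 8, 11]),
    (3, [0, 3, 13, 16]), (3, [0, 3, 14, 17]), (3, [0, 4, 6, 10]), (3, [0, 4, 7, 11]),
    (3, [0, 4, 8, 14]), (3, [0, 4, 9, 15]), (3, [0, 4, 13, 17]), (1, [0, 6, 12, 25]),
    (3, [0, 6, 13, 26]), (3, [0, 6, 14, 16]), (3, [0, 6, 15, 27]), (3, [0, 6, 17, 24]),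
    (3, [0, 7, 13, 15]), (3, [0, 7, 14, 24]), (3, [0, 7, 16, 25]), (3, [0, 7, 17, 27]),
    (3, [0, 8, 13, 27]), (3, [0, 8, 15, 26]), (3, [0, 8, 16, 24]), (3, [0, 8, 17, 25]),
    (3, [0, 9, 11, 17]), (3, [0, 9, 13, 24]), (3, [0, 9, 14, 25]), (3, [0, 9, 16, 26]),
    (3, [0, 10, 13, 25]), (3, [0, 10, 14, 27]), (3, [0, 10, 15, 24]), (3, [0, 10, 17, 26]),
    (3, [0, 11, 14, 26]), (3, [0, 11, 15, 25]), (3, [0, 11, 16, 27]), (3, [1, 3, 7, 16]),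
    (3, [1, 3, 8, 10]), (3, [1, 3, 9, 11]), (3, [1, 3, 15, 17]), (3, [1, 4, 7, 10]),
    (3, [1, 4, 8, 11]), (3, [1, 4, 14, 17]), (3, [1, 5, 7, 11]), (3, [1, 5, 8, 15]),
    (3, [1, 5, 9, 14]), (1, [1, 7, 13, 26]), (3, [1, 7, 14, 25]), (3, [1, 7, 15, 27]),
    (3, [1, 7, 17, 24]), (3, [1, 8, 14, 26]), (3, [1, 8, 16, 27]), (3, [1, 9, 15, 25]),
    (3, [1, 9, 16, 24]), (3, [1, 9, 17, 26]), (3, [1, 10, 14, 24]), (3, [1, 10, 16, 26]),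
    (3, [1, 10, 17, 27]), (3, [1, 11, 14, 16]), (3, [1, 11, 15, 26]), (3, [1, 11, 17, 25]),
    (3, [2, 4, 8, 10]), (3, [2, 4, 9, 11]), (3, [2, 5, 8, 11]), (1, [2, 8, 14, 25]),
    (3, [2, 8, 15, 24]), (3, [2, 8, 17, 27]), (3, [2, 9, 15, 27]), (3, [2, 9, 16, 25]),
    (3, [2, 10, 15, 26]), (3, [2, 10, 17, 25]), (3, [2, 11, 16, 26]), (3, [2, 11, 17, 24]),
    (3, [3, 5, 10, 17]), (1, [3, 9, 15, 26]), (3, [3, 9, 17, 24]), (3, [3, 10, 16, 27]),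
    (3, [3, 11, 16, 25]), (3, [3, 11, 17, 27]), (1, [4, 10, 16, 25]), (3, [4, 10, 17, 24]),
    (1, [5, 11, 17, 26])]

def dPr6 : List (List ℕ) := orbs
  [6, 7, 8, 9, 10, 11, 12, 13, 14, 15, 16, 17, 0, 1, 2, 3, 4, 5, 18, 19, 20, 21, 22, 23, 24, 25, 26, 27, 28, 29, 30, 31, 32, 33, 34, 35]
   [(3, [0, 2, 6, 8]), (3, [0, 2, 7, 10]), (3, [0, 2, 9, 11]), (3, [0, 2, 13, 16]),
    (3, [0, 2, 15, 17]), (3, [0, 3, 6, 9]), (3, [0, 3, 7, 11]), (3, [0, 3, 8, 10]),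
    (3, [0, 3, 13, 17]), (3, [0, 3, 14, 16]), (3, [0, 4, 6, 10]), (3, [0, 4, 7, 9]),
    (3, [0, 4, 8, 11]), (3, [0, 4, 13, 15]), (3, [0, 4, 14, 17]), (1, [0, 6, 12, 28]),
    (3, [0, 6, 13, 29]), (3, [0, 6, 14, 24]), (3, [0, 6, 15, 25]), (3, [0, 6, 16, 26]),
    (3, [0, 6, 17, 27]), (3, [0, 7, 13, 27]), (3, [0, 7, 14, 25]), (3, [0, 7, 15, 24]),
    (3, [0, 7, 16, 28]), (3, [0, 7, 17, 26]), (3, [0, 8, 13, 25]), (3, [0, 8, 14, 28]),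
    (3, [0, 8, 15, 26]), (3, [0, 8, 16, 27]), (3, [0, 8, 17, 29]), (3, [0, 9, 13, 24]),
    (3, [0, 9, 14, 26]), (3, [0, 9, 15, 27]), (3, [0, 9, 16, 29]), (3, [0, 9, 17, 28]),
    (3, [0, 10, 13, 28]), (3, [0, 10, 14, 27]), (3, [0, 10, 15, 29]), (3, [0, 10, 16, 25]),
    (3, [0, 10, 17, 24]), (3, [0, 11, 13, 26]), (3, [0, 11, 14, 29]), (3, [0, 11, 15, 28]),
    (3, [0, 11, 16, 24]), (3, [0, 11, 17, 25]), (3, [1, 3, 7, 9]), (3, [1, 3, 8, 11]),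
    (3, [1, 3, 14, 17]), (3, [1, 4, 7, 10]), (3, [1, 4, 9, 11]), (3, [1, 4, 15, 17]),
    (3, [1, 5, 7, 11]), (3, [1, 5, 8, 10]), (3, [1, 5, 14, 16]), (1, [1, 7, 13, 29]),
    (3, [1, 7, 14, 26]), (3, [1, 7, 15, 28]), (3, [1, 7, 16, 24]), (3, [1, 7, 17, 25]),
    (3, [1, 8, 14, 24]), (3, [1, 8, 15, 27]), (3, [1, 8, 16, 29]), (3, [1, 8, 17, 28]),
    (3, [1, 9, 14, 27]), (3, [1, 9, 15, 26]), (3, [1, 9, 16, 25]), (3, [1, 9, 17, 29]),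
    (3, [1, 10, 14, 29]), (3, [1, 10, 15, 25]), (3, [1, 10, 16, 26]), (3, [1, 10, 17, 27]),
    (3, [1, 11, 14, 28]), (3, [1, 11, 15, 29]), (3, [1, 11, 16, 27]), (3, [1, 11, 17, 24]),
    (3, [2, 4, 8, 10]), (3, [2, 5, 8, 11]), (1, [2, 8, 14, 29]), (3, [2, 8, 15, 25]),
    (3, [2, 8, 16, 26]), (3, [2, 8, 17, 27]), (3, [2, 9, 15, 29]), (3, [2, 9, 16, 28]),
    (3, [2, 9, 17, 24]), (3, [2, 10, 15, 28]), (3, [2, 10, 16, 24]), (3, [2, 10, 17, 25]),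
    (3, [2, 11, 15, 24]), (3, [2, 11, 16, 25]), (3, [2, 11, 17, 26]), (3, [3, 5, 9, 11]),
    (1, [3, 9, 15, 28]), (3, [3, 9, 16, 24]), (3, [3, 9, 17, 25]), (3, [3, 10, 16, 27]),
    (3, [3, 10, 17, 26]), (3, [3, 11, 16, 26]), (3, [3, 11, 17, 27]), (1, [4, 10, 16, 28]),
    (3, [4, 10, 17, 29]), (3, [4, 11, 17, 28]), (1, [5, 11, 17, 29])]

def dPr5 : List (List ℕ) := orbs
  [6, 7, 8, 9, 10, 11, 12, 13, 14, 15, 16, 17, 0, 1, 2, 3, 4, 5, 18, 19, 20, 21, 22, 23, 24, 25, 26, 27, 28, 29, 30, 31, 32, 33, 34, 35]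
   [(3, [0, 2, 6, 8]), (3, [0, 2, 7, 10]), (3, [0, 2, 9, 11]), (3, [0, 2, 13, 16]),
    (3, [0, 2, 15, 17]), (3, [0, 3, 6, 9]), (3, [0, 3, 7, 11]), (3, [0, 3, 8, 10]),
    (3, [0, 3, 13, 17]), (3, [0, 3, 14, 16]), (3, [0, 4, 6, 10]), (3, [0, 4, 7, 9]),
    (3, [0, 4, 8, 11]), (3, [0, 4, 13, 15]), (3, [0, 4, 14, 17]), (1, [0, 6, 12, 28]),
    (3, [0, 6, 14, 24]), (3, [0, 6, 15, 25]), (3, [0, 6, 16, 26]), (3, [0, 6, 17, 27]),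
    (3, [0, 7, 13, 27]), (3, [0, 7, 14, 25]), (3, [0, 7, 15, 24]), (3, [0, 7, 16, 28]),
    (3, [0, 7, 17, 26]), (3, [0, 8, 13, 25]), (3, [0, 8, 14, 28]), (3, [0, 8, 15, 26]),
    (3, [0, 8, 16, 27]), (3, [0, 9, 13, 24]), (3, [0, 9, 14, 26]), (3, [0, 9, 15, 27]),
    (3, [0, 9, 17, 28]), (3, [0, 10, 13, 28]), (3, [0, 10, 14, 27]), (3, [0, 10, 16, 25]),
    (3, [0, 10, 17, 24]), (3, [0, 11, 13, 26]), (3, [0, 11, 15, 28]), (3, [0, 11, 16, 24]),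
    (3, [0, 11, 17, 25]), (3, [1, 3, 7, 9]), (3, [1, 3, 8, 11]), (3, [1, 3, 14, 17]),
    (3, [1, 4, 7, 10]), (3, [1, 4, 9, 11]), (3, [1, 4, 15, 17]), (3, [1, 5, 7, 11]),
    (3, [1, 5, 8, 10]), (3, [1, 5, 14, 16]), (3, [1, 7, 14, 26]), (3, [1, 7, 15, 28]),
    (3, [1, 7, 16, 24]), (3, [1, 7, 17, 25]), (3, [1, 8, 14, 24]), (3, [1, 8, 15, 27]),
    (3, [1, 8, 17, 28]), (3, [1, 9, 14, 27]), (3, [1, 9, 15, 26]), (3, [1, 9, 16, 25]),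
    (3, [1, 10, 15, 25]), (3, [1, 10, 16, 26]), (3, [1, 10, 17, 27]), (3, [1, 11, 14, 28]),
    (3, [1, 11, 16, 27]), (3, [1, 11, 17, 24]), (3, [2, 4, 8, 10]), (3, [2, 5, 8, 11]),
    (3, [2, 8, 15, 25]), (3, [2, 8, 16, 26]), (3, [2, 8, 17, 27]), (3, [2, 9, 16, 28]),
    (3, [2, 9, 17, 24]), (3, [2, 10, 15, 28]), (3, [2, 10, 16, 24]), (3, [2, 10, 17, 25]),
    (3, [2, 11, 15, 24]), (3, [2, 11, 16, 25]), (3, [2, 11, 17, 26]), (3, [3, 5, 9, 11]),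
    (1, [3, 9, 15, 28]), (3, [3, 9, 16, 24]), (3, [3, 9, 17, 25]), (3, [3, 10, 16, 27]),
    (3, [3, 10, 17, 26]), (3, [3, 11, 16, 26]), (3, [3, 11, 17, 27]), (1, [4, 10, 16, 28]),
    (3, [4, 11, 17, 28])]

def dHx0 : List (List ℕ) := orbs
  [1, 2, 3, 4, 5, 0, 11, 6, 7, 8, 9, 10, 12, 13, 14, 15, 16, 17, 18, 19, 20, 21, 22, 23, 24, 25, 26, 27, 28, 29, 30, 31, 32, 33, 34, 35]
   [(6, [0, 1, 6, 12]), (6, [0, 1, 7, 17]), (6, [0, 1, 8, 16]), (6, [0, 1, 9, 15]),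
    (6, [0, 1, 10, 14]), (6, [0, 1, 11, 13]), (6, [0, 6, 7, 14]), (6, [0, 6, 11, 15]),
    (6, [0, 6, 16, 17]), (6, [0, 7, 8, 13]), (6, [0, 7, 15, 16]), (6, [0, 8, 9, 12]),
    (6, [0, 8, 14, 15]), (6, [0, 9, 10, 17]), (6, [0, 9, 13, 14]), (6, [0, 10, 11, 16]),
    (6, [0, 10, 12, 13]), (6, [0, 11, 12, 17])]

def dHx6 : List (List ℕ) := orbs
  [6, 7, 8, 9, 10, 11, 12, 13, 14, 15, 16, 17, 0, 1, 2, 3, 4, 5, 18, 19, 20, 21, 22, 23, 24, 25, 26, 27, 28, 29, 30, 31, 32, 33, 34, 35]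
   [(3, [0, 1, 6, 7]), (3, [0, 1, 8, 9]), (3, [0, 1, 10, 11]), (3, [0, 1, 14, 15]),
    (3, [0, 1, 16, 17]), (3, [0, 5, 6, 11]), (3, [0, 5, 7, 8]), (3, [0, 5, 9, 10]),
    (3, [0, 5, 13, 14]), (3, [0, 5, 15, 16]), (1, [0, 6, 12, 30]), (3, [0, 6, 13, 31]),
    (3, [0, 6, 14, 32]), (3, [0, 6, 15, 33]), (3, [0, 6, 16, 34]), (3, [0, 6, 17, 35]),
    (3, [0, 7, 13, 30]), (3, [0, 7, 14, 33]), (3, [0, 7, 15, 32]), (3, [0, 7, 16, 35]),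
    (3, [0, 7, 17, 34]), (3, [0, 8, 13, 33]), (3, [0, 8, 14, 34]), (3, [0, 8, 15, 35]),
    (3, [0, 8, 16, 30]), (3, [0, 8, 17, 31]), (3, [0, 9, 13, 32]), (3, [0, 9, 14, 35]),
    (3, [0, 9, 15, 34]), (3, [0, 9, 16, 31]), (3, [0, 9, 17, 30]), (3, [0, 10, 13, 35]),
    (3, [0, 10, 14, 30]), (3, [0, 10, 15, 31]), (3, [0, 10, 16, 32]), (3, [0, 10, 17, 33]),
    (3, [0, 11, 13, 34]), (3, [0, 11, 14, 31]), (3, [0, 11, 15, 30]), (3, [0, 11, 16, 33]),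
    (3, [0, 11, 17, 32]), (3, [1, 2, 7, 8]), (3, [1, 2, 9, 10]), (3, [1, 2, 15, 16]),
    (1, [1, 7, 13, 31]), (3, [1, 7, 14, 32]), (3, [1, 7, 15, 33]), (3, [1, 7, 16, 34]),
    (3, [1, 7, 17, 35]), (3, [1, 8, 14, 35]), (3, [1, 8, 15, 34]), (3, [1, 8, 16, 31]),
    (3, [1, 8, 17, 30]), (3, [1, 9, 14, 34]), (3, [1, 9, 15, 35]), (3, [1, 9, 16, 30]),
    (3, [1, 9, 17, 31]), (3, [1, 10, 14, 31]), (3, [1, 10, 15, 30]), (3, [1, 10, 16, 33]),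
    (3, [1, 10, 17, 32]), (3, [1, 11, 14, 30]), (3, [1, 11, 15, 31]), (3, [1, 11, 16, 32]),
    (3, [1, 11, 17, 33]), (3, [2, 3, 8, 9]), (3, [2, 3, 10, 11]), (3, [2, 3, 16, 17]),
    (1, [2, 8, 14, 30]), (3, [2, 8, 15, 31]), (3, [2, 8, 16, 32]), (3, [2, 8, 17, 33]),
    (3, [2, 9, 15, 30]), (3, [2, 9, 16, 33]), (3, [2, 9, 17, 32]), (3, [2, 10, 15, 33]),
    (3, [2, 10, 16, 34]), (3, [2, 10, 17, 35]), (3, [2, 11, 15, 32]), (3, [2, 11, 16, 35]),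
    (3, [2, 11, 17, 34]), (3, [3, 4, 9, 10]), (1, [3, 9, 15, 31]), (3, [3, 9, 16, 32]),
    (3, [3, 9, 17, 33]), (3, [3, 10, 16, 35]), (3, [3, 10, 17, 34]), (3, [3, 11, 16, 34]),
    (3, [3, 11, 17, 35]), (3, [4, 5, 10, 11]), (1, [4, 10, 16, 30]), (3, [4, 10, 17, 31]),
    (3, [4, 11, 17, 30]), (1, [5, 11, 17, 31])]

def dG4_0 : List (List ℕ) := orbs
  [1, 2, 3, 4, 5, 0, 7, 8, 9, 10, 11, 6, 12, 13, 14, 15, 16, 17, 18, 19, 20, 21, 22, 23, 24, 25, 26, 27, 28, 29, 30, 31, 32, 33, 34, 35]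
   [(1, [0, 1, 2, 3, 4, 5]), (6, [0, 1, 6, 7]), (6, [0, 1, 8, 9]), (6, [0, 1, 10, 11]),
    (6, [0, 2, 6, 8]), (6, [0, 2, 7, 10]), (6, [0, 2, 9, 11]), (3, [0, 3, 6, 9]),
    (6, [0, 3, 7, 11]), (1, [6, 7, 8, 9, 10, 11])]

def dG4_2 : List (List ℕ) := orbs
  [1, 2, 3, 4, 5, 0, 7, 8, 9, 10, 11, 6, 12, 13, 14, 15, 16, 17, 18, 19, 20, 21, 22, 23, 25, 24, 26, 27, 28, 29, 30, 31, 32, 33, 34, 35]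
   [(6, [0, 1, 2, 6]), (3, [0, 1, 3, 4]), (6, [0, 1, 7, 24]), (6, [0, 1, 8, 9]),
    (6, [0, 1, 10, 25]), (2, [0, 2, 4, 24]), (6, [0, 2, 7, 25]), (6, [0, 2, 8, 10]),
    (6, [0, 2, 9, 11]), (6, [0, 3, 6, 24]), (3, [0, 3, 7, 10]), (3, [0, 3, 8, 11]),
    (6, [0, 6, 7, 11]), (6, [0, 6, 9, 10]), (6, [0, 8, 24, 25]), (6, [0, 10, 11, 24]),
    (6, [6, 7, 10, 25]), (2, [6, 8, 10, 24])]

def dG4_4 : List (List ℕ) := orbs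
  [1, 2, 3, 4, 5, 6, 7, 8, 9, 10, 11, 0, 12, 13, 14, 15, 16, 17, 18, 19, 20, 21, 22, 23, 25, 26, 27, 24, 28, 29, 30, 31, 32, 33, 34, 35]
   [(12, [0, 1, 2, 9]), (12, [0, 1, 3, 27]), (12, [0, 1, 4, 26]), (12, [0, 1, 5, 10]),
    (6, [0, 1, 6, 7]), (12, [0, 1, 24, 25]), (12, [0, 2, 4, 27]), (12, [0, 2, 5, 24]),
    (6, [0, 2, 6, 8]), (3, [0, 3, 6, 9]), (12, [0, 3, 8, 24]), (4, [0, 4, 8, 25]),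
    (12, [0, 5, 26, 27]), (6, [0, 6, 24, 26]), (6, [0, 6, 25, 27])]

def dG4_5 : List (List ℕ) := orbs
  [1, 2, 3, 4, 5, 6, 7, 8, 9, 10, 11, 0, 12, 13, 14, 15, 16, 17, 18, 19, 20, 21, 22, 23, 25, 26, 24, 28, 27, 29, 30, 31, 32, 33, 34, 35]
   [(12, [0, 1, 2, 10]), (12, [0, 1, 3, 28]), (12, [0, 1, 4, 25]), (12, [0, 1, 5, 27]),
    (12, [0, 1, 6, 8]), (12, [0, 1, 24, 26]), (12, [0, 2, 5, 8]), (12, [0, 2, 9, 26]),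
    (12, [0, 2, 25, 28]), (12, [0, 3, 8, 25]), (12, [0, 4, 24, 27]), (12, [0, 5, 24, 28]),
    (6, [0, 6, 24, 25]), (6, [0, 6, 27, 28])]

def dG4_6 : List (List ℕ) := orbs
  [1, 2, 3, 4, 5, 6, 7, 8, 9, 10, 11, 0, 12, 13, 14, 15, 16, 17, 18, 19, 20, 21, 22, 23, 25, 26, 27, 28, 29, 24, 30, 31, 32, 33, 34, 35]
   [(12, [0, 1, 2, 27]), (12, [0, 1, 3, 29]), (12, [0, 1, 4, 9]), (12, [0, 1, 5, 6]),
    (12, [0, 1, 10, 28]), (12, [0, 1, 24, 25]), (2, [0, 2, 4, 6, 8, 10]), (12, [0, 2, 5, 29]),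
    (12, [0, 2, 7, 26]), (12, [0, 2, 9, 25]), (3, [0, 3, 6, 9]), (12, [0, 3, 25, 26]),
    (12, [0, 4, 24, 28]), (12, [0, 4, 25, 27]), (12, [0, 4, 26, 29]), (12, [0, 5, 26, 27]),
    (6, [0, 6, 24, 27]), (6, [0, 6, 25, 29]), (6, [0, 6, 26, 28])]

def dG4_8 : List (List ℕ) := orbs
  [1, 2, 3, 4, 5, 6, 7, 8, 9, 10, 11, 0, 12, 13, 14, 15, 16, 17, 18, 19, 20, 21, 22, 23, 25, 24, 26, 27, 28, 29, 31, 32, 33, 34, 35, 30]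
   [(12, [0, 1, 2, 25]), (12, [0, 1, 3, 8]), (12, [0, 1, 4, 6]), (12, [0, 1, 5, 30]),
    (12, [0, 1, 7, 9]), (12, [0, 1, 10, 33]), (12, [0, 1, 31, 35]), (12, [0, 1, 32, 34]),
    (12, [0, 2, 4, 30]), (12, [0, 2, 24, 31]), (12, [0, 2, 32, 33]), (3, [0, 3, 6, 9]),
    (12, [0, 3, 7, 34]), (12, [0, 3, 24, 33]), (12, [0, 3, 25, 31]), (12, [0, 3, 30, 32]),
    (4, [0, 4, 8, 24]), (12, [0, 4, 25, 32]), (12, [0, 4, 33, 34]), (12, [0, 5, 24, 32]),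
    (12, [0, 5, 25, 35]), (12, [0, 5, 31, 34]), (6, [0, 6, 24, 25]), (6, [0, 6, 30, 33]),
    (6, [0, 6, 31, 32]), (6, [0, 6, 34, 35])]

def dG4_10 : List (List ℕ) := orbs
  [1, 2, 3, 4, 5, 6, 7, 8, 9, 10, 11, 0, 12, 13, 14, 15, 16, 17, 18, 19, 20, 21, 22, 23, 25, 26, 27, 24, 28, 29, 31, 32, 33, 34, 35, 30]
   [(12, [0, 1, 2, 4]), (12, [0, 1, 5, 6]), (12, [0, 1, 9, 30]), (12, [0, 1, 10, 32]),
    (12, [0, 1, 24, 34]), (12, [0, 1, 25, 31]), (12, [0, 1, 26, 33]), (12, [0, 1, 27, 35]),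
    (12, [0, 2, 5, 9]), (6, [0, 2, 6, 8]), (12, [0, 2, 7, 27]), (12, [0, 2, 24, 32]),
    (12, [0, 2, 25, 33]), (12, [0, 2, 26, 35]), (12, [0, 2, 30, 31]), (3, [0, 3, 6, 9]),
    (12, [0, 3, 24, 27]), (12, [0, 3, 25, 35]), (12, [0, 3, 26, 31]), (12, [0, 3, 30, 32]),
    (4, [0, 4, 8, 26]), (12, [0, 4, 24, 35]), (12, [0, 4, 25, 34]), (12, [0, 4, 27, 30]),
    (12, [0, 4, 31, 32]), (12, [0, 5, 26, 27]), (12, [0, 5, 30, 34]), (12, [0, 5, 31, 33]),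
    (12, [0, 5, 32, 35]), (6, [0, 6, 24, 26]), (6, [0, 6, 25, 27]), (6, [0, 6, 30, 35]),
    (6, [0, 6, 31, 34]), (6, [0, 6, 32, 33])]

def dG6_0 : List (List ℕ) := orbs
  [1, 2, 3, 4, 5, 6, 7, 8, 9, 10, 11, 12, 13, 14, 15, 16, 17, 18, 19, 20, 21, 22, 23, 0, 24, 25, 26, 27, 28, 29, 30, 31, 32, 33, 34, 35]
   [(24, [0, 1, 2, 4]), (24, [0, 1, 5, 11]), (24, [0, 1, 6, 8]), (24, [0, 1, 7, 17]),
    (24, [0, 1, 9, 20]), (24, [0, 1, 10, 16]), (12, [0, 1, 12, 13]), (24, [0, 1, 14, 21]),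
    (24, [0, 1, 15, 18]), (24, [0, 1, 19, 22]), (24, [0, 2, 5, 9]), (24, [0, 2, 6, 17]),
    (24, [0, 2, 7, 20]), (24, [0, 2, 8, 11]), (24, [0, 2, 10, 15]), (12, [0, 2, 12, 14]),
    (24, [0, 2, 13, 16]), (24, [0, 3, 8, 15]), (24, [0, 3, 12, 19]), (24, [0, 3, 14, 20]),
    (4, [0, 4, 8, 12, 16, 20]), (24, [0, 4, 9, 14]), (6, [0, 6, 12, 18])]

def dG6_2 : List (List ℕ) := orbs
  [1, 2, 3, 4, 5, 6, 7, 8, 9, 10, 11, 12, 13, 14, 15, 16, 17, 18, 19, 20, 21, 22, 23, 0, 25, 24, 26, 27, 28, 29, 30, 31, 32, 33, 34, 35]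
   [(24, [0, 1, 2, 6]), (24, [0, 1, 3, 19]), (24, [0, 1, 4, 14]), (24, [0, 1, 7, 22]),
    (24, [0, 1, 8, 20]), (24, [0, 1, 9, 12]), (24, [0, 1, 10, 18]), (24, [0, 1, 11, 25]),
    (24, [0, 1, 13, 16]), (24, [0, 1, 15, 24]), (24, [0, 1, 17, 21]), (24, [0, 2, 4, 19]),
    (24, [0, 2, 5, 25]), (24, [0, 2, 7, 21]), (24, [0, 2, 8, 13]), (24, [0, 2, 10, 12]),
    (24, [0, 2, 11, 15]), (24, [0, 2, 20, 24]), (24, [0, 3, 6, 17]), (24, [0, 3, 7, 24]),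
    (24, [0, 3, 8, 18]), (24, [0, 4, 9, 18]), (24, [0, 4, 10, 17]), (24, [0, 4, 11, 16]),
    (24, [0, 5, 11, 24]), (6, [0, 6, 12, 18]), (24, [0, 7, 15, 25]), (8, [0, 8, 16, 25]),
    (12, [0, 12, 24, 25])]

def dG6_4 : List (List ℕ) := orbs
  [1, 2, 3, 4, 5, 6, 7, 8, 9, 10, 11, 12, 13, 14, 15, 16, 17, 18, 19, 20, 21, 22, 23, 0, 25, 26, 27, 24, 28, 29, 30, 31, 32, 33, 34, 35]
   [(24, [0, 1, 2, 7]), (24, [0, 1, 3, 14]), (24, [0, 1, 4, 11]), (24, [0, 1, 5, 24]),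
    (24, [0, 1, 8, 9]), (24, [0, 1, 10, 15]), (12, [0, 1, 12, 13]), (24, [0, 1, 18, 21]),
    (24, [0, 1, 19, 26]), (24, [0, 1, 20, 25]), (24, [0, 1, 22, 27]), (24, [0, 2, 4, 26]),
    (24, [0, 2, 5, 19]), (24, [0, 2, 6, 8]), (24, [0, 2, 9, 11]), (24, [0, 2, 10, 12]),
    (24, [0, 2, 21, 27]), (24, [0, 3, 8, 11]), (24, [0, 3, 9, 12]), (24, [0, 3, 13, 27]),
    (24, [0, 3, 20, 24]), (24, [0, 4, 8, 18]), (24, [0, 4, 9, 13]), (24, [0, 4, 10, 17]),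
    (12, [0, 4, 12, 16]), (24, [0, 5, 11, 16]), (12, [0, 5, 12, 17]), (6, [0, 6, 12, 18]),
    (24, [0, 6, 15, 24]), (24, [0, 6, 16, 25]), (24, [0, 6, 17, 26]), (24, [0, 7, 15, 27]),
    (24, [0, 7, 16, 26]), (8, [0, 8, 16, 27]), (24, [0, 10, 25, 26]), (24, [0, 11, 25, 27]),
    (12, [0, 12, 24, 25]), (12, [0, 12, 26, 27])]

def dG6_5 : List (List ℕ) := orbs
  [1, 2, 3, 4, 5, 6, 7, 8, 9, 10, 11, 12, 13, 14, 15, 16, 17, 18, 19, 20, 21, 22, 23, 0, 25, 26, 24, 28, 27, 29, 30, 31, 32, 33, 34, 35]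
   [(24, [0, 1, 2, 22]), (24, [0, 1, 3, 10]), (24, [0, 1, 4, 14]), (24, [0, 1, 5, 25]),
    (24, [0, 1, 6, 15]), (24, [0, 1, 7, 17]), (24, [0, 1, 8, 19]), (24, [0, 1, 9, 26]),
    (24, [0, 1, 11, 13]), (24, [0, 1, 16, 20]), (24, [0, 1, 18, 28]), (24, [0, 1, 24, 27]),
    (24, [0, 2, 5, 10]), (24, [0, 2, 6, 18]), (24, [0, 2, 7, 20]), (24, [0, 2, 8, 26]),
    (24, [0, 2, 11, 19]), (24, [0, 2, 12, 15]), (24, [0, 2, 16, 28]), (24, [0, 2, 21, 27]),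
    (24, [0, 2, 24, 25]), (24, [0, 3, 6, 19]), (24, [0, 3, 7, 15]), (24, [0, 3, 9, 20]),
    (24, [0, 3, 11, 24]), (24, [0, 3, 17, 26]), (24, [0, 3, 18, 25]), (24, [0, 4, 15, 27]),
    (24, [0, 4, 17, 25]), (24, [0, 4, 18, 26]), (24, [0, 4, 19, 28]), (12, [0, 5, 12, 17]),
    (24, [0, 5, 15, 24]), (24, [0, 6, 14, 27]), (24, [0, 7, 25, 27]), (24, [0, 11, 25, 28]),
    (12, [0, 12, 24, 26]), (12, [0, 12, 27, 28])]

def dG6_6 : List (List ℕ) := orbs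
  [1, 2, 3, 4, 5, 6, 7, 8, 9, 10, 11, 12, 13, 14, 15, 16, 17, 18, 19, 20, 21, 22, 23, 0, 25, 26, 27, 28, 29, 24, 30, 31, 32, 33, 34, 35]
   [(24, [0, 1, 2, 12]), (24, [0, 1, 3, 21]), (24, [0, 1, 4, 28]), (24, [0, 1, 5, 10]),
    (24, [0, 1, 6, 13]), (24, [0, 1, 7, 29]), (24, [0, 1, 8, 17]), (24, [0, 1, 9, 19]),
    (24, [0, 1, 14, 22]), (24, [0, 1, 15, 25]), (24, [0, 1, 16, 24]), (24, [0, 1, 18, 20]),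
    (24, [0, 1, 26, 27]), (24, [0, 2, 4, 10]), (24, [0, 2, 5, 11]), (24, [0, 2, 9, 15]),
    (24, [0, 2, 13, 26]), (24, [0, 2, 14, 21]), (24, [0, 2, 17, 29]), (24, [0, 2, 18, 25]),
    (24, [0, 2, 19, 27]), (24, [0, 2, 24, 28]), (24, [0, 3, 7, 28]), (24, [0, 3, 8, 19]),
    (24, [0, 3, 10, 20]), (24, [0, 3, 11, 26]), (12, [0, 3, 12, 15]), (24, [0, 3, 13, 24]),
    (24, [0, 3, 14, 25]), (24, [0, 3, 18, 29]), (4, [0, 4, 8, 12, 16, 20]), (24, [0, 4, 11, 15]),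
    (24, [0, 4, 18, 24]), (24, [0, 4, 19, 26]), (24, [0, 4, 27, 29]), (24, [0, 5, 15, 24]),
    (24, [0, 5, 18, 27]), (24, [0, 5, 28, 29]), (6, [0, 6, 12, 18]), (24, [0, 6, 16, 26]),
    (24, [0, 7, 25, 27]), (24, [0, 8, 24, 27]), (12, [0, 12, 24, 25]), (12, [0, 12, 26, 29]),
    (12, [0, 12, 27, 28])]

def dG6_8 : List (List ℕ) := orbs
  [1, 2, 3, 4, 5, 6, 7, 8, 9, 10, 11, 12, 13, 14, 15, 16, 17, 18, 19, 20, 21, 22, 23, 0, 25, 30, 26, 27, 28, 29, 31, 32, 33, 34, 35, 24]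
   [(24, [0, 1, 2, 24]), (24, [0, 1, 3, 7]), (24, [0, 1, 4, 5]), (24, [0, 1, 6, 9]),
    (24, [0, 1, 8, 34]), (24, [0, 1, 10, 17]), (24, [0, 1, 11, 15]), (24, [0, 1, 12, 33]),
    (24, [0, 1, 13, 18]), (24, [0, 1, 14, 32]), (24, [0, 1, 16, 25]), (24, [0, 1, 19, 31]),
    (24, [0, 1, 22, 30]), (24, [0, 2, 4, 35]), (24, [0, 2, 5, 31]), (24, [0, 2, 7, 21]),
    (24, [0, 2, 8, 13]), (24, [0, 2, 9, 34]), (24, [0, 2, 10, 12]), (24, [0, 2, 11, 20]),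
    (24, [0, 2, 15, 18]), (24, [0, 2, 17, 25]), (24, [0, 2, 19, 30]), (24, [0, 3, 6, 31]),
    (24, [0, 3, 8, 20]), (12, [0, 3, 12, 15]), (24, [0, 3, 13, 34]), (24, [0, 3, 14, 33]),
    (24, [0, 3, 16, 35]), (24, [0, 3, 17, 30]), (24, [0, 4, 8, 32]), (24, [0, 4, 9, 19]),
    (24, [0, 4, 10, 18]), (24, [0, 4, 11, 17]), (24, [0, 4, 16, 30]), (24, [0, 4, 25, 31]),
    (24, [0, 4, 33, 34]), (24, [0, 5, 13, 30]), (24, [0, 5, 25, 33]), (24, [0, 5, 32, 34]),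
    (6, [0, 6, 12, 18]), (24, [0, 6, 25, 32]), (24, [0, 6, 30, 33]), (24, [0, 6, 34, 35]),
    (24, [0, 7, 16, 31]), (24, [0, 7, 30, 34]), (8, [0, 8, 16, 24]), (24, [0, 9, 30, 35]),
    (24, [0, 9, 31, 33]), (24, [0, 10, 24, 30]), (24, [0, 10, 32, 33]), (24, [0, 11, 24, 31]),
    (24, [0, 12, 24, 35])]

def dG6_10 : List (List ℕ) := orbs
  [1, 2, 3, 4, 5, 6, 7, 8, 9, 10, 11, 12, 13, 14, 15, 16, 17, 18, 19, 20, 21, 22, 23, 0, 25, 26, 27, 24, 28, 29, 31, 32, 33, 34, 35, 30]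
   [(24, [0, 1, 2, 13]), (24, [0, 1, 3, 15]), (24, [0, 1, 4, 26]), (24, [0, 1, 5, 24]),
    (24, [0, 1, 6, 9]), (24, [0, 1, 7, 16]), (24, [0, 1, 8, 18]), (24, [0, 1, 10, 22]),
    (24, [0, 1, 11, 32]), (24, [0, 1, 14, 30]), (24, [0, 1, 17, 27]), (24, [0, 1, 19, 34]),
    (24, [0, 1, 20, 25]), (24, [0, 1, 21, 35]), (24, [0, 1, 31, 33]), (24, [0, 2, 4, 7]),
    (24, [0, 2, 6, 21]), (24, [0, 2, 8, 10]), (24, [0, 2, 9, 34]), (24, [0, 2, 11, 25]),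
    (24, [0, 2, 15, 19]), (24, [0, 2, 17, 35]), (24, [0, 2, 20, 30]), (24, [0, 2, 24, 31]),
    (24, [0, 2, 26, 32]), (24, [0, 2, 27, 33]), (24, [0, 3, 6, 26]), (24, [0, 3, 7, 33]),
    (24, [0, 3, 8, 17]), (24, [0, 3, 10, 14]), (24, [0, 3, 11, 16]), (24, [0, 3, 13, 24]),
    (24, [0, 3, 30, 31]), (24, [0, 3, 34, 35]), (24, [0, 4, 8, 35]), (24, [0, 4, 10, 33]),
    (12, [0, 4, 12, 16]), (24, [0, 4, 13, 18]), (24, [0, 4, 15, 24]), (24, [0, 5, 10, 35]),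
    (12, [0, 5, 12, 17]), (24, [0, 5, 18, 31]), (24, [0, 5, 26, 34]), (24, [0, 5, 27, 32]),
    (6, [0, 6, 12, 18]), (24, [0, 6, 13, 27]), (24, [0, 6, 16, 32]), (24, [0, 6, 17, 30]),
    (24, [0, 6, 24, 25]), (24, [0, 7, 24, 35]), (24, [0, 7, 27, 34]), (8, [0, 8, 16, 24]),
    (24, [0, 8, 25, 32]), (24, [0, 8, 27, 31]), (24, [0, 8, 30, 33]), (24, [0, 9, 24, 26]),
    (24, [0, 9, 31, 35]), (24, [0, 9, 32, 33]), (24, [0, 10, 24, 27]), (24, [0, 10, 26, 30]),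
    (24, [0, 11, 33, 35]), (12, [0, 12, 24, 34]), (12, [0, 12, 25, 33]), (12, [0, 12, 26, 31]),
    (12, [0, 12, 27, 30]), (12, [0, 12, 32, 35])]

def dO0 : List (List ℕ) := orbs
  [0, 1, 2, 3, 4, 5, 6, 7, 8, 9, 10, 11, 12, 13, 14, 15, 16, 17, 18, 19, 20, 21, 22, 23, 24, 25, 26, 27, 28, 29, 30, 31, 32, 33, 34, 35]
   []

def dO2 : List (List ℕ) := orbs
  [0, 1, 2, 3, 4, 5, 6, 7, 8, 9, 10, 11, 12, 13, 14, 15, 16, 17, 18, 19, 20, 21, 22, 23, 24, 25, 26, 27, 28, 29, 30, 31, 32, 33, 34, 35]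
   []

def dO4 : List (List ℕ) := orbs
  [0, 1, 2, 3, 4, 5, 6, 7, 8, 9, 10, 11, 12, 13, 14, 15, 16, 17, 18, 19, 20, 21, 22, 23, 24, 25, 26, 27, 28, 29, 30, 31, 32, 33, 34, 35]
   [(1, [24, 25, 26, 27])]

def dO6 : List (List ℕ) := orbs
  [0, 1, 2, 3, 4, 5, 6, 7, 8, 9, 10, 11, 12, 13, 14, 15, 16, 17, 18, 19, 20, 21, 22, 23, 24, 25, 26, 27, 28, 29, 30, 31, 32, 33, 34, 35]
   [(1, [24, 25, 26, 27, 28, 29])]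

def dO8 : List (List ℕ) := orbs
  [0, 1, 2, 3, 4, 5, 6, 7, 8, 9, 10, 11, 12, 13, 14, 15, 16, 17, 18, 19, 20, 21, 22, 23, 25, 30, 26, 27, 28, 29, 31, 32, 33, 34, 24, 35]
   [(7, [24, 25, 30, 32]), (7, [24, 25, 33, 35])]

def dO10 : List (List ℕ) := orbs
  [0, 1, 2, 3, 4, 5, 6, 7, 8, 9, 10, 11, 12, 13, 14, 15, 16, 17, 18, 19, 20, 21, 22, 23, 25, 26, 27, 30, 28, 29, 31, 32, 33, 34, 35, 24]
   [(10, [24, 25, 26, 32]), (10, [24, 25, 27, 30]), (10, [24, 26, 30, 33])]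

def dTd : List (List ℕ) := orbs
  [1, 2, 3, 4, 5, 0, 11, 6, 7, 8, 9, 10, 12, 13, 14, 15, 16, 17, 18, 19, 20, 21, 22, 23, 24, 25, 26, 27, 28, 29, 30, 31, 32, 33, 34, 35]
   [(6, [0, 6, 12, 24]), (6, [0, 6, 13, 25]), (6, [0, 6, 14, 26]), (6, [0, 6, 15, 27]),
    (6, [0, 6, 16, 28]), (6, [0, 7, 12, 25]), (6, [0, 7, 13, 26]), (6, [0, 7, 14, 27]),
    (6, [0, 7, 15, 28]), (6, [0, 7, 17, 24]), (6, [0, 8, 12, 26]), (6, [0, 8, 13, 27]),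
    (6, [0, 8, 14, 28]), (6, [0, 8, 16, 24]), (6, [0, 8, 17, 25]), (6, [0, 9, 12, 27]),
    (6, [0, 9, 13, 28]), (6, [0, 9, 15, 24]), (6, [0, 9, 16, 25]), (6, [0, 9, 17, 26]),
    (6, [0, 10, 12, 28]), (6, [0, 10, 14, 24]), (6, [0, 10, 15, 25]), (6, [0, 10, 16, 26]),
    (6, [0, 10, 17, 27]), (6, [0, 11, 13, 24]), (6, [0, 11, 14, 25]), (6, [0, 11, 15, 26]),
    (6, [0, 11, 16, 27]), (6, [0, 11, 17, 28])]

def dH4 : List (List ℕ) := orbs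
  [1, 2, 3, 4, 5, 0, 11, 6, 7, 8, 9, 10, 12, 13, 14, 15, 16, 17, 18, 19, 20, 21, 22, 23, 24, 25, 26, 27, 28, 29, 30, 31, 32, 33, 34, 35]
   [(6, [0, 6, 12, 18]), (6, [0, 6, 13, 23]), (6, [0, 6, 14, 22]), (6, [0, 6, 15, 21]),
    (6, [0, 6, 16, 20]), (6, [0, 6, 17, 19]), (6, [0, 7, 12, 23]), (6, [0, 7, 13, 22]),
    (6, [0, 7, 14, 21]), (6, [0, 7, 15, 20]), (6, [0, 7, 16, 19]), (6, [0, 7, 17, 18]),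
    (6, [0, 8, 12, 22]), (6, [0, 8, 13, 21]), (6, [0, 8, 14, 20]), (6, [0, 8, 15, 19]),
    (6, [0, 8, 16, 18]), (6, [0, 8, 17, 23]), (6, [0, 9, 12, 21]), (6, [0, 9, 13, 20]),
    (6, [0, 9, 14, 19]), (6, [0, 9, 15, 18]), (6, [0, 9, 16, 23]), (6, [0, 9, 17, 22]),
    (6, [0, 10, 12, 20]), (6, [0, 10, 13, 19]), (6, [0, 10, 14, 18]), (6, [0, 10, 15, 23]),
    (6, [0, 10, 16, 22]), (6, [0, 10, 17, 21]), (6, [0, 11, 12, 19]), (6, [0, 11, 13, 18]),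
    (6, [0, 11, 14, 23]), (6, [0, 11, 15, 22]), (6, [0, 11, 16, 21]), (6, [0, 11, 17, 20])]

def dH6 : List (List ℕ) := orbs
  [7, 8, 9, 10, 11, 6, 13, 14, 15, 16, 17, 12, 19, 20, 21, 22, 23, 18, 25, 26, 27, 28, 29, 24, 1, 2, 3, 4, 5, 0, 31, 32, 33, 34, 35, 30]
   [(30, [0, 6, 12, 19]), (30, [0, 6, 14, 23]), (30, [0, 6, 15, 25]), (30, [0, 6, 16, 31]),
    (30, [0, 6, 17, 32]), (30, [0, 6, 18, 28]), (30, [0, 6, 20, 30]), (30, [0, 6, 21, 35]),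
    (30, [0, 6, 22, 26]), (30, [0, 6, 27, 34]), (30, [0, 6, 29, 33]), (30, [0, 7, 12, 23]),
    (30, [0, 7, 14, 33]), (30, [0, 7, 15, 22]), (30, [0, 7, 16, 19]), (30, [0, 7, 17, 26]),
    (30, [0, 7, 20, 31]), (30, [0, 7, 25, 30]), (30, [0, 7, 27, 35]), (30, [0, 8, 12, 34]),
    (30, [0, 8, 13, 22]), (30, [0, 8, 16, 25]), (30, [0, 8, 18, 32]), (30, [0, 8, 19, 30]),
    (30, [0, 8, 20, 35]), (30, [0, 8, 21, 31]), (30, [0, 8, 27, 33]), (30, [0, 9, 13, 18]),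
    (30, [0, 9, 14, 34]), (30, [0, 9, 21, 33]), (30, [0, 9, 26, 35]), (30, [0, 10, 22, 35]),
    (30, [0, 10, 23, 30]), (30, [0, 10, 25, 34]), (30, [0, 11, 19, 34]), (30, [0, 11, 22, 30])]

def dK12 : List (List ℕ) := orbs
  [2, 3, 4, 5, 0, 1, 8, 9, 10, 11, 6, 7, 12, 13, 14, 15, 16, 17, 18, 19, 20, 21, 22, 23, 25, 26, 24, 27, 28, 29, 30, 31, 32, 33, 34, 35]
   [(3, [0, 1, 2, 5]), (3, [0, 1, 3, 27]), (3, [0, 1, 4, 25]), (3, [0, 1, 6, 28]),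
    (3, [0, 1, 7, 8]), (3, [0, 1, 10, 26]), (3, [0, 1, 11, 24]), (1, [0, 2, 4, 28]),
    (3, [0, 5, 6, 26]), (3, [0, 5, 7, 28]), (3, [0, 5, 9, 25]), (3, [0, 5, 10, 24]),
    (3, [0, 5, 11, 27]), (3, [0, 6, 7, 25]), (3, [0, 6, 24, 27]), (3, [0, 7, 26, 27]),
    (3, [0, 8, 9, 27]), (3, [0, 8, 24, 28]), (3, [0, 8, 25, 26]), (3, [0, 9, 10, 28]),
    (3, [0, 9, 24, 26]), (3, [0, 10, 11, 25]), (3, [0, 11, 26, 28]), (1, [1, 3, 5, 28]),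
    (3, [1, 6, 11, 27]), (3, [1, 6, 24, 26]), (3, [1, 7, 24, 25]), (3, [1, 7, 26, 28]),
    (3, [1, 8, 9, 25]), (3, [1, 8, 26, 27]), (3, [1, 9, 10, 24]), (3, [1, 10, 11, 28]),
    (3, [1, 10, 25, 27]), (3, [6, 7, 8, 9]), (1, [6, 8, 10, 28]), (3, [6, 8, 11, 26]),
    (3, [6, 9, 11, 24])]

def dK13 : List (List ℕ) := orbs
  [2, 3, 4, 5, 0, 1, 8, 9, 10, 11, 6, 7, 12, 13, 14, 15, 16, 17, 18, 19, 20, 21, 22, 23, 25, 26, 24, 27, 28, 29, 30, 31, 32, 33, 34, 35]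
   [(3, [0, 2, 7, 10]), (3, [0, 2, 8, 27]), (3, [0, 2, 9, 25]), (3, [0, 2, 11, 24]),
    (3, [0, 3, 6, 10]), (3, [0, 3, 8, 28]), (3, [0, 3, 9, 24]), (3, [0, 3, 11, 25]),
    (3, [0, 6, 8, 24]), (3, [0, 6, 25, 28]), (3, [0, 7, 9, 28]), (3, [0, 7, 11, 26]),
    (3, [0, 7, 25, 27]), (3, [0, 8, 10, 26]), (3, [0, 9, 11, 27]), (3, [0, 10, 24, 25]),
    (3, [0, 10, 27, 28]), (3, [1, 3, 6, 24]), (3, [1, 3, 7, 11]), (3, [1, 3, 8, 26]),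
    (3, [1, 3, 10, 25]), (3, [1, 6, 9, 26]), (3, [1, 6, 10, 27]), (3, [1, 7, 9, 25]),
    (3, [1, 7, 10, 28]), (3, [1, 7, 24, 27]), (3, [1, 8, 11, 27]), (3, [1, 8, 25, 28]),
    (3, [1, 9, 27, 28]), (3, [1, 11, 24, 28]), (3, [1, 11, 25, 26])]

def dT4 : List (List ℕ) := orbs
  [1, 2, 3, 4, 0, 5, 7, 8, 9, 10, 6, 11, 12, 13, 14, 15, 16, 17, 18, 19, 20, 21, 22, 23, 24, 25, 26, 27, 28, 29, 30, 31, 32, 33, 34, 35]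
   [(5, [0, 1, 6, 7]), (5, [0, 1, 8, 10]), (5, [0, 1, 9, 11]), (5, [0, 2, 6, 8]),
    (5, [0, 2, 7, 11]), (5, [0, 2, 9, 10]), (5, [0, 5, 6, 11]), (5, [0, 5, 7, 10]),
    (5, [0, 5, 8, 9])]

def dZ4 : List (List ℕ) := orbs
  [1, 2, 3, 4, 5, 0, 6, 7, 8, 9, 10, 11, 12, 13, 14, 15, 16, 17, 18, 19, 20, 21, 22, 23, 25, 26, 24, 28, 27, 29, 30, 31, 32, 33, 34, 35]
   [(6, [0, 1, 2, 26]), (3, [0, 1, 3, 4]), (6, [0, 1, 24, 27]), (2, [0, 2, 4, 27]),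
    (6, [0, 2, 24, 28]), (3, [0, 3, 24, 26]), (3, [0, 3, 27, 28]), (6, [0, 25, 26, 27])]

def dZ6 : List (List ℕ) := orbs
  [1, 2, 0, 4, 5, 6, 7, 8, 3, 10, 11, 12, 13, 14, 9, 16, 17, 24, 18, 19, 20, 21, 22, 23, 25, 26, 15, 28, 27, 29, 30, 31, 32, 33, 34, 35]
   [(6, [0, 1, 3, 16]), (6, [0, 1, 4, 12]), (3, [0, 1, 5, 8]), (6, [0, 1, 10, 15]),
    (3, [0, 1, 11, 14]), (6, [0, 1, 17, 27]), (6, [0, 3, 4, 27]), (6, [0, 3, 5, 26]),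
    (6, [0, 3, 7, 10]), (6, [0, 3, 8, 24]), (6, [0, 3, 13, 17]), (6, [0, 3, 14, 25]),
    (6, [0, 3, 15, 28]), (6, [0, 4, 5, 17]), (6, [0, 4, 8, 16]), (6, [0, 4, 9, 11]),
    (6, [0, 4, 10, 28]), (6, [0, 4, 15, 25]), (6, [0, 4, 24, 26]), (6, [0, 5, 9, 14]),
    (6, [0, 5, 10, 16]), (6, [0, 5, 11, 28]), (6, [0, 5, 12, 27]), (6, [0, 9, 10, 27]),
    (6, [0, 9, 13, 15]), (6, [0, 9, 16, 17]), (6, [0, 9, 24, 25]), (6, [0, 10, 11, 25]),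
    (6, [0, 10, 14, 17]), (6, [0, 11, 15, 27]), (6, [0, 11, 17, 24]), (6, [0, 16, 26, 27]),
    (6, [3, 4, 5, 9]), (6, [3, 4, 6, 17]), (6, [3, 4, 7, 28]), (6, [3, 4, 10, 26]),
    (6, [3, 4, 11, 12]), (6, [3, 4, 13, 15]), (6, [3, 5, 10, 24]), (6, [3, 5, 11, 14]),
    (6, [3, 5, 13, 25]), (6, [3, 5, 15, 27]), (6, [3, 6, 9, 16]), (3, [3, 6, 10, 13]),
    (6, [3, 6, 11, 15]), (6, [3, 9, 10, 15]), (6, [3, 9, 11, 26]), (6, [3, 9, 13, 14]),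
    (6, [3, 9, 17, 24]), (6, [3, 10, 12, 16]), (6, [3, 10, 17, 28]), (6, [3, 11, 13, 24]),
    (6, [3, 11, 16, 25]), (6, [3, 11, 27, 28]), (6, [3, 12, 14, 28]), (6, [3, 12, 15, 17]),
    (6, [3, 12, 24, 27]), (6, [3, 13, 16, 27]), (6, [3, 13, 26, 28]), (6, [3, 14, 17, 27]),
    (6, [3, 15, 16, 24]), (6, [3, 15, 25, 26]), (6, [3, 16, 17, 26]), (6, [3, 24, 25, 28]),
    (3, [9, 10, 12, 13]), (6, [9, 10, 16, 26]), (6, [9, 10, 17, 25]), (2, [9, 11, 13, 28]),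
    (3, [9, 12, 15, 24]), (3, [9, 12, 16, 25]), (6, [9, 12, 17, 28]), (6, [9, 15, 17, 27]),
    (6, [9, 25, 26, 28]), (3, [15, 24, 27, 28])]


section Sound

theorem inc_cons {a : ℕ} {t : List ℕ} : inc (a :: t) = true ↔ (∀ b ∈ t, a < b) ∧ inc t = true := by
  simp [inc, Nat.blt]

theorem inc_nodup {l : List ℕ} (h : inc l = true) : l.Nodup := by
  induction l with
  | nil => simp
  | cons a t ih =>
    rw [inc_cons] at h
    refine List.nodup_cons.2 ⟨fun ha => ?_, ih h.2⟩
    exact lt_irrefl _ (h.1 a ha)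

theorem mem_prc {l : List ℕ} (h : inc l = true) {a b : ℕ} (ha : a ∈ l) (hb : b ∈ l) (hab : a < b) :
    a * 36 + b ∈ prc l := by
  induction l with
  | nil => simp at ha
  | cons x t ih =>
    rw [inc_cons] at h
    simp only [prc, List.mem_append, List.mem_map]
    rcases List.mem_cons.1 ha with rfl | ha'
    · rcases List.mem_cons.1 hb with rfl | hb'
      · omega
      · exact Or.inl ⟨b, hb', rfl⟩
    · rcases List.mem_cons.1 hb with rfl | hb'
      · have := h.1 a ha'; omega
      · exact Or.inr (ih h.2 ha' hb')

theorem mem_trc {l : List ℕ} (h : inc l = true) {a b c : ℕ} (ha : a ∈ l) (hb : b ∈ l) (hc : c ∈ l)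
    (hab : a < b) (hbc : b < c) : a * 1296 + (b * 36 + c) ∈ trc l := by
  induction l with
  | nil => simp at ha
  | cons x t ih =>
    rw [inc_cons] at h
    simp only [trc, List.mem_append, List.mem_map]
    rcases List.mem_cons.1 ha with rfl | ha'
    · have hb' : b ∈ t := by
        rcases List.mem_cons.1 hb with rfl | hb'
        · omega
        · exact hb'
      have hc' : c ∈ t := by
        rcases List.mem_cons.1 hc with rfl | hc'
        · omega
        · exact hc'
      exact Or.inl ⟨_, mem_prc h.2 hb' hc' hbc, rfl⟩
    · have hx := h.1 a ha'
      have hb' : b ∈ t := by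
        rcases List.mem_cons.1 hb with rfl | hb'
        · omega
        · exact hb'
      have hc' : c ∈ t := by
        rcases List.mem_cons.1 hc with rfl | hc'
        · omega
        · exact hc'
      exact Or.inr (ih h.2 ha' hb' hc')

theorem testBit_msk {l : List ℕ} {c : ℕ} (h : c ∈ l) : (msk l).testBit c = true := by
  induction l with
  | nil => simp at h
  | cons x t ih =>
    simp only [msk, Nat.testBit_or, Bool.or_eq_true]
    rcases List.mem_cons.1 h with rfl | h'
    · left; simp [Nat.testBit_shiftLeft]
    · right; exact ih h'

theorem ndp_sound {D : List (List ℕ)} {m : ℕ} (h : ndp D m = true) :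
    (∀ l ∈ D, ∀ c ∈ trc l, ¬ (m.testBit c = true)) ∧
      D.Pairwise (fun l l' => ∀ c ∈ trc l, c ∉ trc l') := by
  induction D generalizing m with
  | nil => simp
  | cons l t ih =>
    simp only [ndp, Bool.and_eq_true, Nat.beq_eq] at h
    obtain ⟨h1, h2⟩ := h
    have h3 : ndp t (m ||| msk (trc l)) = true := by
      generalize m ||| msk (trc l) = q at h2
      cases q with
      | zero => simp at h2
      | succ k => exact h2
    obtain ⟨i1, i2⟩ := ih h3
    refine ⟨?_, List.pairwise_cons.2 ⟨?_, i2⟩⟩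
    · intro l' hl' c hc hm
      rcases List.mem_cons.1 hl' with rfl | hl''
      · have := congrArg (fun z => Nat.testBit z c) h1
        simp [testBit_msk hc, hm] at this
      · apply i1 l' hl'' c hc
        simp [hm]
    · intro l' hl' c hc hc'
      apply i1 l' hl' c hc'
      simp [testBit_msk hc]

theorem common_trc {l l' : List ℕ} (h : inc l = true) (h' : inc l' = true)
    (hc : 2 < (l.toFinset ∩ l'.toFinset).card) : ∃ c ∈ trc l, c ∈ trc l' := by
  obtain ⟨a, ha, b, hb, c, hc, hab, hac, hbc⟩ := Finset.two_lt_card.1 hc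
  simp only [Finset.mem_inter, List.mem_toFinset] at ha hb hc
  have key : ∀ {a b c : ℕ}, (a ∈ l ∧ a ∈ l') → (b ∈ l ∧ b ∈ l') → (c ∈ l ∧ c ∈ l') → a < b → b < c →
      ∃ c ∈ trc l, c ∈ trc l' := fun ha hb hc h1 h2 =>
    ⟨_, mem_trc h ha.1 hb.1 hc.1 h1 h2, mem_trc h' ha.2 hb.2 hc.2 h1 h2⟩
  rcases lt_or_gt_of_ne hab with h1 | h1 <;> rcases lt_or_gt_of_ne hac with h2 | h2 <;>
    rcases lt_or_gt_of_ne hbc with h3 | h3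
  · exact key ha hb hc h1 h3
  · exact key ha hc hb h2 h3
  · omega
  · exact key hc ha hb h2 h1
  · exact key hb ha hc h1 h2
  · omega
  · exact key hb hc ha h3 h2
  · exact key hc hb ha h3 h1

/-- distinct members of the family meet in at most two points -/
def Pk {α : Type*} [DecidableEq α] (B : Finset (Finset α)) : Prop :=
  ∀ b ∈ B, ∀ b' ∈ B, b ≠ b' → (b ∩ b').card ≤ 2

/-- number of members of a given size -/
def num {α : Type*} (n : ℕ) (B : Finset (Finset α)) : ℕ := (B.filter fun b => b.card = n).card

/-- sizes are 4 or 6 -/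
def S46 {α : Type*} (B : Finset (Finset α)) : Prop := ∀ b ∈ B, b.card = 4 ∨ b.card = 6

/-- the family of finsets given by a list of lists -/
def fam (D : List (List ℕ)) : Finset (Finset ℕ) := (D.map List.toFinset).toFinset

theorem mem_fam {D : List (List ℕ)} {a : Finset ℕ} : a ∈ fam D ↔ ∃ l ∈ D, l.toFinset = a := by
  simp [fam]

theorem chk_all {w : List ℕ} {D : List (List ℕ)} (h : chk w D = true) {l : List ℕ} (hl : l ∈ D) :
    (l.length = 4 ∨ l.length = 6) ∧ inc l = true ∧ rng w l = true := by
  simp only [chk, Bool.and_eq_true, List.all_eq_true, Bool.or_eq_true, Nat.beq_eq] at h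
  have := h.1 l hl
  tauto

theorem chk_pw {w : List ℕ} {D : List (List ℕ)} (h : chk w D = true) :
    D.Pairwise (fun l l' => (l.toFinset ∩ l'.toFinset).card ≤ 2) := by
  have h2 : ndp D 0 = true := by
    simp only [chk, Bool.and_eq_true] at h
    exact h.2
  refine List.Pairwise.imp_of_mem ?_ (ndp_sound h2).2
  intro l l' hl hl' hd
  by_contra hc
  obtain ⟨c, h3, h4⟩ := common_trc (chk_all h hl).2.1 (chk_all h hl').2.1 (by omega)
  exact hd c h3 h4

theorem chk_card {w : List ℕ} {D : List (List ℕ)} (h : chk w D = true) {l : List ℕ} (hl : l ∈ D) :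
    l.toFinset.card = l.length :=
  List.toFinset_card_of_nodup (inc_nodup (chk_all h hl).2.1)

theorem cnt_eq (n : ℕ) (D : List (List ℕ)) :
    cnt n D = (D.filter fun l => l.length = n).length := by
  induction D with
  | nil => simp [cnt]
  | cons l t ih =>
    by_cases hl : l.length = n
    · have : Nat.beq l.length n = true := by simpa using hl
      simp [cnt, hl, ih]
    · have : Nat.beq l.length n = false := by
        rw [Bool.eq_false_iff]; simpa using hl
      simp [cnt, hl, ih, this]

theorem fam_nodup {w : List ℕ} {D : List (List ℕ)} (h : chk w D = true) :
    (D.map List.toFinset).Nodup := by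
  rw [List.Nodup, List.pairwise_map]
  refine List.Pairwise.imp_of_mem ?_ (chk_pw h)
  intro l l' hl _ hi he
  rw [← he, Finset.inter_self, chk_card h hl] at hi
  have := (chk_all h hl).1
  omega

theorem fam_num {w : List ℕ} {D : List (List ℕ)} (h : chk w D = true) (n : ℕ) :
    num n (fam D) = cnt n D := by
  have e : (fam D).filter (fun b => b.card = n) =
      ((D.map List.toFinset).filter fun b => b.card = n).toFinset := by
    ext; simp [fam]
  rw [num, e, List.toFinset_card_of_nodup ((fam_nodup h).filter _),
    cnt_eq, List.filter_map, List.length_map]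
  congr 1
  apply List.filter_congr
  intro l hl
  simp [chk_card h hl]

theorem fam_pk {w : List ℕ} {D : List (List ℕ)} (h : chk w D = true) : Pk (fam D) := by
  intro a ha b hb hab
  obtain ⟨l, hl, rfl⟩ := mem_fam.1 ha
  obtain ⟨l', hl', rfl⟩ := mem_fam.1 hb
  have hsym : ∀ x y : List ℕ, (x.toFinset ∩ y.toFinset).card ≤ 2 →
      (y.toFinset ∩ x.toFinset).card ≤ 2 := by
    intro x y hxy; rwa [Finset.inter_comm]
  have hne : l ≠ l' := fun e => hab (by rw [e])
  have : Std.Symm (fun x y : List ℕ => (x.toFinset ∩ y.toFinset).card ≤ 2) := ⟨hsym⟩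
  exact (chk_pw h).forall hl hl' hne

theorem image_family {α β : Type*} [DecidableEq α] [DecidableEq β] (A : Finset (Finset α))
    (φ : α → β) (U : Set α) (hU : ∀ a ∈ A, ∀ x ∈ a, x ∈ U) (hφ : Set.InjOn φ U) (hA : Pk A) :
    Pk (A.image fun a => a.image φ) ∧ (∀ n, num n (A.image fun a => a.image φ) = num n A) ∧
      (∀ a ∈ A, (a.image φ).card = a.card) := by
  have hc : ∀ a ∈ A, (a.image φ).card = a.card := fun a ha =>
    Finset.card_image_of_injOn fun x hx y hy e => hφ (hU a ha x hx) (hU a ha y hy) e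
  have hi : ∀ a ∈ A, ∀ b ∈ A, a.image φ ∩ b.image φ = (a ∩ b).image φ := by
    intro a ha b hb
    ext y
    simp only [Finset.mem_inter, Finset.mem_image]
    constructor
    · rintro ⟨⟨x, hx, rfl⟩, ⟨z, hz, e⟩⟩
      have := hφ (hU b hb z hz) (hU a ha x hx) e
      subst this
      exact ⟨z, ⟨hx, hz⟩, rfl⟩
    · rintro ⟨x, ⟨h1, h2⟩, rfl⟩
      exact ⟨⟨x, h1, rfl⟩, ⟨x, h2, rfl⟩⟩
  have hinj : Set.InjOn (fun a : Finset α => a.image φ) (A : Set (Finset α)) := by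
    intro a ha b hb e
    have hsub : ∀ a ∈ A, ∀ b ∈ A, a.image φ = b.image φ → a ⊆ b := by
      intro a ha b hb e x hx
      have : φ x ∈ b.image φ := e ▸ Finset.mem_image_of_mem φ hx
      obtain ⟨z, hz, e'⟩ := Finset.mem_image.1 this
      rwa [← hφ (hU b hb z hz) (hU a ha x hx) e']
    exact Finset.Subset.antisymm (hsub a ha b hb e) (hsub b hb a ha e.symm)
  refine ⟨?_, ?_, hc⟩
  · intro a' ha' b' hb' hne
    obtain ⟨a, ha, rfl⟩ := Finset.mem_image.1 ha'
    obtain ⟨b, hb, rfl⟩ := Finset.mem_image.1 hb'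
    rw [hi a ha b hb]
    refine Finset.card_image_le.trans (hA a ha b hb ?_)
    rintro rfl
    exact hne rfl
  · intro n
    rw [num, num, Finset.filter_image, Finset.card_image_of_injOn]
    · congr 1
      apply Finset.filter_congr
      intro a ha
      rw [hc a ha]
    · intro a ha b hb e
      exact hinj (Finset.mem_filter.1 ha).1 (Finset.mem_filter.1 hb).1 e

/-- place codes in the inflated set -/
def plc {α : Type*} (f : ℕ → α) (m : ℕ) : α × ℕ := (f (m / 6), m % 6)

theorem rng_mem {w l : List ℕ} (h : rng w l = true) {m : ℕ} (hm : m ∈ l) :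
    m % 6 < w.getD (m / 6) 0 := by
  simp only [rng, List.all_eq_true] at h
  have := h m hm
  simpa [Nat.blt, Nat.succ_le_iff] using this

theorem realize {α : Type*} [DecidableEq α] {w : List ℕ} {D : List (List ℕ)} (h : chk w D = true)
    (f : ℕ → α) (Q : Finset ℕ) (hf : ∀ i ∈ Q, ∀ j ∈ Q, f i = f j → i = j)
    (hw : ∀ j, 0 < w.getD j 0 → j ∈ Q) :
    ∃ F : Finset (Finset (α × ℕ)), Pk F ∧ S46 F ∧ num 4 F = cnt 4 D ∧ num 6 F = cnt 6 D ∧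
      ∀ β ∈ F, ∃ l ∈ D, β = l.toFinset.image (plc f) ∧ β.card = l.length ∧
        ∀ m ∈ l, m / 6 ∈ Q ∧ m % 6 < w.getD (m / 6) 0 := by
  have hU : ∀ a ∈ fam D, ∀ x ∈ a, x ∈ {m : ℕ | m % 6 < w.getD (m / 6) 0} := by
    intro a ha x hx
    obtain ⟨l, hl, rfl⟩ := mem_fam.1 ha
    exact rng_mem (chk_all h hl).2.2 (List.mem_toFinset.1 hx)
  have hφ : Set.InjOn (plc f) {m : ℕ | m % 6 < w.getD (m / 6) 0} := by
    intro x hx y hy e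
    simp only [plc, Prod.mk.injEq] at e
    have := hf _ (hw _ (Nat.zero_lt_of_lt hx)) _ (hw _ (Nat.zero_lt_of_lt hy)) e.1
    omega
  obtain ⟨h1, h2, h3⟩ := image_family (fam D) (plc f) _ hU hφ (fam_pk h)
  refine ⟨(fam D).image fun a => a.image (plc f), h1, ?_, ?_, ?_, ?_⟩
  · intro β hβ
    obtain ⟨a, ha, rfl⟩ := Finset.mem_image.1 hβ
    rw [h3 a ha]
    obtain ⟨l, hl, rfl⟩ := mem_fam.1 ha
    rw [chk_card h hl]
    exact (chk_all h hl).1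
  · rw [h2, fam_num h]
  · rw [h2, fam_num h]
  · intro β hβ
    obtain ⟨a, ha, rfl⟩ := Finset.mem_image.1 hβ
    obtain ⟨l, hl, rfl⟩ := mem_fam.1 ha
    refine ⟨l, hl, rfl, ?_, ?_⟩
    · rw [h3 _ ha, chk_card h hl]
    · intro m hm
      have := rng_mem (chk_all h hl).2.2 hm
      exact ⟨hw _ (Nat.zero_lt_of_lt this), this⟩

end Sound


section Base

/-- blocks of size 6 are disjoint -/
def Dis6 {α : Type*} (B : Finset (Finset α)) : Prop :=
  ∀ b ∈ B, ∀ b' ∈ B, b.card = 6 → b'.card = 6 → b ≠ b' → Disjoint b b'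

/-- Steiner systems with blocks of size 4 and pairwise disjoint blocks of size 6 -/
structure IsE {α : Type*} [Fintype α] [DecidableEq α] (B : Finset (Finset α)) : Prop where
  s46 : S46 B
  pk : Pk B
  dis : Dis6 B
  n6 : num 6 B = if Fintype.card α % 6 = 0 then Fintype.card α / 6 else 0
  tot : 4 * num 4 B + 20 * num 6 B = (Fintype.card α).choose 3

/-- existence of such a system on `v` points -/
def EX (v : ℕ) : Prop := ∃ B : Finset (Finset (Fin v)), IsE B

theorem sum_num {α : Type*} {B : Finset (Finset α)} (h : S46 B) (c : ℕ → ℕ) :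
    ∑ b ∈ B, c b.card = c 4 * num 4 B + c 6 * num 6 B := by
  have h1 : ∑ b ∈ B, c b.card =
      ∑ b ∈ B, ((if b.card = 4 then c 4 else 0) + (if b.card = 6 then c 6 else 0)) := by
    apply Finset.sum_congr rfl
    intro b hb
    rcases h b hb with h | h <;> simp [h]
  rw [h1, Finset.sum_add_distrib, ← Finset.sum_filter, ← Finset.sum_filter]
  simp [num, mul_comm]

theorem card_num {α : Type*} {B : Finset (Finset α)} (h : S46 B) :
    B.card = num 4 B + num 6 B := by
  have := sum_num h (fun _ => 1)
  simpa using this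

variable {α : Type*} [DecidableEq α]

theorem IsE.cover [Fintype α] {B : Finset (Finset α)} (h : IsE B) :
    B.biUnion (Finset.powersetCard 3) = Finset.powersetCard 3 Finset.univ ∧
      (B : Set (Finset α)).PairwiseDisjoint (Finset.powersetCard 3) := by
  have hd : (B : Set (Finset α)).PairwiseDisjoint (Finset.powersetCard 3) := by
    intro b hb b' hb' hne
    rw [Function.onFun, Finset.disjoint_left]
    intro T hT hT'
    rw [Finset.mem_powersetCard] at hT hT'
    have h1 := h.pk b hb b' hb' hne
    have h2 := Finset.card_le_card (Finset.subset_inter hT.1 hT'.1)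
    omega
  refine ⟨?_, hd⟩
  apply Finset.eq_of_subset_of_card_le
  · intro T hT
    obtain ⟨b, _, hT⟩ := Finset.mem_biUnion.1 hT
    exact Finset.mem_powersetCard.2 ⟨Finset.subset_univ _, (Finset.mem_powersetCard.1 hT).2⟩
  · rw [Finset.card_biUnion hd, Finset.card_powersetCard, Finset.card_univ, ← h.tot]
    simp only [Finset.card_powersetCard]
    rw [sum_num h.s46 (fun n => n.choose 3)]
    simp [Nat.choose]

theorem IsE.dc [Fintype α] {B : Finset (Finset α)} (h : IsE B) (S : Finset α) (hS : S.card ≤ 3) :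
    ∑ b ∈ B, (if S ⊆ b then (b.card - S.card).choose (3 - S.card) else 0) =
      (Fintype.card α - S.card).choose (3 - S.card) := by
  obtain ⟨hc, hd⟩ := h.cover
  rw [← Finset.card_univ, ← Finset.card_filter_powersetCard_subset S Finset.univ 3
    (Finset.subset_univ _) hS, ← hc, Finset.filter_biUnion, Finset.card_biUnion]
  · apply Finset.sum_congr rfl
    intro b _
    split_ifs with hb
    · rw [Finset.card_filter_powersetCard_subset S b 3 hb hS]
    · symm
      rw [Finset.card_eq_zero, Finset.filter_eq_empty_iff]
      intro T hT hST
      exact hb (hST.trans (Finset.mem_powersetCard.1 hT).1)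
  · intro b hb b' hb' hne
    exact Finset.disjoint_filter_filter (hd hb hb' hne)

theorem IsE.ex3 [Fintype α] {B : Finset (Finset α)} (h : IsE B) {T : Finset α} (hT : T.card = 3) :
    ∃ b ∈ B, T ⊆ b := by
  have : T ∈ B.biUnion (Finset.powersetCard 3) := by
    rw [h.cover.1]; exact Finset.mem_powersetCard.2 ⟨Finset.subset_univ _, hT⟩
  obtain ⟨b, hb, hT⟩ := Finset.mem_biUnion.1 this
  exact ⟨b, hb, (Finset.mem_powersetCard.1 hT).1⟩

theorem Pk.eq_of_three {B : Finset (Finset α)} (h : Pk B) {T b b' : Finset α} (hT : T.card = 3)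
    (hb : b ∈ B) (hb' : b' ∈ B) (h1 : T ⊆ b) (h2 : T ⊆ b') : b = b' := by
  by_contra hne
  have := h b hb b' hb' hne
  have h2 := Finset.card_le_card (Finset.subset_inter h1 h2)
  omega

theorem combine {ι : Type*} (J : Finset ι) (F : ι → Finset (Finset α))
    (hpk : ∀ i ∈ J, Pk (F i)) (hs : ∀ i ∈ J, S46 (F i))
    (hx : ∀ i ∈ J, ∀ j ∈ J, i ≠ j → ∀ β ∈ F i, ∀ β' ∈ F j, (β ∩ β').card ≤ 2) :
    Pk (J.biUnion F) ∧ S46 (J.biUnion F) ∧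
      ∀ n, 3 ≤ n → num n (J.biUnion F) = ∑ i ∈ J, num n (F i) := by
  refine ⟨?_, ?_, ?_⟩
  · intro b hb b' hb' hne
    obtain ⟨i, hi, hb⟩ := Finset.mem_biUnion.1 hb
    obtain ⟨j, hj, hb'⟩ := Finset.mem_biUnion.1 hb'
    by_cases hij : i = j
    · subst hij
      exact hpk i hi b hb b' hb' hne
    · exact hx i hi j hj hij b hb b' hb'
  · intro b hb
    obtain ⟨i, hi, hb⟩ := Finset.mem_biUnion.1 hb
    exact hs i hi b hb
  · intro n hn
    rw [num, Finset.filter_biUnion, Finset.card_biUnion]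
    · rfl
    · intro i hi j hj hij
      rw [Function.onFun, Finset.disjoint_left]
      intro b hb hb'
      rw [Finset.mem_filter] at hb hb'
      have := hx i hi j hj hij b hb.1 b hb'.1
      rw [Finset.inter_self] at this
      omega

theorem toFin (V : Finset α) (n : ℕ) (hn : 0 < n) (hV : V.card = n) (A : Finset (Finset α))
    (hA : ∀ a ∈ A, a ⊆ V) (hpk : Pk A) :
    ∃ B : Finset (Finset (Fin n)), Pk B ∧ (S46 A → S46 B) ∧ (∀ m, num m B = num m A) ∧
      (Dis6 A → Dis6 B) := by
  let φ : α → Fin n := fun x => if h : x ∈ V then V.equivFinOfCardEq hV ⟨x, h⟩ else ⟨0, hn⟩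
  have hφ : Set.InjOn φ (V : Set α) := by
    intro x hx y hy e
    have hx' : x ∈ V := hx
    have hy' : y ∈ V := hy
    simp only [φ, hx', hy', dif_pos] at e
    have := (V.equivFinOfCardEq hV).injective e
    simpa using this
  obtain ⟨h1, h2, h3⟩ := image_family A φ (V : Set α) (fun a ha x hx => hA a ha hx) hφ hpk
  refine ⟨_, h1, ?_, h2, ?_⟩
  · intro hs b hb
    obtain ⟨a, ha, rfl⟩ := Finset.mem_image.1 hb
    rw [h3 a ha]
    exact hs a ha
  · intro hd b hb b' hb' hc hc' hne
    obtain ⟨a, ha, rfl⟩ := Finset.mem_image.1 hb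
    obtain ⟨a', ha', rfl⟩ := Finset.mem_image.1 hb'
    rw [h3 a ha] at hc
    rw [h3 a' ha'] at hc'
    have hdd := hd a ha a' ha' hc hc' (by rintro rfl; exact hne rfl)
    rw [Finset.disjoint_left] at hdd ⊢
    intro y hy hy'
    obtain ⟨x, hx, rfl⟩ := Finset.mem_image.1 hy
    obtain ⟨z, hz, e⟩ := Finset.mem_image.1 hy'
    have := hφ (hA a' ha' hz) (hA a ha hx) e
    subst this
    exact hdd hx hz

end Base


section Local

/-- adjacency in the hexagon -/
def hexB (i j : ℕ) : Bool := Nat.beq ((i + 1) % 6) (j % 6) || Nat.beq ((j + 1) % 6) (i % 6)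

/-- at most one point in every position -/
def trB (l : List ℕ) : Bool := l.all fun x => l.all fun y => Nat.beq x y || !Nat.beq (x / 6) (y / 6)

/-- at most two points in every position -/
def n3B (l : List ℕ) : Bool :=
  l.all fun x => Nat.ble (l.filter fun y => Nat.beq (y / 6) (x / 6)).length 2

/-- pairs in the same position have colour `c` -/
def colB (c : Bool) (l : List ℕ) : Bool :=
  l.all fun x => l.all fun y => Nat.beq x y || !Nat.beq (x / 6) (y / 6) ||
    (hexB (x % 6) (y % 6) == c)

/-- local check for blocks with a stem in position `z` -/
def lpB (z : ℕ) (c : Bool) (l : List ℕ) : Bool :=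
  trB l || (l.all (fun x => !Nat.beq (x / 6) z) && colB c l && n3B l)

/-- local check for fills -/
def gB (l : List ℕ) : Bool :=
  Nat.ble (l.filter fun y => Nat.ble 24 y).length 2 &&
    (Nat.beq l.length 4 || l.all fun y => Nat.blt y 24)

/-- the blocks of size 6 are disjoint -/
def d6B (D : List (List ℕ)) : Bool :=
  decide ((D.filter fun l => Nat.beq l.length 6).flatten).Nodup

variable {α : Type*} [DecidableEq α]

/-- transversal -/
def TrP (β : Finset (α × ℕ)) : Prop := ∀ x ∈ β, ∀ y ∈ β, x.1 = y.1 → x = y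

/-- at most two points in each fibre -/
def N3 (β : Finset (α × ℕ)) : Prop := ∀ p, (β.filter fun x => x.1 = p).card ≤ 2

/-- pairs in the same fibre have colour `c` -/
def Col (c : Bool) (β : Finset (α × ℕ)) : Prop :=
  ∀ x ∈ β, ∀ y ∈ β, x ≠ y → x.1 = y.1 → hexB x.2 y.2 = c

variable {f : ℕ → α} {Q : Finset ℕ} {l : List ℕ}

theorem mem_plc {x : α × ℕ} : x ∈ l.toFinset.image (plc f) ↔ ∃ m ∈ l, plc f m = x := by
  simp

theorem trB_sound (hf : ∀ i ∈ Q, ∀ j ∈ Q, f i = f j → i = j)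
    (hl : ∀ m ∈ l, m / 6 ∈ Q) (h : trB l = true) : TrP (l.toFinset.image (plc f)) := by
  intro x hx y hy e
  obtain ⟨m, hm, rfl⟩ := mem_plc.1 hx
  obtain ⟨m', hm', rfl⟩ := mem_plc.1 hy
  have := hf _ (hl m hm) _ (hl m' hm') e
  simp only [trB, List.all_eq_true, Bool.or_eq_true, Nat.beq_eq, Bool.not_eq_true',
    Bool.eq_false_iff, ne_eq] at h
  rcases h m hm m' hm' with h | h
  · rw [h]
  · exact absurd this h

theorem colB_sound (hf : ∀ i ∈ Q, ∀ j ∈ Q, f i = f j → i = j)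
    (hl : ∀ m ∈ l, m / 6 ∈ Q) {c : Bool} (h : colB c l = true) : Col c (l.toFinset.image (plc f)) := by
  intro x hx y hy hne e
  obtain ⟨m, hm, rfl⟩ := mem_plc.1 hx
  obtain ⟨m', hm', rfl⟩ := mem_plc.1 hy
  have := hf _ (hl m hm) _ (hl m' hm') e
  simp only [colB, List.all_eq_true, Bool.or_eq_true, Nat.beq_eq, Bool.not_eq_true',
    Bool.eq_false_iff, ne_eq, beq_iff_eq] at h
  rcases h m hm m' hm' with (h | h) | h
  · exact absurd (by rw [h]) hne
  · exact absurd this h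
  · exact h

theorem filt_sound (_hf : ∀ i ∈ Q, ∀ j ∈ Q, f i = f j → i = j)
    (_hl : ∀ m ∈ l, m / 6 ∈ Q) (P : α × ℕ → Prop) [DecidablePred P] (p : ℕ → Bool)
    (hP : ∀ m ∈ l, P (plc f m) → p m = true) (h : (l.filter p).length ≤ 2) :
    ((l.toFinset.image (plc f)).filter P).card ≤ 2 := by
  have hsub : (l.toFinset.image (plc f)).filter P ⊆ (l.filter p).toFinset.image (plc f) := by
    intro x hx
    obtain ⟨hx, hPx⟩ := Finset.mem_filter.1 hx
    obtain ⟨m, hm, rfl⟩ := mem_plc.1 hx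
    exact mem_plc.2 ⟨m, List.mem_filter.2 ⟨hm, hP m hm hPx⟩, rfl⟩
  exact (Finset.card_le_card hsub).trans
    (Finset.card_image_le.trans ((List.toFinset_card_le _).trans h))

theorem n3B_sound (hf : ∀ i ∈ Q, ∀ j ∈ Q, f i = f j → i = j)
    (hl : ∀ m ∈ l, m / 6 ∈ Q) (h : n3B l = true) : N3 (l.toFinset.image (plc f)) := by
  intro p
  by_cases hp : ∃ m ∈ l, f (m / 6) = p
  · obtain ⟨m, hm, rfl⟩ := hp
    apply filt_sound hf hl _ (fun y => Nat.beq (y / 6) (m / 6))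
    · intro m' hm' e
      have := hf _ (hl m' hm') _ (hl m hm) e
      simpa using this
    · simp only [n3B, List.all_eq_true, Nat.ble_eq] at h
      exact h m hm
  · have : (l.toFinset.image (plc f)).filter (fun x => x.1 = p) = ∅ := by
      rw [Finset.filter_eq_empty_iff]
      intro x hx e
      obtain ⟨m, hm, rfl⟩ := mem_plc.1 hx
      exact hp ⟨m, hm, e⟩
    rw [this]; simp

theorem lpB_sound (hf : ∀ i ∈ Q, ∀ j ∈ Q, f i = f j → i = j)
    (hl : ∀ m ∈ l, m / 6 ∈ Q) {z : ℕ} (hz : z ∈ Q) {c : Bool} (h : lpB z c l = true) :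
    TrP (l.toFinset.image (plc f)) ∨ ((∀ x ∈ l.toFinset.image (plc f), x.1 ≠ f z) ∧
      Col c (l.toFinset.image (plc f)) ∧ N3 (l.toFinset.image (plc f))) := by
  simp only [lpB, Bool.or_eq_true, Bool.and_eq_true] at h
  rcases h with h | ⟨⟨h1, h2⟩, h3⟩
  · exact Or.inl (trB_sound hf hl h)
  · refine Or.inr ⟨?_, colB_sound hf hl h2, n3B_sound hf hl h3⟩
    intro x hx e
    obtain ⟨m, hm, rfl⟩ := mem_plc.1 hx
    have := hf _ (hl m hm) _ hz e
    simp only [List.all_eq_true, Bool.not_eq_true', Bool.eq_false_iff, ne_eq, Nat.beq_eq] at h1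
    exact h1 m hm this

end Local

section Pos

theorem d6B_sound {α : Type*} [DecidableEq α] {f : ℕ → α} {Q : Finset ℕ}
    (hf : ∀ i ∈ Q, ∀ j ∈ Q, f i = f j → i = j) {D : List (List ℕ)} (h : d6B D = true)
    {F : Finset (Finset (α × ℕ))}
    (hF : ∀ β ∈ F, ∃ l ∈ D, β = l.toFinset.image (plc f) ∧ β.card = l.length ∧
        ∀ m ∈ l, m / 6 ∈ Q) : Dis6 F := by
  intro β hβ β' hβ' hc hc' hne
  obtain ⟨l, hl, rfl, hlen, hQ⟩ := hF β hβ
  obtain ⟨l', hl', rfl, hlen', hQ'⟩ := hF β' hβ'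
  rw [hlen] at hc
  rw [hlen'] at hc'
  rw [Finset.disjoint_left]
  intro x hx hx'
  obtain ⟨m, hm, rfl⟩ := mem_plc.1 hx
  obtain ⟨m', hm', e⟩ := mem_plc.1 hx'
  simp only [plc, Prod.mk.injEq] at e
  have := hf _ (hQ' m' hm') _ (hQ m hm) e.1
  have hmm : m' = m := by omega
  subst hmm
  have hne' : l ≠ l' := by rintro rfl; exact hne rfl
  simp only [d6B, decide_eq_true_eq, List.nodup_flatten] at h
  have : Std.Symm (List.Disjoint (α := ℕ)) := ⟨fun _ _ h => h.symm⟩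
  exact h.2.forall (List.mem_filter.2 ⟨hl, by simp [hc]⟩) (List.mem_filter.2 ⟨hl', by simp [hc']⟩)
    hne' hm hm'

theorem posext {α : Type*} [DecidableEq α] (c : Finset α) (Q0 Q1 : Finset ℕ) (g0 : ℕ → α)
    (h0 : ∀ i ∈ Q0, ∀ j ∈ Q0, g0 i = g0 j → i = j) (h0c : ∀ i ∈ Q0, g0 i ∈ c)
    (hd : Disjoint Q0 Q1) (hc : Q0.card + Q1.card ≤ c.card) :
    ∃ f : ℕ → α, (∀ j ∈ Q0, f j = g0 j) ∧ (∀ j ∈ Q0 ∪ Q1, f j ∈ c) ∧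
      ∀ i ∈ Q0 ∪ Q1, ∀ j ∈ Q0 ∪ Q1, f i = f j → i = j := by
  have h1 : (Q0.image g0).card = Q0.card :=
    Finset.card_image_of_injOn fun i hi j hj e => h0 i hi j hj e
  have h2 : Q0.image g0 ⊆ c := by
    intro x hx
    obtain ⟨i, hi, rfl⟩ := Finset.mem_image.1 hx
    exact h0c i hi
  have h3 : Q1.card ≤ (c \ Q0.image g0).card := by
    rw [Finset.card_sdiff_of_subset h2]; omega
  have h4 : Fintype.card Q1 ≤ Fintype.card (c \ Q0.image g0 : Finset α) := by simpa using h3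
  obtain ⟨e⟩ := Function.Embedding.nonempty_of_card_le h4
  have hd' : ∀ j ∈ Q0, j ∉ Q1 := fun j hj => Finset.disjoint_left.1 hd hj
  have he : ∀ x, (e x : α) ∈ c ∧ (e x : α) ∉ Q0.image g0 := fun x => Finset.mem_sdiff.1 (e x).2
  refine ⟨fun j => if h : j ∈ Q1 then e ⟨j, h⟩ else g0 j, ?_, ?_, ?_⟩
  · intro j hj
    simp [hd' j hj]
  · intro j hj
    by_cases h : j ∈ Q1
    · simp only [h, dif_pos]; exact (he _).1
    · simp only [h, dif_neg, not_false_eq_true]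
      exact h0c j ((Finset.mem_union.1 hj).resolve_right h)
  · intro i hi j hj hij
    by_cases h : i ∈ Q1 <;> by_cases h' : j ∈ Q1
    · simp only [h, h', dif_pos] at hij
      have := e.injective (Subtype.ext hij)
      simpa using this
    · simp only [h, h', dif_pos, dif_neg, not_false_eq_true] at hij
      exact absurd (Finset.mem_image.2 ⟨j, (Finset.mem_union.1 hj).resolve_right h', hij.symm⟩)
        (he _).2
    · simp only [h, h', dif_pos, dif_neg, not_false_eq_true] at hij
      exact absurd (Finset.mem_image.2 ⟨i, (Finset.mem_union.1 hi).resolve_right h, hij⟩)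
        (he _).2
    · simp only [h, h', dif_neg, not_false_eq_true] at hij
      exact h0 i ((Finset.mem_union.1 hi).resolve_right h) j
        ((Finset.mem_union.1 hj).resolve_right h') hij

end Pos



section Cross

variable {α : Type*} [DecidableEq α] {c c' : Finset α} {β β' : Finset (α × ℕ)}

theorem image_inter (hβ : ∀ x ∈ β, x.1 ∈ c) (hβ' : ∀ x ∈ β', x.1 ∈ c') :
    (β ∩ β').image Prod.fst ⊆ c ∩ c' := by
  intro p hp
  obtain ⟨x, hx, rfl⟩ := Finset.mem_image.1 hp
  rw [Finset.mem_inter] at hx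
  exact Finset.mem_inter.2 ⟨hβ x hx.1, hβ' x hx.2⟩

theorem cross_tr (hβ : ∀ x ∈ β, x.1 ∈ c) (hβ' : ∀ x ∈ β', x.1 ∈ c') (hc : (c ∩ c').card ≤ 2)
    (h : TrP β) : (β ∩ β').card ≤ 2 := by
  have h1 : ((β ∩ β').image Prod.fst).card = (β ∩ β').card := by
    apply Finset.card_image_of_injOn
    intro x hx y hy e
    exact h x (Finset.mem_inter.1 hx).1 y (Finset.mem_inter.1 hy).1 e
  rw [← h1]
  exact (Finset.card_le_card (image_inter hβ hβ')).trans hc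

theorem cross_n3 (hβ : ∀ x ∈ β, x.1 ∈ c) (hβ' : ∀ x ∈ β', x.1 ∈ c') (hc : (c ∩ c').card ≤ 2)
    {q : α} (hq : q ∈ c) (hq' : q ∈ c') (hn : ∀ x ∈ β, x.1 ≠ q) (h : N3 β) :
    (β ∩ β').card ≤ 2 := by
  have h1 : ((c ∩ c').erase q).card ≤ 1 := by
    rw [Finset.card_erase_of_mem (Finset.mem_inter.2 ⟨hq, hq'⟩)]; omega
  have h2 : ∀ x ∈ β ∩ β', x.1 ∈ (c ∩ c').erase q := by
    intro x hx
    have := image_inter hβ hβ' (Finset.mem_image_of_mem Prod.fst hx)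
    exact Finset.mem_erase.2 ⟨hn x (Finset.mem_inter.1 hx).1, this⟩
  by_cases he : (β ∩ β') = ∅
  · rw [he]; simp
  · obtain ⟨y, hy⟩ := Finset.nonempty_iff_ne_empty.2 he
    refine le_trans (Finset.card_le_card ?_) (h y.1)
    intro x hx
    exact Finset.mem_filter.2 ⟨(Finset.mem_inter.1 hx).1,
      Finset.card_le_one.1 h1 _ (h2 x hx) _ (h2 y hy)⟩

theorem cross_col (hβ : ∀ x ∈ β, x.1 ∈ c) (hβ' : ∀ x ∈ β', x.1 ∈ c') (hc : (c ∩ c').card ≤ 2)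
    {k k' : Bool} (hk : k ≠ k') (h : Col k β) (h' : Col k' β') : (β ∩ β').card ≤ 2 := by
  by_contra hcon
  have h1 := Finset.card_le_card (image_inter hβ hβ')
  obtain ⟨x, hx, y, hy, hne, e⟩ := Finset.exists_ne_map_eq_of_card_lt_of_maps_to
    (s := β ∩ β') (t := (β ∩ β').image Prod.fst) (f := Prod.fst) (by omega)
    (fun x hx => Finset.mem_image_of_mem _ hx)
  rw [Finset.mem_inter] at hx hy
  exact hk ((h x hx.1 y hy.1 hne e).symm.trans (h' x hx.2 y hy.2 hne e))

end Cross

section Ingr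

/-- check of an ingredient with local test `t` and prescribed numbers of blocks -/
def ingB (w : List ℕ) (D : List (List ℕ)) (t : List ℕ → Bool) (n4 n6 : ℕ) : Bool :=
  chk w D && D.all t && d6B D && Nat.beq (cnt 4 D) n4 && Nat.beq (cnt 6 D) n6

theorem place {α : Type*} [DecidableEq α] {w : List ℕ} {D : List (List ℕ)} {t : List ℕ → Bool}
    {n4 n6 : ℕ} (h : ingB w D t n4 n6 = true) (f : ℕ → α) (Q : Finset ℕ) (c : Finset α)
    (wt : α → ℕ) (hf : ∀ i ∈ Q, ∀ j ∈ Q, f i = f j → i = j)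
    (hw : ∀ j, 0 < w.getD j 0 → j ∈ Q) (hc : ∀ j ∈ Q, 0 < w.getD j 0 → f j ∈ c)
    (hwt : ∀ j ∈ Q, w.getD j 0 ≤ wt (f j)) :
    ∃ F : Finset (Finset (α × ℕ)), Pk F ∧ S46 F ∧ Dis6 F ∧ num 4 F = n4 ∧ num 6 F = n6 ∧
      (∀ β ∈ F, ∀ x ∈ β, x.1 ∈ c ∧ x.2 < wt x.1) ∧
      ∀ β ∈ F, ∃ l ∈ D, t l = true ∧ inc l = true ∧ β = l.toFinset.image (plc f) ∧
        β.card = l.length ∧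
        ∀ m ∈ l, m / 6 ∈ Q := by
  simp only [ingB, Bool.and_eq_true, Nat.beq_eq, List.all_eq_true] at h
  obtain ⟨⟨⟨⟨h1, h2⟩, h3⟩, h4⟩, h5⟩ := h
  obtain ⟨F, hpk, hs, e4, e6, hF⟩ := realize h1 f Q hf hw
  refine ⟨F, hpk, hs, ?_, e4.trans h4, e6.trans h5, ?_, ?_⟩
  · apply d6B_sound hf h3
    intro β hβ
    obtain ⟨l, hl, e, e', hm⟩ := hF β hβ
    exact ⟨l, hl, e, e', fun m h => (hm m h).1⟩
  · intro β hβ x hx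
    obtain ⟨l, hl, rfl, e', hm⟩ := hF β hβ
    obtain ⟨m, hml, rfl⟩ := mem_plc.1 hx
    obtain ⟨h6, h7⟩ := hm m hml
    exact ⟨hc _ h6 (by omega), lt_of_lt_of_le h7 (hwt _ h6)⟩
  · intro β hβ
    obtain ⟨l, hl, e, e', hm⟩ := hF β hβ
    exact ⟨l, hl, h2 l hl, (chk_all h1 hl).2.1, e, e', fun m h => (hm m h).1⟩

/-- all blocks have size 4 -/
def l4B (l : List ℕ) : Bool := Nat.beq l.length 4

end Ingr

section W

variable {α : Type*} [DecidableEq α]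

/-- local condition on the blocks replacing `c` -/
def LocP (a b : α) (c : Finset α) (β : Finset (α × ℕ)) : Prop :=
  TrP β ∨ (a ∈ c ∧ b ∈ c ∧ (c = {a, b} ∨ (β.filter fun x => x.1 = a ∨ x.1 = b).card ≤ 2)) ∨
    (a ∈ c ∧ b ∉ c ∧ (∀ x ∈ β, x.1 ≠ a) ∧ Col false β ∧ N3 β) ∨
    (b ∈ c ∧ a ∉ c ∧ (∀ x ∈ β, x.1 ≠ b) ∧ Col true β ∧ N3 β)

theorem LocP.cross {a b : α} (hab : a ≠ b) {c c' : Finset α} (hne : c ≠ c')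
    {β β' : Finset (α × ℕ)}
    (hβ : ∀ x ∈ β, x.1 ∈ c) (hβ' : ∀ x ∈ β', x.1 ∈ c') (hc : (c ∩ c').card ≤ 2)
    (h : LocP a b c β) (h' : LocP a b c' β') : (β ∩ β').card ≤ 2 := by
  have hc' : (c' ∩ c).card ≤ 2 := by rwa [Finset.inter_comm]
  rcases h with h | ⟨ha, hb, h⟩ | ⟨ha, hb, hn, hk, h3⟩ | ⟨hb, ha, hn, hk, h3⟩
  · exact cross_tr hβ hβ' hc h
  · rcases h' with h' | ⟨ha', hb', h'⟩ | ⟨ha', hb', hn', hk', h3'⟩ | ⟨hb', ha', hn', hk', h3'⟩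
    · rw [Finset.inter_comm]; exact cross_tr hβ' hβ hc' h'
    · have e : ({a, b} : Finset α) = c ∩ c' := by
        apply Finset.eq_of_subset_of_card_le
        · intro x hx
          simp only [Finset.mem_insert, Finset.mem_singleton] at hx
          rcases hx with rfl | rfl
          · exact Finset.mem_inter.2 ⟨ha, ha'⟩
          · exact Finset.mem_inter.2 ⟨hb, hb'⟩
        · rw [Finset.card_pair hab]; exact hc
      have hX : ∀ x ∈ β ∩ β', x.1 = a ∨ x.1 = b := by
        intro x hx
        have := image_inter hβ hβ' (Finset.mem_image_of_mem Prod.fst hx)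
        rw [← e] at this
        simpa using this
      rcases h with h | h
      · rcases h' with h' | h'
        · exact absurd (h.trans h'.symm) hne
        · refine le_trans (Finset.card_le_card fun x hx => ?_) h'
          exact Finset.mem_filter.2 ⟨(Finset.mem_inter.1 hx).2, hX x hx⟩
      · refine le_trans (Finset.card_le_card fun x hx => ?_) h
        exact Finset.mem_filter.2 ⟨(Finset.mem_inter.1 hx).1, hX x hx⟩
    · rw [Finset.inter_comm]; exact cross_n3 hβ' hβ hc' ha' ha hn' h3'
    · rw [Finset.inter_comm]; exact cross_n3 hβ' hβ hc' hb' hb hn' h3'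
  · rcases h' with h' | ⟨ha', hb', h'⟩ | ⟨ha', hb', hn', hk', h3'⟩ | ⟨hb', ha', hn', hk', h3'⟩
    · rw [Finset.inter_comm]; exact cross_tr hβ' hβ hc' h'
    · exact cross_n3 hβ hβ' hc ha ha' hn h3
    · exact cross_n3 hβ hβ' hc ha ha' hn h3
    · exact cross_col hβ hβ' hc (by simp) hk hk'
  · rcases h' with h' | ⟨ha', hb', h'⟩ | ⟨ha', hb', hn', hk', h3'⟩ | ⟨hb', ha', hn', hk', h3'⟩
    · rw [Finset.inter_comm]; exact cross_tr hβ' hβ hc' h'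
    · exact cross_n3 hβ hβ' hc hb hb' hn h3
    · exact cross_col hβ hβ' hc (by simp) hk hk'
    · exact cross_n3 hβ hβ' hc hb hb' hn h3

/-- the size of the group of a point -/
def wt2 (a b : α) (s1 s2 : ℕ) (p : α) : ℕ := if p = a then s1 else if p = b then s2 else 6

/-- the properties of the family replacing `c` -/
structure Sp (a b : α) (wt : α → ℕ) (c : Finset α) (F : Finset (Finset (α × ℕ))) : Prop where
  pk : Pk F
  s46 : S46 F
  dis : Dis6 F
  pts : ∀ β ∈ F, ∀ x ∈ β, x.1 ∈ c ∧ x.2 < wt x.1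
  loc : ∀ β ∈ F, LocP a b c β
  six : ∀ β ∈ F, β.card = 6 → a ∈ c ∧ b ∈ c ∧ (c = {a, b} ∨ ∀ x ∈ β, x.1 ≠ a ∧ x.1 ≠ b)

/-- the test for transversal blocks -/
def tH (l : List ℕ) : Bool := trB l && l4B l
/-- the test for blocks with stem in position `z` -/
def tL (z : ℕ) (c : Bool) (l : List ℕ) : Bool := lpB z c l && l4B l
/-- the trivial test -/
def tO (_ : List ℕ) : Bool := true

variable {a b : α} {s1 s2 n4 n6 : ℕ} {c : Finset α} {D : List (List ℕ)}

theorem sp_H (ha : a ∉ c) (hb : b ∉ c) {w : List ℕ} {Q : Finset ℕ} (hQ : Q.card ≤ c.card)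
    (hw : ∀ j, 0 < w.getD j 0 → j ∈ Q) (hw6 : ∀ j ∈ Q, w.getD j 0 ≤ 6)
    (h : ingB w D tH n4 n6 = true) :
    ∃ F, Sp a b (wt2 a b s1 s2) c F ∧ num 4 F = n4 ∧ num 6 F = n6 := by
  obtain ⟨f, -, hfc, hf⟩ := posext c ∅ Q (fun _ => a) (by simp) (by simp) (by simp) (by simpa using hQ)
  rw [Finset.empty_union] at hfc hf
  obtain ⟨F, h1, h2, h3, h4, h5, h6, h7⟩ := place h f Q c (wt2 a b s1 s2) hf hw
    (fun j hj _ => hfc j hj) (by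
      intro j hj
      have h1 : f j ≠ a := fun e => ha (e ▸ hfc j hj)
      have h2 : f j ≠ b := fun e => hb (e ▸ hfc j hj)
      simp only [wt2, h1, h2, if_false]
      exact hw6 j hj)
  refine ⟨F, ⟨h1, h2, h3, h6, ?_, ?_⟩, h4, h5⟩
  · intro β hβ
    obtain ⟨l, hl, ht, hi, rfl, e, hm⟩ := h7 β hβ
    rw [tH, Bool.and_eq_true] at ht
    exact Or.inl (trB_sound hf hm ht.1)
  · intro β hβ h6
    obtain ⟨l, hl, ht, hi, rfl, e, hm⟩ := h7 β hβ
    simp only [tH, Bool.and_eq_true, l4B, Nat.beq_eq] at ht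
    omega

theorem sp_L1 (ha : a ∈ c) (hb : b ∉ c) (hc : c.card = 4)
    (h : ingB [6, 6, 6, 0, s1] D (tL 4 false) n4 n6 = true) :
    ∃ F, Sp a b (wt2 a b s1 s2) c F ∧ num 4 F = n4 ∧ num 6 F = n6 := by
  obtain ⟨f, hf0, hfc, hf⟩ := posext c {4} {0, 1, 2} (fun _ => a) (by simp) (by simpa using ha)
    (by simp) (by simp [hc])
  have f4 : f 4 = a := hf0 4 (by simp)
  obtain ⟨F, h1, h2, h3, h4, h5, h6, h7⟩ := place h f ({4} ∪ {0, 1, 2}) c (wt2 a b s1 s2) hf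
    (by intro j; rcases j with _ | _ | _ | _ | _ | j <;> simp)
    (fun j hj _ => hfc j hj) (by
      intro j hj
      have h2 : f j ≠ b := fun e => hb (e ▸ hfc j hj)
      by_cases h4 : j = 4
      · subst h4; simp [wt2, f4]
      · have h1 : f j ≠ a := fun e => h4 (hf j hj 4 (by simp) (e.trans f4.symm))
        simp only [wt2, h1, h2, if_false]
        rcases j with _ | _ | _ | _ | _ | j <;> simp at h4 ⊢)
  refine ⟨F, ⟨h1, h2, h3, h6, ?_, ?_⟩, h4, h5⟩
  · intro β hβ
    obtain ⟨l, hl, ht, hi, rfl, e, hm⟩ := h7 β hβ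
    rw [tL, Bool.and_eq_true] at ht
    rcases lpB_sound hf hm (z := 4) (by simp) ht.1 with h | h
    · exact Or.inl h
    · rw [f4] at h
      exact Or.inr (Or.inr (Or.inl ⟨ha, hb, h⟩))
  · intro β hβ h6
    obtain ⟨l, hl, ht, hi, rfl, e, hm⟩ := h7 β hβ
    simp only [tL, Bool.and_eq_true, l4B, Nat.beq_eq] at ht
    omega

theorem sp_L2 (ha : a ∉ c) (hb : b ∈ c) (hc : c.card = 4)
    (h : ingB [6, 6, 6, 0, 0, s2] D (tL 5 true) n4 n6 = true) :
    ∃ F, Sp a b (wt2 a b s1 s2) c F ∧ num 4 F = n4 ∧ num 6 F = n6 := by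
  obtain ⟨f, hf0, hfc, hf⟩ := posext c {5} {0, 1, 2} (fun _ => b) (by simp) (by simpa using hb)
    (by simp) (by simp [hc])
  have f4 : f 5 = b := hf0 5 (by simp)
  obtain ⟨F, h1, h2, h3, h4, h5, h6, h7⟩ := place h f ({5} ∪ {0, 1, 2}) c (wt2 a b s1 s2) hf
    (by intro j; rcases j with _ | _ | _ | _ | _ | _ | j <;> simp)
    (fun j hj _ => hfc j hj) (by
      intro j hj
      have h2 : f j ≠ a := fun e => ha (e ▸ hfc j hj)
      by_cases h4 : j = 5
      · subst h4
        have hba : b ≠ a := fun e => ha (e ▸ hb)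
        simp [wt2, f4, hba]
      · have h1 : f j ≠ b := fun e => h4 (hf j hj 5 (by simp) (e.trans f4.symm))
        simp only [wt2, h1, h2, if_false]
        rcases j with _ | _ | _ | _ | _ | _ | j <;> simp at h4 ⊢)
  refine ⟨F, ⟨h1, h2, h3, h6, ?_, ?_⟩, h4, h5⟩
  · intro β hβ
    obtain ⟨l, hl, ht, hi, rfl, e, hm⟩ := h7 β hβ
    rw [tL, Bool.and_eq_true] at ht
    rcases lpB_sound hf hm (z := 5) (by simp) ht.1 with h | h
    · exact Or.inl h
    · rw [f4] at h
      exact Or.inr (Or.inr (Or.inr ⟨hb, ha, h⟩))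
  · intro β hβ h6
    obtain ⟨l, hl, ht, hi, rfl, e, hm⟩ := h7 β hβ
    simp only [tL, Bool.and_eq_true, l4B, Nat.beq_eq] at ht
    omega

/-- placing an ingredient in a block containing both special points -/
theorem place2 (hab : a ≠ b) (ha : a ∈ c) (hb : b ∈ c) {w : List ℕ} {Q : Finset ℕ}
    (hQ : Q.card + 2 ≤ c.card) (hQ4 : ∀ j ∈ Q, j < 4) (hw : ∀ j, 0 < w.getD j 0 → j ∈ {4, 5} ∪ Q)
    (hw6 : ∀ j ∈ Q, w.getD j 0 ≤ 6) (hw4 : w.getD 4 0 = s1) (hw5 : w.getD 5 0 = s2)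
    {t : List ℕ → Bool} (h : ingB w D t n4 n6 = true) :
    ∃ (f : ℕ → α) (F : Finset (Finset (α × ℕ))), f 4 = a ∧ f 5 = b ∧
      (∀ i ∈ {4, 5} ∪ Q, ∀ j ∈ {4, 5} ∪ Q, f i = f j → i = j) ∧
      Pk F ∧ S46 F ∧ Dis6 F ∧ num 4 F = n4 ∧ num 6 F = n6 ∧
      (∀ β ∈ F, ∀ x ∈ β, x.1 ∈ c ∧ x.2 < wt2 a b s1 s2 x.1) ∧
      ∀ β ∈ F, ∃ l ∈ D, t l = true ∧ inc l = true ∧ β = l.toFinset.image (plc f) ∧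
        β.card = l.length ∧ ∀ m ∈ l, m / 6 ∈ {4, 5} ∪ Q := by
  obtain ⟨f, hf0, hfc, hf⟩ := posext c {4, 5} Q (fun j => if j = 4 then a else b)
    (by simp [hab, hab.symm]) (by simp [ha, hb])
    (by
      rw [Finset.disjoint_left]
      intro j hj hj'
      have := hQ4 j hj'
      simp at hj; omega) (by simpa [add_comm] using hQ)
  have f4 : f 4 = a := by simpa using hf0 4 (by simp)
  have f5 : f 5 = b := by simpa using hf0 5 (by simp)
  obtain ⟨F, hF⟩ := place h f ({4, 5} ∪ Q) c (wt2 a b s1 s2) hf hw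
    (fun j hj _ => hfc j hj) (by
      intro j hj
      by_cases h4 : j = 4
      · subst h4; rw [hw4]; simp [wt2, f4]
      by_cases h5 : j = 5
      · subst h5; rw [hw5]; simp [wt2, f5, hab.symm]
      have h1 : f j ≠ a := fun e => h4 (hf j hj 4 (by simp) (e.trans f4.symm))
      have h2 : f j ≠ b := fun e => h5 (hf j hj 5 (by simp) (e.trans f5.symm))
      simp only [wt2, h1, h2, if_false]
      apply hw6
      simpa [h4, h5] using hj)
  exact ⟨f, F, f4, f5, hf, hF⟩

theorem sp_G (hab : a ≠ b) (ha : a ∈ c) (hb : b ∈ c) {w : List ℕ} {Q : Finset ℕ}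
    (hQ : Q.card + 2 ≤ c.card) (hQ4 : ∀ j ∈ Q, j < 4) (hw : ∀ j, 0 < w.getD j 0 → j ∈ {4, 5} ∪ Q)
    (hw6 : ∀ j ∈ Q, w.getD j 0 ≤ 6) (hw4 : w.getD 4 0 = s1) (hw5 : w.getD 5 0 = s2)
    (h : ingB w D gB n4 n6 = true) :
    ∃ F, Sp a b (wt2 a b s1 s2) c F ∧ num 4 F = n4 ∧ num 6 F = n6 := by
  obtain ⟨f, F, f4, f5, hf, h1, h2, h3, h4, h5, h6, h7⟩ :=
    place2 hab ha hb hQ hQ4 hw hw6 hw4 hw5 h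
  have key : ∀ m, m / 6 ∈ {4, 5} ∪ Q → (f (m / 6) = a ∨ f (m / 6) = b) → 24 ≤ m := by
    intro m hm e
    rcases e with e | e
    · have := hf _ hm 4 (by simp) (e.trans f4.symm); omega
    · have := hf _ hm 5 (by simp) (e.trans f5.symm); omega
  refine ⟨F, ⟨h1, h2, h3, h6, ?_, ?_⟩, h4, h5⟩
  · intro β hβ
    obtain ⟨l, hl, ht, hi, rfl, e, hm⟩ := h7 β hβ
    simp only [gB, Bool.and_eq_true, Nat.ble_eq] at ht
    refine Or.inr (Or.inl ⟨ha, hb, Or.inr ?_⟩)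
    apply filt_sound hf hm _ (fun y => Nat.ble 24 y) _ ht.1
    intro m hml hmm
    simpa using key m (hm m hml) hmm
  · intro β hβ h6
    obtain ⟨l, hl, ht, hi, rfl, e, hm⟩ := h7 β hβ
    simp only [gB, Bool.and_eq_true, Bool.or_eq_true, Nat.beq_eq, List.all_eq_true] at ht
    refine ⟨ha, hb, Or.inr ?_⟩
    intro x hx
    obtain ⟨m, hml, rfl⟩ := mem_plc.1 hx
    rcases ht.2 with h | h
    · omega
    · have hlt : m < 24 := by simpa [Nat.blt] using h m hml
      constructor
      · intro e; have := key m (hm m hml) (Or.inl e); omega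
      · intro e; have := key m (hm m hml) (Or.inr e); omega

theorem sp_O (hab : a ≠ b) {w : List ℕ}
    (hw : ∀ j, 0 < w.getD j 0 → j = 4 ∨ j = 5)
    (hw4 : w.getD 4 0 = s1) (hw5 : w.getD 5 0 = s2)
    (h : ingB w D tO n4 n6 = true) :
    ∃ F, Sp a b (wt2 a b s1 s2) {a, b} F ∧ num 4 F = n4 ∧ num 6 F = n6 := by
  obtain ⟨f, F, f4, f5, hf, h1, h2, h3, h4, h5, h6, h7⟩ :=
    place2 hab (c := {a, b}) (by simp) (by simp) (Q := ∅) (by simp [hab]) (by simp)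
      (by simpa using hw) (by simp) hw4 hw5 h
  refine ⟨F, ⟨h1, h2, h3, h6, ?_, ?_⟩, h4, h5⟩
  · intro β hβ
    exact Or.inr (Or.inl ⟨by simp, by simp, Or.inl rfl⟩)
  · intro β hβ h6
    exact ⟨by simp, by simp, Or.inl rfl⟩

end W


section WW

/-- the ingredients of the construction -/
structure WI (s1 s2 p1 p2 N m o4 o6 : ℕ) : Prop where
  h4 : ∃ D, ingB [6, 6, 6, 6] D tH 216 0 = true
  h6 : ∃ D, ingB [6, 6, 6, 6, 6, 6] D tH 1080 0 = true
  l1 : ∃ D, ingB [6, 6, 6, 0, s1] D (tL 4 false) (54 + 3 * p1) 0 = true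
  l2 : ∃ D, ingB [6, 6, 6, 0, 0, s2] D (tL 5 true) (54 + 3 * p2) 0 = true
  g4 : ∃ D, ingB [6, 6, 0, 0, s1, s2] D gB N (2 * m) = true
  g6 : ∃ D, ingB [6, 6, 6, 6, s1, s2] D gB (2 * N + 4 * p1 + 4 * p2 + 216) (4 * m) = true
  o : ∃ D, ingB [0, 0, 0, 0, s1, s2] D tO o4 o6 = true

variable {α : Type*} [DecidableEq α]

theorem IsE.pair [Fintype α] {B : Finset (Finset α)} (h : IsE B) (hv : 2 ≤ Fintype.card α) :
    ∃ a b : α, a ≠ b ∧ ∀ c ∈ B, c.card = 6 → (a ∈ c ↔ b ∈ c) := by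
  by_cases hex : ∃ c ∈ B, c.card = 6
  · obtain ⟨c, hc, h6⟩ := hex
    obtain ⟨a, ha, b, hb, hab⟩ := Finset.one_lt_card.1 (show 1 < c.card by omega)
    refine ⟨a, b, hab, ?_⟩
    intro c' hc' h6'
    by_cases e : c = c'
    · subst e; simp [ha, hb]
    · have := h.dis c hc c' hc' h6 h6' e
      rw [Finset.disjoint_left] at this
      simp [this ha, this hb]
  · obtain ⟨a, b, hab⟩ := Fintype.one_lt_card_iff.1 (show 1 < Fintype.card α by omega)
    exact ⟨a, b, hab, fun c hc h6 => absurd ⟨c, hc, h6⟩ hex⟩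

/-- the set of points after weighting -/
def pset [Fintype α] (wt : α → ℕ) : Finset (α × ℕ) :=
  Finset.univ.biUnion fun p => (Finset.range (wt p)).image fun i => (p, i)

theorem mem_pset [Fintype α] {wt : α → ℕ} {x : α × ℕ} : x ∈ pset wt ↔ x.2 < wt x.1 := by
  simp only [pset, Finset.mem_biUnion, Finset.mem_image, Finset.mem_range, Finset.mem_univ,
    true_and]
  constructor
  · rintro ⟨p, i, hi, rfl⟩; exact hi
  · intro h; exact ⟨x.1, x.2, h, rfl⟩

theorem card_pset [Fintype α] {wt : α → ℕ} : (pset wt).card = ∑ p, wt p := by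
  rw [pset, Finset.card_biUnion]
  · apply Finset.sum_congr rfl
    intro p _
    rw [Finset.card_image_of_injective _ (fun i j e => by simpa using e), Finset.card_range]
  · intro p _ q _ hpq
    rw [Function.onFun, Finset.disjoint_left]
    intro x hx hx'
    simp only [Finset.mem_image] at hx hx'
    obtain ⟨i, _, rfl⟩ := hx
    obtain ⟨j, _, e⟩ := hx'
    exact hpq (by simpa using (congrArg Prod.fst e).symm)

theorem sum_wt2 [Fintype α] {a b : α} (hab : a ≠ b) (s1 s2 : ℕ) :
    ∑ p, wt2 a b s1 s2 p = s1 + s2 + 6 * (Fintype.card α - 2) := by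
  rw [← Finset.add_sum_erase _ _ (Finset.mem_univ a),
    ← Finset.add_sum_erase _ _ (Finset.mem_erase.2 ⟨hab.symm, Finset.mem_univ b⟩)]
  have : ∑ x ∈ (Finset.univ.erase a).erase b, wt2 a b s1 s2 x =
      ∑ x ∈ (Finset.univ.erase a).erase b, 6 := by
    apply Finset.sum_congr rfl
    intro x hx
    simp only [Finset.mem_erase, Finset.mem_univ, and_true] at hx
    simp [wt2, hx.1, hx.2]
  rw [this, Finset.sum_const, Finset.card_erase_of_mem
    (Finset.mem_erase.2 ⟨hab.symm, Finset.mem_univ b⟩),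
    Finset.card_erase_of_mem (Finset.mem_univ a), Finset.card_univ]
  simp [wt2, hab.symm, mul_comm, add_assoc, Nat.sub_sub]

theorem WI.fams {s1 s2 p1 p2 N m o4 o6 : ℕ} (h : WI s1 s2 p1 p2 N m o4 o6)
    {B : Finset (Finset α)} (hs : S46 B) {a b : α} (hab : a ≠ b)
    (h6 : ∀ c ∈ B, c.card = 6 → (a ∈ c ↔ b ∈ c)) {c : Finset α} (hc : c ∈ B) :
    ∃ F, Sp a b (wt2 a b s1 s2) c F ∧
      (2 * num 4 F : ℤ) = 108 * (c.card.choose 3 : ℕ) +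
        (2 * p1 - 108) * (if {a} ⊆ c then (c.card - 1).choose 2 else 0 : ℕ) +
        (2 * p2 - 108) * (if {b} ⊆ c then (c.card - 1).choose 2 else 0 : ℕ) +
        (N - 3 * p1 - 3 * p2 + 108) * (if {a, b} ⊆ c then (c.card - 2).choose 1 else 0 : ℕ) ∧
      num 6 F = m * (if {a, b} ⊆ c then (c.card - 2).choose 1 else 0 : ℕ) := by
  simp only [Finset.singleton_subset_iff, Finset.insert_subset_iff]
  rcases hs c hc with h4 | h4
  · by_cases ha : a ∈ c <;> by_cases hb : b ∈ c
    · obtain ⟨D, hD⟩ := h.g4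
      obtain ⟨F, h1, h2, h3⟩ := sp_G (s1 := s1) (s2 := s2) hab ha hb (Q := {0, 1}) (by simp [h4])
        (by simp) (by intro j; rcases j with _ | _ | _ | _ | _ | _ | j <;> simp)
        (by simp) rfl rfl hD
      refine ⟨F, h1, ?_, ?_⟩
      · rw [h2]; simp [ha, hb, h4, Nat.choose]; ring
      · rw [h3]; simp [ha, hb, h4]; ring
    · obtain ⟨D, hD⟩ := h.l1
      obtain ⟨F, h1, h2, h3⟩ := sp_L1 (s2 := s2) ha hb h4 hD
      refine ⟨F, h1, ?_, ?_⟩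
      · rw [h2]; simp [ha, hb, h4, Nat.choose]; ring
      · rw [h3]; simp [ha, hb]
    · obtain ⟨D, hD⟩ := h.l2
      obtain ⟨F, h1, h2, h3⟩ := sp_L2 (s1 := s1) ha hb h4 hD
      refine ⟨F, h1, ?_, ?_⟩
      · rw [h2]; simp [ha, hb, h4, Nat.choose]; ring
      · rw [h3]; simp [ha, hb]
    · obtain ⟨D, hD⟩ := h.h4
      obtain ⟨F, h1, h2, h3⟩ := sp_H (s1 := s1) (s2 := s2) ha hb (Q := {0, 1, 2, 3}) (by simp [h4])
        (by intro j; rcases j with _ | _ | _ | _ | j <;> simp) (by simp) hD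
      refine ⟨F, h1, ?_, ?_⟩
      · rw [h2]; simp [ha, hb, h4]
      · rw [h3]; simp [ha, hb]
  · have hiff := h6 c hc h4
    by_cases ha : a ∈ c
    · have hb := hiff.1 ha
      obtain ⟨D, hD⟩ := h.g6
      obtain ⟨F, h1, h2, h3⟩ := sp_G (s1 := s1) (s2 := s2) hab ha hb (Q := {0, 1, 2, 3})
        (by simp [h4])
        (by simp) (by intro j; rcases j with _ | _ | _ | _ | _ | _ | j <;> simp)
        (by simp) rfl rfl hD
      refine ⟨F, h1, ?_, ?_⟩
      · rw [h2]; simp [ha, hb, h4, Nat.choose]; ring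
      · rw [h3]; simp [ha, hb, h4]; ring
    · have hb : b ∉ c := fun hb => ha (hiff.2 hb)
      obtain ⟨D, hD⟩ := h.h6
      obtain ⟨F, h1, h2, h3⟩ := sp_H (s1 := s1) (s2 := s2) ha hb (Q := {0, 1, 2, 3, 4, 5})
        (by simp [h4])
        (by intro j; rcases j with _ | _ | _ | _ | _ | _ | j <;> simp) (by simp) hD
      refine ⟨F, h1, ?_, ?_⟩
      · rw [h2]; simp [ha, hb, h4, Nat.choose]
      · rw [h3]; simp [ha, hb]

theorem WI.main {s1 s2 p1 p2 N m o4 o6 : ℕ} (h : WI s1 s2 p1 p2 N m o4 o6) [Fintype α]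
    {B : Finset (Finset α)} (hB : IsE B) {n : ℕ} (hn : 0 < n) (hv : 2 ≤ Fintype.card α)
    (hn' : n = s1 + s2 + 6 * (Fintype.card α - 2)) :
    ∃ A : Finset (Finset (Fin n)), Pk A ∧ S46 A ∧ Dis6 A ∧
      (2 * num 4 A : ℤ) = 108 * ((Fintype.card α).choose 3 : ℕ) +
        (2 * p1 + 2 * p2 - 216) * ((Fintype.card α - 1).choose 2 : ℕ) +
        (N - 3 * p1 - 3 * p2 + 108) * (Fintype.card α - 2 : ℕ) + 2 * o4 ∧
      num 6 A = m * (Fintype.card α - 2) + o6 := by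
  obtain ⟨a, b, hab, h6⟩ := hB.pair hv
  have hnB : ({a, b} : Finset α) ∉ B := by
    intro hc
    have := hB.s46 _ hc
    rw [Finset.card_pair hab] at this
    omega
  have hF : ∀ c ∈ insert {a, b} B, ∃ F, Sp a b (wt2 a b s1 s2) c F ∧
      (c = {a, b} → num 4 F = o4 ∧ num 6 F = o6) ∧ (c ∈ B →
      (2 * num 4 F : ℤ) = 108 * (c.card.choose 3 : ℕ) +
        (2 * p1 - 108) * (if {a} ⊆ c then (c.card - 1).choose 2 else 0 : ℕ) +
        (2 * p2 - 108) * (if {b} ⊆ c then (c.card - 1).choose 2 else 0 : ℕ) +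
        (N - 3 * p1 - 3 * p2 + 108) * (if {a, b} ⊆ c then (c.card - 2).choose 1 else 0 : ℕ) ∧
      num 6 F = m * (if {a, b} ⊆ c then (c.card - 2).choose 1 else 0 : ℕ)) := by
    intro c hc
    rcases Finset.mem_insert.1 hc with rfl | hc
    · obtain ⟨D, hD⟩ := h.o
      obtain ⟨F, h1, h2, h3⟩ := sp_O (s1 := s1) (s2 := s2) hab
        (by intro j; rcases j with _ | _ | _ | _ | _ | _ | j <;> simp) rfl rfl hD
      exact ⟨F, h1, fun _ => ⟨h2, h3⟩, fun hc => absurd hc hnB⟩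
    · obtain ⟨F, h1, h2⟩ := h.fams hB.s46 hab h6 hc
      exact ⟨F, h1, fun e => absurd (e ▸ hc) hnB, fun _ => h2⟩
  choose! F hSp hO hcnt using hF
  have hcap : ∀ c ∈ insert {a, b} B, ∀ c' ∈ insert {a, b} B, c ≠ c' → (c ∩ c').card ≤ 2 := by
    intro c hc c' hc' hne
    rcases Finset.mem_insert.1 hc with rfl | hc
    · exact (Finset.card_le_card Finset.inter_subset_left).trans (Finset.card_pair hab).le
    · rcases Finset.mem_insert.1 hc' with rfl | hc'
      · exact (Finset.card_le_card Finset.inter_subset_right).trans (Finset.card_pair hab).le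
      · exact hB.pk c hc c' hc' hne
  obtain ⟨hpk, hs46, hnum⟩ := combine (insert {a, b} B) F (fun c hc => (hSp c hc).pk)
    (fun c hc => (hSp c hc).s46) (by
      intro c hc c' hc' hne β hβ β' hβ'
      exact LocP.cross hab hne (fun x hx => ((hSp c hc).pts β hβ x hx).1)
        (fun x hx => ((hSp c' hc').pts β' hβ' x hx).1) (hcap c hc c' hc' hne)
        ((hSp c hc).loc β hβ) ((hSp c' hc').loc β' hβ'))
  have hdis : Dis6 ((insert {a, b} B).biUnion F) := by
    intro β hβ β' hβ' h6 h6' hne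
    obtain ⟨c, hc, hβ⟩ := Finset.mem_biUnion.1 hβ
    obtain ⟨c', hc', hβ'⟩ := Finset.mem_biUnion.1 hβ'
    by_cases e : c = c'
    · subst e
      exact (hSp c hc).dis β hβ β' hβ' h6 h6' hne
    obtain ⟨ha, hb, hx⟩ := (hSp c hc).six β hβ h6
    obtain ⟨ha', hb', hx'⟩ := (hSp c' hc').six β' hβ' h6'
    have e2 : ({a, b} : Finset α) = c ∩ c' := by
      apply Finset.eq_of_subset_of_card_le
      · intro x hx
        simp only [Finset.mem_insert, Finset.mem_singleton] at hx
        rcases hx with rfl | rfl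
        · exact Finset.mem_inter.2 ⟨ha, ha'⟩
        · exact Finset.mem_inter.2 ⟨hb, hb'⟩
      · rw [Finset.card_pair hab]; exact hcap c hc c' hc' e
    rw [Finset.disjoint_left]
    intro x hxβ hxβ'
    have hm : x.1 ∈ c ∩ c' := Finset.mem_inter.2
      ⟨((hSp c hc).pts β hβ x hxβ).1, ((hSp c' hc').pts β' hβ' x hxβ').1⟩
    rw [← e2] at hm
    simp only [Finset.mem_insert, Finset.mem_singleton] at hm
    rcases hx with hx | hx
    · rcases hx' with hx' | hx'
      · exact e (hx.trans hx'.symm)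
      · have := hx' x hxβ'; tauto
    · have := hx x hxβ; tauto
  have hsub : ∀ β ∈ (insert {a, b} B).biUnion F, β ⊆ pset (wt2 a b s1 s2) := by
    intro β hβ x hx
    obtain ⟨c, hc, hβ⟩ := Finset.mem_biUnion.1 hβ
    exact mem_pset.2 ((hSp c hc).pts β hβ x hx).2
  obtain ⟨A, hA1, hA2, hA3, hA4⟩ := toFin (pset (wt2 a b s1 s2)) n hn
    (by rw [card_pset, sum_wt2 hab, hn']) _ hsub hpk
  refine ⟨A, hA1, hA2 hs46, hA4 hdis, ?_, ?_⟩
  · have d0 := hB.dc ∅ (by simp)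
    have d1 := hB.dc {a} (by simp)
    have d2 := hB.dc {b} (by simp)
    have d3 := hB.dc {a, b} (by rw [Finset.card_pair hab]; omega)
    simp only [Finset.empty_subset, if_true, Finset.card_empty, Nat.sub_zero,
      Finset.card_singleton, Finset.card_pair hab] at d0 d1 d2 d3
    rw [hA3, hnum 4 (by omega), Finset.sum_insert hnB,
      (hO _ (Finset.mem_insert_self _ _) rfl).1]
    push_cast
    rw [mul_add, Finset.mul_sum, Finset.sum_congr rfl
      (fun c hc => (hcnt c (Finset.mem_insert_of_mem hc) hc).1)]
    simp only [Finset.sum_add_distrib, ← Finset.mul_sum, ← Nat.cast_sum]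
    rw [d0, show (2 : ℕ) = 3 - 1 from rfl, d1, d2]
    rw [show (3 - 1 : ℕ) = 2 from rfl, show (1 : ℕ) = 3 - 2 from rfl, d3]
    simp only [show 3 - 2 = 1 from rfl, Nat.choose_one_right]
    push_cast
    ring
  · have d3 := hB.dc {a, b} (by rw [Finset.card_pair hab]; omega)
    simp only [Finset.card_pair hab] at d3
    rw [hA3, hnum 6 (by omega), Finset.sum_insert hnB,
      (hO _ (Finset.mem_insert_self _ _) rfl).2, Finset.sum_congr rfl
      (fun c hc => (hcnt c (Finset.mem_insert_of_mem hc) hc).2), ← Finset.mul_sum, d3]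
    simp [add_comm]

end WW


section Data

set_option maxRecDepth 100000

theorem i_dH4 : ingB [6, 6, 6, 6] dH4 tH 216 0 = true := by decide +kernel
theorem i_dH6 : ingB [6, 6, 6, 6, 6, 6] dH6 tH 1080 0 = true := by decide +kernel
theorem i_dPr0 : ingB [6, 6, 6, 0, 0] dPr0 (tL 4 false) 135 0 = true := by decide +kernel
theorem i_dPr2 : ingB [6, 6, 6, 0, 2] dPr2 (tL 4 false) 189 0 = true := by decide +kernel
theorem i_dPr4 : ingB [6, 6, 6, 0, 4] dPr4 (tL 4 false) 243 0 = true := by decide +kernel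
theorem i_dPr5 : ingB [6, 6, 6, 0, 5] dPr5 (tL 4 false) 261 0 = true := by decide +kernel
theorem i_dPr6 : ingB [6, 6, 6, 0, 6] dPr6 (tL 4 false) 297 0 = true := by decide +kernel
theorem i_dHx0 : ingB [6, 6, 6, 0, 0, 0] dHx0 (tL 5 true) 108 0 = true := by decide +kernel
theorem i_dHx6 : ingB [6, 6, 6, 0, 0, 6] dHx6 (tL 5 true) 270 0 = true := by decide +kernel
theorem i_dG4_0 : ingB [6, 6, 0, 0, 0, 0] dG4_0 gB 45 2 = true := by decide +kernel
theorem i_dG6_0 : ingB [6, 6, 6, 6, 0, 0] dG6_0 gB 486 4 = true := by decide +kernel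
theorem i_dO0 : ingB [0, 0, 0, 0, 0, 0] dO0 tO 0 0 = true := by decide +kernel
theorem i_dG4_2 : ingB [6, 6, 0, 0, 2, 0] dG4_2 gB 91 0 = true := by decide +kernel
theorem i_dG6_2 : ingB [6, 6, 6, 6, 2, 0] dG6_2 gB 650 0 = true := by decide +kernel
theorem i_dO2 : ingB [0, 0, 0, 0, 2, 0] dO2 tO 0 0 = true := by decide +kernel
theorem i_dG4_4 : ingB [6, 6, 0, 0, 4, 0] dG4_4 gB 139 0 = true := by decide +kernel
theorem i_dG6_4 : ingB [6, 6, 6, 6, 4, 0] dG6_4 gB 818 0 = true := by decide +kernel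
theorem i_dO4 : ingB [0, 0, 0, 0, 4, 0] dO4 tO 1 0 = true := by decide +kernel
theorem i_dG4_5 : ingB [6, 6, 0, 0, 5, 0] dG4_5 gB 156 0 = true := by decide +kernel
theorem i_dG6_5 : ingB [6, 6, 6, 6, 5, 0] dG6_5 gB 876 0 = true := by decide +kernel
theorem i_dO5 : ingB [0, 0, 0, 0, 5, 0] dO4 tO 1 0 = true := by decide +kernel
theorem i_dG4_6 : ingB [6, 6, 0, 0, 6, 0] dG4_6 gB 189 2 = true := by decide +kernel
theorem i_dG6_6 : ingB [6, 6, 6, 6, 6, 0] dG6_6 gB 990 4 = true := by decide +kernel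
theorem i_dO6 : ingB [0, 0, 0, 0, 6, 0] dO6 tO 0 1 = true := by decide +kernel
theorem i_dG4_8 : ingB [6, 6, 0, 0, 2, 6] dG4_8 gB 271 0 = true := by decide +kernel
theorem i_dG6_8 : ingB [6, 6, 6, 6, 2, 6] dG6_8 gB 1226 0 = true := by decide +kernel
theorem i_dO8 : ingB [0, 0, 0, 0, 2, 6] dO8 tO 14 0 = true := by decide +kernel
theorem i_dG4_10 : ingB [6, 6, 0, 0, 4, 6] dG4_10 gB 355 0 = true := by decide +kernel
theorem i_dG6_10 : ingB [6, 6, 6, 6, 4, 6] dG6_10 gB 1466 0 = true := by decide +kernel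
theorem i_dO10 : ingB [0, 0, 0, 0, 4, 6] dO10 tO 30 0 = true := by decide +kernel

theorem wi_0 : WI 0 0 27 18 45 1 0 0 :=
  ⟨⟨_, i_dH4⟩, ⟨_, i_dH6⟩, ⟨_, i_dPr0⟩, ⟨_, i_dHx0⟩, ⟨_, i_dG4_0⟩, ⟨_, i_dG6_0⟩, ⟨_, i_dO0⟩⟩
theorem wi_2 : WI 2 0 45 18 91 0 0 0 :=
  ⟨⟨_, i_dH4⟩, ⟨_, i_dH6⟩, ⟨_, i_dPr2⟩, ⟨_, i_dHx0⟩, ⟨_, i_dG4_2⟩, ⟨_, i_dG6_2⟩, ⟨_, i_dO2⟩⟩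
theorem wi_4 : WI 4 0 63 18 139 0 1 0 :=
  ⟨⟨_, i_dH4⟩, ⟨_, i_dH6⟩, ⟨_, i_dPr4⟩, ⟨_, i_dHx0⟩, ⟨_, i_dG4_4⟩, ⟨_, i_dG6_4⟩, ⟨_, i_dO4⟩⟩
theorem wi_5 : WI 5 0 69 18 156 0 1 0 :=
  ⟨⟨_, i_dH4⟩, ⟨_, i_dH6⟩, ⟨_, i_dPr5⟩, ⟨_, i_dHx0⟩, ⟨_, i_dG4_5⟩, ⟨_, i_dG6_5⟩, ⟨_, i_dO5⟩⟩
theorem wi_6 : WI 6 0 81 18 189 1 0 1 :=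
  ⟨⟨_, i_dH4⟩, ⟨_, i_dH6⟩, ⟨_, i_dPr6⟩, ⟨_, i_dHx0⟩, ⟨_, i_dG4_6⟩, ⟨_, i_dG6_6⟩, ⟨_, i_dO6⟩⟩
theorem wi_8 : WI 2 6 45 72 271 0 14 0 :=
  ⟨⟨_, i_dH4⟩, ⟨_, i_dH6⟩, ⟨_, i_dPr2⟩, ⟨_, i_dHx6⟩, ⟨_, i_dG4_8⟩, ⟨_, i_dG6_8⟩, ⟨_, i_dO8⟩⟩
theorem wi_10 : WI 4 6 63 72 355 0 30 0 :=
  ⟨⟨_, i_dH4⟩, ⟨_, i_dH6⟩, ⟨_, i_dPr4⟩, ⟨_, i_dHx6⟩, ⟨_, i_dG4_10⟩, ⟨_, i_dG6_10⟩, ⟨_, i_dO10⟩⟩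

end Data


section Exist

theorem c3 (n : ℕ) : 6 * (n + 2).choose 3 = (n + 2) * (n + 1) * n := by
  have h := Nat.descFactorial_eq_factorial_mul_choose (n + 2) 3
  have e : (n + 2).descFactorial 3 = (n + 2) * (n + 1) * n := by
    simp [Nat.descFactorial]; ring
  rw [e] at h
  simpa [Nat.factorial] using h.symm

theorem c2 (n : ℕ) : 2 * (n + 1).choose 2 = (n + 1) * n := by
  have h := Nat.descFactorial_eq_factorial_mul_choose (n + 1) 2
  have e : (n + 1).descFactorial 2 = (n + 1) * n := by
    simp [Nat.descFactorial]; ring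
  rw [e] at h
  simpa [Nat.factorial] using h.symm

theorem ex_step {s1 s2 p1 p2 N m o4 o6 k : ℕ} (h : WI s1 s2 p1 p2 N m o4 o6)
    (hk : 1 ≤ k) (hE : EX (2 * k + 2))
    (h6 : m * (2 * k) + o6 = if (12 * k + (s1 + s2)) % 6 = 0 then (12 * k + (s1 + s2)) / 6 else 0)
    (htot : (216 * ((2 * k + 2) * (2 * k + 1) * (2 * k)) +
        6 * (2 * p1 + 2 * p2 - 216) * ((2 * k + 1) * (2 * k)) +
        12 * (N - 3 * p1 - 3 * p2 + 108) * (2 * k) + 24 * o4 + 120 * (m * (2 * k) + o6) : ℤ) =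
        (12 * k + (s1 + s2)) * (12 * k + (s1 + s2) - 1) * (12 * k + (s1 + s2) - 2)) :
    EX (12 * k + (s1 + s2)) := by
  obtain ⟨B, hB⟩ := hE
  obtain ⟨A, h1, h2, h3, h4, h5⟩ := h.main hB (n := 12 * k + (s1 + s2)) (by omega) (by simp)
    (by simp; omega)
  refine ⟨A, h2, h1, h3, ?_, ?_⟩
  · rw [h5, ← (by simp : 2 * k = Fintype.card (Fin (2 * k + 2)) - 2), h6]
    simp
  · simp only [Fintype.card_fin, Nat.add_sub_cancel] at h4 h5 ⊢
    rw [show 2 * k + 2 - 1 = 2 * k + 1 by omega] at h4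
    have e1 := c3 (2 * k)
    have e2 := c2 (2 * k)
    obtain ⟨n, hn⟩ : ∃ n, 12 * k + (s1 + s2) = n + 2 := ⟨12 * k + (s1 + s2) - 2, by omega⟩
    have e3 := c3 n
    rw [← hn] at e3
    zify at e1 e2 e3 h5 ⊢
    have hn' : (n : ℤ) = 12 * k + (s1 + s2) - 2 := by zify at hn; linarith
    rw [hn'] at e3
    push_cast at *
    rw [h5]
    have key : (6 : ℤ) * (4 * num 4 A + 20 * (m * (2 * k) + o6)) =
        6 * ((12 * k + (s1 + s2)).choose 3 : ℕ) := by
      linear_combination 12 * h4 + 216 * e1 + 6 * (2 * p1 + 2 * p2 - 216) * e2 - e3 + htot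
    linarith

theorem ex_hole {w : List ℕ} {D : List (List ℕ)} {n : ℕ} (V : Finset ℕ) (hn : 4 ≤ n)
    (hV : V.card = n) (h6 : n % 6 ≠ 0)
    (h : ingB w D tO (n.choose 3 / 4) 0 = true) (hd : 4 ∣ n.choose 3)
    (hD : D.all (fun l => l.all fun m => decide (m ∈ V)) = true) : EX n := by
  simp only [ingB, Bool.and_eq_true, Nat.beq_eq] at h
  obtain ⟨⟨⟨⟨h1, h2⟩, h3⟩, h4⟩, h5⟩ := h
  have e4 := fam_num h1 4
  have e6 := fam_num h1 6
  rw [h4] at e4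
  rw [h5] at e6
  simp only [List.all_eq_true, decide_eq_true_eq] at hD
  obtain ⟨B, b1, b2, b3, b4⟩ := toFin V n (by omega) hV (fam D) (by
    intro a ha x hx
    obtain ⟨l, hl, rfl⟩ := mem_fam.1 ha
    exact hD l hl x (List.mem_toFinset.1 hx)) (fam_pk h1)
  refine ⟨B, b2 ?_, b1, b4 ?_, ?_, ?_⟩
  · intro a ha
    obtain ⟨l, hl, rfl⟩ := mem_fam.1 ha
    rw [chk_card h1 hl]
    exact (chk_all h1 hl).1
  · intro a ha a' ha' hc
    have : a ∈ (fam D).filter fun b => b.card = 6 := Finset.mem_filter.2 ⟨ha, hc⟩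
    rw [Finset.card_eq_zero.1 e6] at this
    simp at this
  · rw [b3, e6]; simp [h6]
  · rw [b3, b3, e4, e6]; simp; omega

theorem ex_univ {n : ℕ} (hn : n = 4 ∨ n = 6) : EX n := by
  refine ⟨{Finset.univ}, ?_, ?_, ?_, ?_, ?_⟩
  · intro b hb
    rw [Finset.mem_singleton] at hb
    subst hb; simpa using hn
  · intro b hb b' hb' hne
    rw [Finset.mem_singleton] at hb hb'
    exact absurd (hb.trans hb'.symm) hne
  · intro b hb b' hb' _ _ hne
    rw [Finset.mem_singleton] at hb hb'
    exact absurd (hb.trans hb'.symm) hne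
  · rcases hn with rfl | rfl <;> decide
  · rcases hn with rfl | rfl <;> decide

theorem ex_even (n : ℕ) (hn : 4 ≤ n) (he : n % 2 = 0) : EX n := by
  induction n using Nat.strong_induction_on with
  | _ n ih =>
    by_cases hlt : n < 12
    · interval_cases n
      · exact ex_univ (by simp)
      · omega
      · exact ex_univ (by simp)
      · omega
      · exact ex_hole ({24, 25, 30, 31, 32, 33, 34, 35} : Finset ℕ) (by simp) rfl (by simp) i_dO8 (by decide)
          (by decide +kernel)
      · omega
      · exact ex_hole ({24, 25, 26, 27, 30, 31, 32, 33, 34, 35} : Finset ℕ) (by simp) rfl (by simp) i_dO10 (by decide)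
          (by decide +kernel)
      · omega
    · have hk : 1 ≤ n / 12 := by omega
      have hE : EX (2 * (n / 12) + 2) := ih _ (by omega) (by omega) (by omega)
      have hs : n % 12 = 0 ∨ n % 12 = 2 ∨ n % 12 = 4 ∨ n % 12 = 6 ∨ n % 12 = 8 ∨ n % 12 = 10 := by
        omega
      generalize hkk : n / 12 = k at *
      rcases hs with h | h | h | h | h | h
      · rw [show n = 12 * k + (0 + 0) by omega]
        exact ex_step wi_0 hk hE (by split_ifs <;> omega) (by push_cast; ring)
      · rw [show n = 12 * k + (2 + 0) by omega]
        exact ex_step wi_2 hk hE (by split_ifs <;> omega) (by push_cast; ring)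
      · rw [show n = 12 * k + (4 + 0) by omega]
        exact ex_step wi_4 hk hE (by split_ifs <;> omega) (by push_cast; ring)
      · rw [show n = 12 * k + (6 + 0) by omega]
        exact ex_step wi_6 hk hE (by split_ifs <;> omega) (by push_cast; ring)
      · rw [show n = 12 * k + (2 + 6) by omega]
        exact ex_step wi_8 hk hE (by split_ifs <;> omega) (by push_cast; ring)
      · rw [show n = 12 * k + (4 + 6) by omega]
        exact ex_step wi_10 hk hE (by split_ifs <;> omega) (by push_cast; ring)

end Exist


section Colouring

theorem two_col {X : Type*} (p q : X → X) (hp : ∀ x, p (p x) = x) (hq : ∀ x, q (q x) = x)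
    (hp' : ∀ x, p x ≠ x) (hq' : ∀ x, q x ≠ x) :
    ∃ col : X → Bool, ∀ x, col (p x) ≠ col x ∧ col (q x) ≠ col x := by
  classical
  let P : Equiv.Perm X := ⟨p, p, hp, hp⟩
  let R : Equiv.Perm X := ⟨q, q, hq, hq⟩
  have hPP : P * P = 1 := Equiv.ext fun x => hp x
  have hRR : R * R = 1 := Equiv.ext fun x => hq x
  have hPi : P⁻¹ = P := inv_eq_of_mul_eq_one_left hPP
  have hRi : R⁻¹ = R := inv_eq_of_mul_eq_one_left hRR
  let g : Equiv.Perm X := P * R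
  have hconj : P * g * P⁻¹ = g⁻¹ := by
    simp only [g, mul_inv_rev, hPi, hRi]
    rw [← mul_assoc, hPP, one_mul]
  have hconjz : ∀ j : ℤ, ∀ x, p ((g ^ j) x) = (g ^ (-j)) (p x) := by
    intro j x
    have h1 : P * g ^ j * P⁻¹ = g ^ (-j) := by
      rw [← conj_zpow, hconj, inv_zpow', ]
    have h2 := congrArg (fun e : Equiv.Perm X => e (p x)) h1
    simp only [Equiv.Perm.mul_apply, hPi] at h2
    have h3 : P (p x) = x := hp x
    rw [h3] at h2
    exact h2
  have hns : ∀ x, ¬ g.SameCycle x (p x) := by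
    rintro x ⟨i, hi⟩
    obtain ⟨j, hj | hj⟩ := Int.even_or_odd' i
    · apply hp' ((g ^ j) x)
      rw [hconjz, ← hi, ← Equiv.Perm.mul_apply, ← zpow_add]
      congr 2; omega
    · apply hq' ((g ^ j) x)
      have h1 : p ((g ^ j) x) = g ((g ^ j) x) := by
        rw [hconjz, ← hi, ← Equiv.Perm.mul_apply, ← zpow_add, ← Equiv.Perm.mul_apply,
          ← zpow_one_add]
        congr 2; omega
      have h2 : p ((g ^ j) x) = p (q ((g ^ j) x)) := h1
      have h3 := congrArg p h2
      rw [hp, hp] at h3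
      exact h3.symm
  let r : X → X := fun x => (Quotient.mk (Equiv.Perm.SameCycle.setoid g) x).out
  have hr : ∀ x y, r x = r y ↔ g.SameCycle x y := by
    intro x y
    constructor
    · intro e
      have := Quotient.out_injective e
      exact Quotient.exact this
    · intro e
      have : Quotient.mk (Equiv.Perm.SameCycle.setoid g) x = Quotient.mk _ y := Quotient.sound e
      simp only [r, this]
  let _ : LinearOrder X := linearOrderOfSTO WellOrderingRel
  refine ⟨fun x => decide (r x < r (p x)), fun x => ?_⟩
  have hne : r x ≠ r (p x) := fun e => hns x ((hr _ _).1 e)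
  have h1 : r (q x) = r (p x) := by
    rw [hr]
    have : q x = (g ^ (-1 : ℤ)) (p x) := by
      rw [← hconjz]
      exact (hp (q x)).symm
    rw [this]
    exact (Equiv.Perm.sameCycle_zpow_left).2 (Equiv.Perm.SameCycle.refl _ _)
  have h2 : r (p (q x)) = r x := by
    rw [hr]
    exact (Equiv.Perm.sameCycle_apply_left (f := g)).2 (Equiv.Perm.SameCycle.refl _ _)
  simp only [hp, h1, h2, ne_eq, decide_eq_decide]
  rcases lt_or_gt_of_ne hne with h | h
  · have := h.not_gt; tauto
  · have := h.not_gt; tauto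

variable {α : Type*} [DecidableEq α] [Fintype α]

theorem partner {B : Finset (Finset α)} (hB : IsE B) {Z : Finset α} (hZ : Z ∈ B) {a b : α}
    (ha : a ∈ Z) (hb : b ∈ Z) (hab : a ≠ b) (h4 : ∀ c ∈ B, a ∈ c → c ≠ Z → c.card = 4) :
    ∃ p : {x // x ∉ Z} → {x // x ∉ Z}, (∀ x, p (p x) = x) ∧ (∀ x, p x ≠ x) ∧
      ∀ c ∈ B, a ∈ c → b ∈ c → c ≠ Z → ∀ x y : {x // x ∉ Z}, x.1 ∈ c → y.1 ∈ c → x ≠ y →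
        p x = y := by
  have h3 : ∀ x, x ∉ Z → ({a, b, x} : Finset α).card = 3 := by
    intro x hx
    have h1 : a ≠ x := fun e => hx (e ▸ ha)
    have h2 : b ≠ x := fun e => hx (e ▸ hb)
    rw [Finset.card_eq_three]
    exact ⟨a, b, x, hab, h1, h2, rfl⟩
  have hsub : ∀ {c : Finset α} {x : α}, a ∈ c → b ∈ c → x ∈ c → {a, b, x} ⊆ c := by
    intro c x h1 h2 h3
    simp [Finset.insert_subset_iff, h1, h2, h3]
  have hex : ∀ x : {x // x ∉ Z}, ∃ y : {x // x ∉ Z}, y ≠ x ∧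
      ∃ c ∈ B, a ∈ c ∧ b ∈ c ∧ x.1 ∈ c ∧ y.1 ∈ c := by
    rintro ⟨x, hx⟩
    obtain ⟨c, hc, hT⟩ := hB.ex3 (h3 x hx)
    have ha' : a ∈ c := hT (by simp)
    have hb' : b ∈ c := hT (by simp)
    have hx' : x ∈ c := hT (by simp)
    have hcZ : c ≠ Z := fun e => hx (e ▸ hx')
    have hc4 := h4 c hc ha' hcZ
    have : (c \ {a, b, x}).Nonempty := by
      rw [← Finset.card_pos, Finset.card_sdiff_of_subset hT, h3 x hx]; omega
    obtain ⟨y, hy⟩ := this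
    simp only [Finset.mem_sdiff, Finset.mem_insert, Finset.mem_singleton, not_or] at hy
    refine ⟨⟨y, ?_⟩, ?_, c, hc, ha', hb', hx', hy.1⟩
    · intro hyZ
      have h5 : ({a, b, y} : Finset α).card = 3 :=
        Finset.card_eq_three.2 ⟨a, b, y, hab, Ne.symm hy.2.1, Ne.symm hy.2.2.1, rfl⟩
      exact hcZ (hB.pk.eq_of_three h5 hc hZ (hsub ha' hb' hy.1) (hsub ha hb hyZ))
    · intro e
      exact hy.2.2.2 (congrArg Subtype.val e)
  choose p hp1 hp2 using hex
  have key : ∀ c ∈ B, a ∈ c → b ∈ c → c ≠ Z → ∀ x y : {x // x ∉ Z}, x.1 ∈ c → y.1 ∈ c → x ≠ y →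
        p x = y := by
    intro c hc ha' hb' hcZ x y hx hy hxy
    obtain ⟨c', hc', ha2, hb2, hx2, hpx⟩ := hp2 x
    have e : c' = c := hB.pk.eq_of_three (h3 x x.2) hc' hc (hsub ha2 hb2 hx2) (hsub ha' hb' hx)
    subst e
    by_contra hne
    have hc4 := h4 c' hc ha' hcZ
    have hs : insert (p x).1 (insert y.1 {a, b, x.1}) ⊆ c' := by
      simp [Finset.insert_subset_iff, ha', hb', hx, hy, hpx]
    have := Finset.card_le_card hs
    rw [Finset.card_insert_of_notMem, Finset.card_insert_of_notMem, h3 x x.2] at this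
    · omega
    · simp only [Finset.mem_insert, Finset.mem_singleton, not_or]
      exact ⟨fun e => y.2 (e ▸ ha), fun e => y.2 (e ▸ hb), fun e => hxy (Subtype.ext e).symm⟩
    · simp only [Finset.mem_insert, Finset.mem_singleton, not_or]
      exact ⟨fun e => hne (Subtype.ext e), fun e => (p x).2 (e ▸ ha), fun e => (p x).2 (e ▸ hb),
        fun e => hp1 x (Subtype.ext e)⟩
  refine ⟨p, fun x => ?_, hp1, key⟩
  obtain ⟨c, hc, ha', hb', hx, hpx⟩ := hp2 x
  exact key c hc ha' hb' (fun e => x.2 (e ▸ hx)) _ _ hpx hx (hp1 x)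

theorem colouring {B : Finset (Finset α)} (hB : IsE B) {Z : Finset α} (hZ : Z ∈ B) {a1 a2 a3 : α}
    (h1 : a1 ∈ Z) (h2 : a2 ∈ Z) (h3 : a3 ∈ Z) (h12 : a1 ≠ a2) (h13 : a1 ≠ a3)
    (h4 : ∀ c ∈ B, a1 ∈ c → c ≠ Z → c.card = 4) :
    ∃ col : α → Bool, ∀ c ∈ B, a1 ∈ c → (a2 ∈ c ∨ a3 ∈ c) → ∀ x ∈ c, ∀ y ∈ c, x ∉ Z → y ∉ Z →
      x ≠ y → col x ≠ col y := by
  obtain ⟨p, p1, p2, p3⟩ := partner hB hZ h1 h2 h12 h4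
  obtain ⟨q, q1, q2, q3⟩ := partner hB hZ h1 h3 h13 h4
  obtain ⟨col, hcol⟩ := two_col p q p1 q1 p2 q2
  refine ⟨fun x => if h : x ∉ Z then col ⟨x, h⟩ else false, ?_⟩
  intro c hc hc1 hc2 x hx y hy hxZ hyZ hxy
  have hcZ : c ≠ Z := fun e => hxZ (e ▸ hx)
  have hne : (⟨x, hxZ⟩ : {x // x ∉ Z}) ≠ ⟨y, hyZ⟩ := fun e => hxy (congrArg Subtype.val e)
  simp only [hxZ, hyZ, not_false_eq_true, dif_pos]
  rcases hc2 with hc2 | hc2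
  · have := p3 c hc hc1 hc2 hcZ ⟨x, hxZ⟩ ⟨y, hyZ⟩ hx hy hne
    rw [← this]
    exact (hcol _).1.symm
  · have := q3 c hc hc1 hc2 hcZ ⟨x, hxZ⟩ ⟨y, hyZ⟩ hx hy hne
    rw [← this]
    exact (hcol _).2.symm

end Colouring


section W3

/-- pairs in a cell which occur together with a point of another cell have colour `k` -/
def crB (k : Bool) (l : List ℕ) : Bool :=
  l.all fun x => l.all fun y => l.all fun z =>
    Nat.beq x y || !Nat.beq (x / 6) (y / 6) || Nat.ble 24 x || Nat.beq (z / 6) (x / 6) ||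
      Nat.ble 24 z || (hexB (x % 6) (y % 6) == k)

/-- the test for the two mixed ingredients -/
def tK (k : Bool) (l : List ℕ) : Bool :=
  l4B l && crB k l && Nat.ble (l.filter fun y => Nat.ble 24 y).length 2

/-- at most two points in each position -/
def tN (l : List ℕ) : Bool := n3B l && l4B l

/-- restriction of a block to the stem and the position `i` -/
def rsB (i : ℕ) (l : List ℕ) : List ℕ := l.filter fun m => Nat.ble 24 m || Nat.beq (m / 6) i

/-- the restrictions of two lists of blocks have no triple in common -/
def dsB (i : ℕ) (D D' : List (List ℕ)) : Bool :=
  Nat.beq (msk (D.flatMap fun l => trc (rsB i l)) &&& msk (D'.flatMap fun l => trc (rsB i l))) 0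

theorem inc_filter {l : List ℕ} (h : inc l = true) (p : ℕ → Bool) : inc (l.filter p) = true := by
  induction l with
  | nil => simpa using h
  | cons a t ih =>
    rw [inc_cons] at h
    rw [List.filter_cons]
    split_ifs
    · rw [inc_cons]
      exact ⟨fun b hb => h.1 b (List.mem_filter.1 hb).1, ih h.2⟩
    · exact ih h.2

theorem dsB_sound {i : ℕ} {D D' : List (List ℕ)} (h : dsB i D D' = true) {l l' : List ℕ}
    (hl : l ∈ D) (hl' : l' ∈ D') (hi : inc l = true) (hi' : inc l' = true) :
    ((rsB i l).toFinset ∩ (rsB i l').toFinset).card ≤ 2 := by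
  by_contra hcon
  obtain ⟨c, hc, hc'⟩ := common_trc (inc_filter hi _) (inc_filter hi' _)
    (show 2 < ((rsB i l).toFinset ∩ (rsB i l').toFinset).card by omega)
  simp only [dsB, Nat.beq_eq] at h
  have h1 := testBit_msk (List.mem_flatMap.2 ⟨l, hl, hc⟩ : c ∈ D.flatMap fun l => trc (rsB i l))
  have h2 := testBit_msk (List.mem_flatMap.2 ⟨l', hl', hc'⟩ : c ∈ D'.flatMap fun l => trc (rsB i l))
  have h3 := congrArg (fun n => Nat.testBit n c) h
  simp only [Nat.testBit_and, h1, h2] at h3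
  simp at h3

variable {α : Type*} [DecidableEq α]

/-- the code of a point -/
def cod (a : α) (col : α → Bool) (x : α × ℕ) : ℕ :=
  if x.1 = a then 24 + x.2 else 6 * (if col x.1 then 1 else 0) + x.2

/-- the property of the blocks of the mixed ingredients -/
structure MP (a e : α) (k : Bool) (col : α → Bool) (D : List (List ℕ)) (c : Finset α)
    (β : Finset (α × ℕ)) : Prop where
  ha : a ∈ c
  he : e ∈ c
  hole : (β.filter fun x => x.1 = a).card ≤ 2
  cr : ∀ x ∈ β, ∀ y ∈ β, ∀ z ∈ β, x ≠ y → x.1 = y.1 → x.1 ≠ a → z.1 ≠ x.1 → z.1 ≠ a →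
    hexB x.2 y.2 = k
  cd : ∃ l ∈ D, inc l = true ∧ ∀ x ∈ β, cod a col x ∈ l

variable {c c' : Finset α} {β β' : Finset (α × ℕ)}

theorem cross_hole (hβ : ∀ x ∈ β, x.1 ∈ c) (hβ' : ∀ x ∈ β', x.1 ∈ c') (hc : (c ∩ c').card ≤ 2)
    {a e : α} (hae : a ≠ e) (ha : a ∈ c) (he : e ∈ c) (ha' : a ∈ c') (he' : e ∈ c')
    (hn : ∀ x ∈ β, x.1 ≠ e) (hh : (β.filter fun x => x.1 = a).card ≤ 2) : (β ∩ β').card ≤ 2 := by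
  have e2 : ({a, e} : Finset α) = c ∩ c' := by
    apply Finset.eq_of_subset_of_card_le
    · intro x hx
      simp only [Finset.mem_insert, Finset.mem_singleton] at hx
      rcases hx with rfl | rfl
      · exact Finset.mem_inter.2 ⟨ha, ha'⟩
      · exact Finset.mem_inter.2 ⟨he, he'⟩
    · rw [Finset.card_pair hae]; exact hc
  refine le_trans (Finset.card_le_card fun x hx => ?_) hh
  have := image_inter hβ hβ' (Finset.mem_image_of_mem Prod.fst hx)
  rw [← e2] at this
  simp only [Finset.mem_insert, Finset.mem_singleton] at this
  have hxβ := (Finset.mem_inter.1 hx).1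
  exact Finset.mem_filter.2 ⟨hxβ, this.resolve_right (hn x hxβ)⟩

theorem cross_ml (hβ : ∀ x ∈ β, x.1 ∈ c) (hβ' : ∀ x ∈ β', x.1 ∈ c') (hc : (c ∩ c').card ≤ 2)
    {a e : α} {k k' : Bool} {col : α → Bool} {D : List (List ℕ)} (hk : k ≠ k')
    (h : MP a e k col D c β) (ha' : a ∉ c') (h3 : N3 β') (hcol : Col k' β') :
    (β ∩ β').card ≤ 2 := by
  by_contra hcon
  have h1 := Finset.card_le_card (image_inter hβ hβ')
  obtain ⟨x, hx, y, hy, hne, e⟩ := Finset.exists_ne_map_eq_of_card_lt_of_maps_to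
    (s := β ∩ β') (t := (β ∩ β').image Prod.fst) (f := Prod.fst) (by omega)
    (fun x hx => Finset.mem_image_of_mem _ hx)
  have hz : ∃ z ∈ β ∩ β', z.1 ≠ x.1 := by
    by_contra hno
    push Not at hno
    apply hcon
    refine le_trans (Finset.card_le_card fun z hz => ?_) (h3 x.1)
    exact Finset.mem_filter.2 ⟨(Finset.mem_inter.1 hz).2, hno z hz⟩
  obtain ⟨z, hz, hzx⟩ := hz
  rw [Finset.mem_inter] at hx hy hz
  have hxa : x.1 ≠ a := fun e => ha' (e ▸ hβ' x hx.2)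
  have hza : z.1 ≠ a := fun e => ha' (e ▸ hβ' z hz.2)
  exact hk ((h.cr x hx.1 y hy.1 z hz.1 hne e hxa hzx hza).symm.trans (hcol x hx.2 y hy.2 hne e))

theorem cross_mm (hβ : ∀ x ∈ β, x.1 ∈ c ∧ x.2 < 6) (hβ' : ∀ x ∈ β', x.1 ∈ c')
    (hc : (c ∩ c').card ≤ 2)
    {a e e' : α} {k k' : Bool} {col : α → Bool} {D D' : List (List ℕ)}
    (h : MP a e k col D c β) (h' : MP a e' k' col D' c' β')
    (hD : ∀ i < 2, dsB i D D' = true) : (β ∩ β').card ≤ 2 := by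
  obtain ⟨l, hl, hi, hcd⟩ := h.cd
  obtain ⟨l', hl', hi', hcd'⟩ := h'.cd
  have hain : a ∈ c ∩ c' := Finset.mem_inter.2 ⟨h.ha, h'.ha⟩
  have h1 : ((c ∩ c').erase a).card ≤ 1 := by
    rw [Finset.card_erase_of_mem hain]; omega
  have hA : ∀ x ∈ β ∩ β', ∀ y ∈ β ∩ β', x.1 ≠ a → y.1 ≠ a → x.1 = y.1 := by
    intro x hx y hy hxa hya
    have hx' := image_inter (fun x hx => (hβ x hx).1) hβ' (Finset.mem_image_of_mem Prod.fst hx)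
    have hy' := image_inter (fun x hx => (hβ x hx).1) hβ' (Finset.mem_image_of_mem Prod.fst hy)
    exact Finset.card_le_one.1 h1 _ (Finset.mem_erase.2 ⟨hxa, hx'⟩) _
      (Finset.mem_erase.2 ⟨hya, hy'⟩)
  obtain ⟨i, hi2, hcol⟩ : ∃ i < 2, ∀ x ∈ β ∩ β', x.1 ≠ a → (if col x.1 then 1 else 0) = i := by
    by_cases hex : ∃ x ∈ β ∩ β', x.1 ≠ a
    · obtain ⟨x, hx, hxa⟩ := hex
      refine ⟨if col x.1 then 1 else 0, by split_ifs <;> omega, ?_⟩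
      intro y hy hya
      rw [hA y hy x hx hya hxa]
    · exact ⟨0, by omega, fun x hx hxa => absurd ⟨x, hx, hxa⟩ hex⟩
  have hds := dsB_sound (hD i hi2) hl hl' hi hi'
  refine le_trans ?_ hds
  have hinj : ((β ∩ β').image (cod a col)).card = (β ∩ β').card := by
    apply Finset.card_image_of_injOn
    intro x hx y hy e
    have hx6 := (hβ x (Finset.mem_inter.1 hx).1).2
    have hy6 := (hβ y (Finset.mem_inter.1 hy).1).2
    by_cases hxa : x.1 = a <;> by_cases hya : y.1 = a
    · simp only [cod, hxa, hya, if_true] at e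
      exact Prod.ext (hxa.trans hya.symm) (by omega)
    · simp only [cod, hxa, hya, if_true, if_false, hcol y hy hya] at e
      omega
    · simp only [cod, hxa, hya, if_true, if_false, hcol x hx hxa] at e
      omega
    · simp only [cod, hxa, hya, if_false, hcol x hx hxa, hcol y hy hya] at e
      exact Prod.ext (hA x hx y hy hxa hya) (by omega)
  rw [← hinj]
  apply Finset.card_le_card
  intro m hm
  obtain ⟨x, hx, rfl⟩ := Finset.mem_image.1 hm
  have hp : (Nat.ble 24 (cod a col x) || Nat.beq (cod a col x / 6) i) = true := by
    simp only [Bool.or_eq_true, Nat.ble_eq, Nat.beq_eq]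
    by_cases hxa : x.1 = a
    · left; simp [cod, hxa]
    · right
      have hx6 := (hβ x (Finset.mem_inter.1 hx).1).2
      simp only [cod, hxa, if_false, hcol x hx hxa]
      omega
  rw [Finset.mem_inter] at hx
  exact Finset.mem_inter.2 ⟨List.mem_toFinset.2 (List.mem_filter.2 ⟨hcd x hx.1, hp⟩),
    List.mem_toFinset.2 (List.mem_filter.2 ⟨hcd' x hx.2, hp⟩)⟩

/-- local condition in the second construction -/
def Loc3 (a1 a2 a3 : α) (Z : Finset α) (col : α → Bool) (D D' : List (List ℕ)) (c : Finset α)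
    (β : Finset (α × ℕ)) : Prop :=
  TrP β ∨ c = Z ∨ MP a1 a2 true col D c β ∨ MP a1 a3 false col D' c β ∨
    (a2 ∈ c ∧ a3 ∈ c ∧ N3 β) ∨ (a2 ∈ c ∧ a1 ∉ c ∧ N3 β ∧ Col true β) ∨
    (a3 ∈ c ∧ a1 ∉ c ∧ N3 β ∧ Col false β)

/-- blocks from different ingredients meet in at most two points -/
theorem Loc3.cross {a1 a2 a3 : α} {Z : Finset α} {col : α → Bool} {D D' : List (List ℕ)}
    (h12 : a1 ≠ a2) (h13 : a1 ≠ a3) (hZ1 : a1 ∈ Z) (hZ2 : a2 ∈ Z) (hZ3 : a3 ∈ Z)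
    (hD : ∀ i < 2, dsB i D D' = true) (hne : c ≠ c')
    (hβ : ∀ x ∈ β, x.1 ∈ c ∧ x.2 < 6 ∧ x.1 ≠ a2 ∧ x.1 ≠ a3)
    (hβ' : ∀ x ∈ β', x.1 ∈ c' ∧ x.2 < 6 ∧ x.1 ≠ a2 ∧ x.1 ≠ a3) (hc : (c ∩ c').card ≤ 2)
    (h : Loc3 a1 a2 a3 Z col D D' c β) (h' : Loc3 a1 a2 a3 Z col D D' c' β') :
    (β ∩ β').card ≤ 2 := by
  have hc' : (c' ∩ c).card ≤ 2 := by rwa [Finset.inter_comm]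
  have b1 : ∀ x ∈ β, x.1 ∈ c := fun x hx => (hβ x hx).1
  have b2 : ∀ x ∈ β, x.1 ≠ a2 := fun x hx => (hβ x hx).2.2.1
  have b3 : ∀ x ∈ β, x.1 ≠ a3 := fun x hx => (hβ x hx).2.2.2
  have b6 : ∀ x ∈ β, x.1 ∈ c ∧ x.2 < 6 := fun x hx => ⟨(hβ x hx).1, (hβ x hx).2.1⟩
  have b1' : ∀ x ∈ β', x.1 ∈ c' := fun x hx => (hβ' x hx).1
  have b2' : ∀ x ∈ β', x.1 ≠ a2 := fun x hx => (hβ' x hx).2.2.1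
  have b3' : ∀ x ∈ β', x.1 ≠ a3 := fun x hx => (hβ' x hx).2.2.2
  have b6' : ∀ x ∈ β', x.1 ∈ c' ∧ x.2 < 6 := fun x hx => ⟨(hβ' x hx).1, (hβ' x hx).2.1⟩
  have sym : (β' ∩ β).card ≤ 2 → (β ∩ β').card ≤ 2 := by
    intro h; rwa [Finset.inter_comm]
  have n2 : a2 ∈ c → a2 ∈ c' → N3 β → (β ∩ β').card ≤ 2 :=
    fun h h' hn => cross_n3 b1 b1' hc h h' b2 hn
  have n3 : a3 ∈ c → a3 ∈ c' → N3 β → (β ∩ β').card ≤ 2 :=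
    fun h h' hn => cross_n3 b1 b1' hc h h' b3 hn
  have n2' : a2 ∈ c → a2 ∈ c' → N3 β' → (β ∩ β').card ≤ 2 :=
    fun h h' hn => sym (cross_n3 b1' b1 hc' h' h b2' hn)
  have n3' : a3 ∈ c → a3 ∈ c' → N3 β' → (β ∩ β').card ≤ 2 :=
    fun h h' hn => sym (cross_n3 b1' b1 hc' h' h b3' hn)
  rcases h with h | rfl | h | h | ⟨h2, h3, h⟩ | ⟨h2, h1, h, hk⟩ | ⟨h3, h1, h, hk⟩
  · exact cross_tr b1 b1' hc h
  · rcases h' with h' | e | h' | h' | ⟨h2', h3', h'⟩ | ⟨h2', h1', h', hk'⟩ | ⟨h3', h1', h', hk'⟩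
    · exact sym (cross_tr b1' b1 hc' h')
    · exact absurd e.symm hne
    · exact sym (cross_hole b1' b1 hc' h12 h'.ha h'.he hZ1 hZ2 b2' h'.hole)
    · exact sym (cross_hole b1' b1 hc' h13 h'.ha h'.he hZ1 hZ3 b3' h'.hole)
    · exact n2' hZ2 h2' h'
    · exact n2' hZ2 h2' h'
    · exact n3' hZ3 h3' h'
  · rcases h' with h' | rfl | h' | h' | ⟨h2', h3', h'⟩ | ⟨h2', h1', h', hk'⟩ | ⟨h3', h1', h', hk'⟩
    · exact sym (cross_tr b1' b1 hc' h')
    · exact cross_hole b1 b1' hc h12 h.ha h.he hZ1 hZ2 b2 h.hole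
    · exact cross_hole b1 b1' hc h12 h.ha h.he h'.ha h'.he b2 h.hole
    · exact cross_mm b6 b1' hc h h' hD
    · exact n2' h.he h2' h'
    · exact n2' h.he h2' h'
    · exact cross_ml b1 b1' hc (by simp) h h1' h' hk'
  · rcases h' with h' | rfl | h' | h' | ⟨h2', h3', h'⟩ | ⟨h2', h1', h', hk'⟩ | ⟨h3', h1', h', hk'⟩
    · exact sym (cross_tr b1' b1 hc' h')
    · exact cross_hole b1 b1' hc h13 h.ha h.he hZ1 hZ3 b3 h.hole
    · exact sym (cross_mm b6' b1 hc' h' h hD)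
    · exact cross_hole b1 b1' hc h13 h.ha h.he h'.ha h'.he b3 h.hole
    · exact n3' h.he h3' h'
    · exact cross_ml b1 b1' hc (by simp) h h1' h' hk'
    · exact n3' h.he h3' h'
  · rcases h' with h' | rfl | h' | h' | ⟨h2', h3', h'⟩ | ⟨h2', h1', h', hk'⟩ | ⟨h3', h1', h', hk'⟩
    · exact sym (cross_tr b1' b1 hc' h')
    · exact n2 h2 hZ2 h
    · exact n2 h2 h'.he h
    · exact n3 h3 h'.he h
    · exact n2 h2 h2' h
    · exact n2 h2 h2' h
    · exact n3 h3 h3' h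
  · rcases h' with h' | rfl | h' | h' | ⟨h2', h3', h'⟩ | ⟨h2', h1', h', hk'⟩ | ⟨h3', h1', h', hk'⟩
    · exact sym (cross_tr b1' b1 hc' h')
    · exact n2 h2 hZ2 h
    · exact n2 h2 h'.he h
    · exact sym (cross_ml b1' b1 hc' (by simp) h' h1 h hk)
    · exact n2 h2 h2' h
    · exact n2 h2 h2' h
    · exact cross_col b1 b1' hc (by simp) hk hk'
  · rcases h' with h' | rfl | h' | h' | ⟨h2', h3', h'⟩ | ⟨h2', h1', h', hk'⟩ | ⟨h3', h1', h', hk'⟩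
    · exact sym (cross_tr b1' b1 hc' h')
    · exact n3 h3 hZ3 h
    · exact sym (cross_ml b1' b1 hc' (by simp) h' h1 h hk)
    · exact n3 h3 h'.he h
    · exact n3 h3 h3' h
    · exact cross_col b1 b1' hc (by simp) hk hk'
    · exact n3 h3 h3' h

end W3


section W3b

variable {α : Type*} [DecidableEq α]

theorem plx {w : List ℕ} {D : List (List ℕ)} {t : List ℕ → Bool} {n4 n6 : ℕ}
    (h : ingB w D t n4 n6 = true) (c : Finset α) (Q0 Q1 : Finset ℕ) (g0 : ℕ → α) (wt : α → ℕ)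
    (h0 : ∀ i ∈ Q0, ∀ j ∈ Q0, g0 i = g0 j → i = j) (h0c : ∀ i ∈ Q0, g0 i ∈ c)
    (hd : Disjoint Q0 Q1) (hc : Q0.card + Q1.card ≤ c.card)
    (hw : ∀ j, 0 < w.getD j 0 → j ∈ Q0 ∪ Q1)
    (hw0 : ∀ j ∈ Q0, w.getD j 0 ≤ wt (g0 j)) (hw6 : ∀ j ∈ Q1, w.getD j 0 ≤ 6)
    (h6 : ∀ p ∈ c, (∀ j ∈ Q0, g0 j ≠ p) → wt p = 6) :
    ∃ (f : ℕ → α) (F : Finset (Finset (α × ℕ))), (∀ j ∈ Q0, f j = g0 j) ∧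
      (∀ i ∈ Q0 ∪ Q1, ∀ j ∈ Q0 ∪ Q1, f i = f j → i = j) ∧
      Pk F ∧ S46 F ∧ num 4 F = n4 ∧ num 6 F = n6 ∧
      (∀ β ∈ F, ∀ x ∈ β, x.1 ∈ c ∧ x.2 < wt x.1) ∧
      ∀ β ∈ F, ∃ l ∈ D, t l = true ∧ inc l = true ∧ β = l.toFinset.image (plc f) ∧
        β.card = l.length ∧ ∀ m ∈ l, m / 6 ∈ Q0 ∪ Q1 := by
  obtain ⟨f, hf0, hfc, hf⟩ := posext c Q0 Q1 g0 h0 h0c hd hc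
  obtain ⟨F, h1, h2, h3, h4, h5, h6, h7⟩ := place h f (Q0 ∪ Q1) c wt hf hw
    (fun j hj _ => hfc j hj) (by
      intro j hj
      by_cases hj0 : j ∈ Q0
      · rw [hf0 j hj0]; exact hw0 j hj0
      · have hj1 := (Finset.mem_union.1 hj).resolve_left hj0
        rw [h6 (f j) (hfc j hj)]
        · exact hw6 j hj1
        · intro i hi e
          have := hf i (Finset.mem_union_left _ hi) j hj ((hf0 i hi).trans e)
          exact hj0 (this ▸ hi))
  exact ⟨f, F, hf0, hf, h1, h2, h4, h5, h6, h7⟩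

theorem sp_M {D : List (List ℕ)} {k : Bool} {n4 : ℕ}
    (h : ingB [6, 6, 0, 0, 5] D (tK k) n4 0 = true) {c : Finset α} {a e A A' : α} {wt : α → ℕ}
    {col : α → Bool} (ha : a ∈ c) (he : e ∈ c) (hA : A ∈ c) (hA' : A' ∈ c) (h1 : A ≠ a)
    (h2 : A' ≠ a) (hcA : col A = false) (hcA' : col A' = true) (hwa : wt a = 5) (hwA : wt A = 6)
    (hwA' : wt A' = 6) :
    ∃ F : Finset (Finset (α × ℕ)), Pk F ∧ S46 F ∧ num 4 F = n4 ∧ num 6 F = 0 ∧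
      (∀ β ∈ F, ∀ x ∈ β, x.1 ∈ c ∧ x.2 < wt x.1) ∧ ∀ β ∈ F, MP a e k col D c β := by
  have hAA : A ≠ A' := by
    intro e
    rw [e, hcA'] at hcA
    exact absurd hcA (by simp)
  set f : ℕ → α := fun j => if j = 4 then a else if j = 0 then A else A' with hfdef
  have f0 : f 0 = A := by simp [hfdef]
  have f1 : f 1 = A' := by simp [hfdef]
  have f4 : f 4 = a := by simp [hfdef]
  have hf : ∀ i ∈ ({0, 1, 4} : Finset ℕ), ∀ j ∈ ({0, 1, 4} : Finset ℕ), f i = f j → i = j := by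
    intro i hi j hj e
    simp only [Finset.mem_insert, Finset.mem_singleton] at hi hj
    rcases hi with rfl | rfl | rfl <;> rcases hj with rfl | rfl | rfl <;>
      simp only [f0, f1, f4] at e <;> first | rfl | exact absurd e ‹_› | exact absurd e.symm ‹_›
  obtain ⟨F, k1, k2, k3, k4, k5, k6, k7⟩ := place h f {0, 1, 4} c wt hf
    (by intro j; rcases j with _ | _ | _ | _ | _ | j <;> simp)
    (by
      intro j hj _
      simp only [Finset.mem_insert, Finset.mem_singleton] at hj
      rcases hj with rfl | rfl | rfl <;> simp only [f0, f1, f4] <;> assumption)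
    (by
      intro j hj
      simp only [Finset.mem_insert, Finset.mem_singleton] at hj
      rcases hj with rfl | rfl | rfl <;> simp [f0, f1, f4, hwa, hwA, hwA'])
  refine ⟨F, k1, k2, k4, k5, k6, ?_⟩
  intro β hβ
  obtain ⟨l, hl, ht, hi, rfl, hcard, hm⟩ := k7 β hβ
  simp only [tK, Bool.and_eq_true, Nat.ble_eq] at ht
  have hpos : ∀ m ∈ l, f (m / 6) = a → 24 ≤ m := by
    intro m hml e
    have := hf _ (hm m hml) 4 (by simp) (e.trans f4.symm)
    omega
  have hpos' : ∀ m ∈ l, f (m / 6) ≠ a → m < 24 := by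
    intro m hml e
    have := hm m hml
    simp only [Finset.mem_insert, Finset.mem_singleton] at this
    rcases this with h | h | h
    · omega
    · omega
    · exact absurd (by rw [h, f4]) e
  refine ⟨ha, he, ?_, ?_, l, hl, hi, ?_⟩
  · apply filt_sound hf hm _ (fun y => Nat.ble 24 y) _ ht.2
    intro m hml hmm
    simpa using hpos m hml hmm
  · intro x hx y hy z hz hne hxy hxa hzx hza
    obtain ⟨m, hml, rfl⟩ := mem_plc.1 hx
    obtain ⟨m', hml', rfl⟩ := mem_plc.1 hy
    obtain ⟨m'', hml'', rfl⟩ := mem_plc.1 hz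
    have hcr := ht.1.2
    simp only [crB, List.all_eq_true, Bool.or_eq_true, Nat.beq_eq, Bool.not_eq_true',
      Bool.eq_false_iff, ne_eq, Nat.ble_eq, beq_iff_eq] at hcr
    have e1 := hf _ (hm m hml) _ (hm m' hml') hxy
    have l1 := hpos' m hml hxa
    have l2 := hpos' m'' hml'' hza
    rcases hcr m hml m' hml' m'' hml'' with ((((h | h) | h) | h) | h) | h
    · exact absurd (by rw [h]) hne
    · exact absurd e1 h
    · omega
    · exact absurd (show f (m'' / 6) = f (m / 6) by rw [h]) hzx
    · omega
    · exact h
  · intro x hx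
    obtain ⟨m, hml, rfl⟩ := mem_plc.1 hx
    have : cod a col (plc f m) = m := by
      have hmm := hm m hml
      simp only [Finset.mem_insert, Finset.mem_singleton] at hmm
      rcases hmm with h | h | h
      · simp only [cod, plc, h, f0, h1, hcA, if_false, Bool.false_eq_true]; omega
      · simp only [cod, plc, h, f1, h2, hcA', if_false, if_true]; omega
      · simp only [cod, plc, h, f4, if_true]; omega
    rwa [this]

/-- weights -/
def wt3 (a1 a2 a3 p : α) : ℕ := if p = a1 then 5 else if p = a2 ∨ p = a3 then 0 else 6

/-- the properties of the family replacing `c` in the second construction -/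
structure Sp3 (a1 a2 a3 : α) (Z : Finset α) (col : α → Bool) (D D' : List (List ℕ)) (c : Finset α)
    (F : Finset (Finset (α × ℕ))) : Prop where
  pk : Pk F
  s46 : S46 F
  pts : ∀ β ∈ F, ∀ x ∈ β, x.1 ∈ c ∧ x.2 < wt3 a1 a2 a3 x.1
  loc : ∀ β ∈ F, Loc3 a1 a2 a3 Z col D D' c β

/-- the ingredients of the second construction -/
structure WI3 (D D' : List (List ℕ)) : Prop where
  h4 : ∃ D, ingB [6, 6, 6, 6] D tH 216 0 = true
  h6 : ∃ D, ingB [6, 6, 6, 6, 6, 6] D tH 1080 0 = true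
  td : ∃ D, ingB [6, 6, 6, 0, 5] D tH 180 0 = true
  l2 : ∃ D, ingB [6, 6, 6, 0, 0, 0] D (tL 5 true) 108 0 = true
  l3 : ∃ D, ingB [6, 6, 6, 0, 0] D (tL 4 false) 135 0 = true
  k : ingB [6, 6, 0, 0, 5] D (tK true) 105 0 = true
  k' : ingB [6, 6, 0, 0, 5] D' (tK false) 93 0 = true
  t4 : ∃ D, ingB [6, 6] D tN 45 0 = true
  z4 : ∃ D, ingB [6, 0, 0, 0, 5] D tO 35 0 = true
  z6 : ∃ D, ingB [6, 6, 6, 0, 5] D tO 419 0 = true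
  ds : ∀ i < 2, dsB i D D' = true

/-- the number of blocks, doubled -/
def cn3 (a1 a2 a3 : α) (c : Finset α) : ℤ :=
  108 * (c.card.choose 3 : ℕ) - 24 * (if {a1} ⊆ c then (c.card - 1).choose 2 else 0 : ℕ)
    - 72 * (if {a2} ⊆ c then (c.card - 1).choose 2 else 0 : ℕ)
    - 54 * (if {a3} ⊆ c then (c.card - 1).choose 2 else 0 : ℕ)
    + 33 * (if {a1, a2} ⊆ c then (c.card - 2).choose 1 else 0 : ℕ)
    - 6 * (if {a1, a3} ⊆ c then (c.card - 2).choose 1 else 0 : ℕ)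
    + 18 * (if {a2, a3} ⊆ c then (c.card - 2).choose 1 else 0 : ℕ)
    - 2 * (if {a1, a2, a3} ⊆ c then (c.card - 3).choose 0 else 0 : ℕ)

theorem WI3.fams {D D' : List (List ℕ)} (h : WI3 D D') {B : Finset (Finset α)} (hs : S46 B)
    (hpk : Pk B) {Z : Finset α} (hZ : Z ∈ B) {a1 a2 a3 : α} (hZ1 : a1 ∈ Z) (hZ2 : a2 ∈ Z)
    (hZ3 : a3 ∈ Z) (h12 : a1 ≠ a2) (h13 : a1 ≠ a3) (h23 : a2 ≠ a3)
    (h6 : ∀ c ∈ B, c.card = 6 → c ≠ Z → a1 ∉ c ∧ a2 ∉ c ∧ a3 ∉ c) {col : α → Bool}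
    (hcol : ∀ c ∈ B, a1 ∈ c → (a2 ∈ c ∨ a3 ∈ c) → ∀ x ∈ c, ∀ y ∈ c, x ∉ Z → y ∉ Z →
      x ≠ y → col x ≠ col y) {c : Finset α} (hc : c ∈ B) :
    ∃ F, Sp3 a1 a2 a3 Z col D D' c F ∧ (2 * num 4 F : ℤ) = cn3 a1 a2 a3 c ∧ num 6 F = 0 := by
  have w1 : wt3 a1 a2 a3 a1 = 5 := by simp [wt3]
  have w2 : wt3 a1 a2 a3 a2 = 0 := by simp [wt3, h12.symm]
  have w3 : wt3 a1 a2 a3 a3 = 0 := by simp [wt3, h13.symm]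
  have w6 : ∀ p, p ≠ a1 → p ≠ a2 → p ≠ a3 → wt3 a1 a2 a3 p = 6 := by
    intro p p1 p2 p3
    simp [wt3, p1, p2, p3]
  have hnum : ∀ (F : Finset (Finset (α × ℕ))) (n : ℕ), num 4 F = n →
      (2 * n : ℤ) = cn3 a1 a2 a3 c → (2 * num 4 F : ℤ) = cn3 a1 a2 a3 c := by
    intro F n e e'; rw [e, e']
  have hmix : ∀ (D0 : List (List ℕ)) (e : α) (k : Bool) (n : ℕ),
      ingB [6, 6, 0, 0, 5] D0 (tK k) n 0 = true → c ≠ Z → c.card = 4 → a1 ∈ c → e ∈ c → e ≠ a1 →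
      e ∈ Z → (a2 ∈ c ∨ a3 ∈ c) →
      ∃ F : Finset (Finset (α × ℕ)), Pk F ∧ S46 F ∧ num 4 F = n ∧ num 6 F = 0 ∧
      (∀ β ∈ F, ∀ x ∈ β, x.1 ∈ c ∧ x.2 < wt3 a1 a2 a3 x.1) ∧ ∀ β ∈ F, MP a1 e k col D0 c β := by
    intro D0 e k n hD0 hcZ hc4 ha1 hec hea heZ ha23
    have hcard : (c \ {a1, e}).card = 2 := by
      rw [Finset.card_sdiff_of_subset (by simp [Finset.insert_subset_iff, ha1, hec]), hc4,
        Finset.card_pair hea.symm]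
    obtain ⟨A, A', hAA, hE⟩ := Finset.card_eq_two.1 hcard
    have hmem : ∀ x, x = A ∨ x = A' → x ∈ c ∧ x ≠ a1 ∧ x ∉ Z := by
      intro x hx
      have hx' : x ∈ c \ {a1, e} := by rw [hE]; simpa using hx
      simp only [Finset.mem_sdiff, Finset.mem_insert, Finset.mem_singleton, not_or] at hx'
      refine ⟨hx'.1, hx'.2.1, fun hxZ => hcZ ?_⟩
      refine hpk.eq_of_three (T := {a1, e, x}) (Finset.card_eq_three.2
        ⟨a1, e, x, hea.symm, Ne.symm hx'.2.1, Ne.symm hx'.2.2, rfl⟩) hc hZ ?_ ?_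
      · simp [Finset.insert_subset_iff, ha1, hec, hx'.1]
      · simp [Finset.insert_subset_iff, hZ1, heZ, hxZ]
    have hw : ∀ x, x ∉ Z → wt3 a1 a2 a3 x = 6 := fun x hx =>
      w6 x (fun e => hx (e ▸ hZ1)) (fun e => hx (e ▸ hZ2)) (fun e => hx (e ▸ hZ3))
    obtain ⟨m1, m2, m3⟩ := hmem A (Or.inl rfl)
    obtain ⟨m1', m2', m3'⟩ := hmem A' (Or.inr rfl)
    have hne := hcol c hc ha1 ha23 A m1 A' m1' m3 m3' hAA
    cases hcA : col A
    · cases hcA' : col A'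
      · rw [hcA, hcA'] at hne; exact absurd rfl hne
      · exact sp_M hD0 ha1 hec m1 m1' m2 m2' hcA hcA' w1 (hw A m3) (hw A' m3')
    · cases hcA' : col A'
      · exact sp_M hD0 ha1 hec m1' m1 m2' m2 hcA' hcA w1 (hw A' m3') (hw A m3)
      · rw [hcA, hcA'] at hne; exact absurd rfl hne
  by_cases hcZ : c = Z
  · subst hcZ
    have hsub : ({a2, a3} : Finset α) ⊆ c := by simp [Finset.insert_subset_iff, hZ2, hZ3]
    have hcd : (c \ {a2, a3}).card = c.card - 2 := by
      rw [Finset.card_sdiff_of_subset hsub, Finset.card_pair h23]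
    have hp : ∀ p ∈ c \ {a2, a3}, (∀ j ∈ ({4} : Finset ℕ), a1 ≠ p) → wt3 a1 a2 a3 p = 6 := by
      intro p hp hj
      simp only [Finset.mem_sdiff, Finset.mem_insert, Finset.mem_singleton, not_or] at hp
      exact w6 p (hj 4 (by simp)).symm hp.2.1 hp.2.2
    rcases hs c hc with h4 | h4
    · obtain ⟨E, hE⟩ := h.z4
      obtain ⟨f, F, -, -, k1, k2, k3, k4, k5, -⟩ := plx hE (c \ {a2, a3}) {4} {0} (fun _ => a1)
        (wt3 a1 a2 a3) (by simp) (by simp [hZ1, h12, h13]) (by simp) (by simp [hcd, h4])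
        (by intro j; rcases j with _ | _ | _ | _ | _ | j <;> simp) (by simp [w1]) (by simp) hp
      refine ⟨F, ⟨k1, k2, fun β hβ x hx => ⟨(Finset.mem_sdiff.1 (k5 β hβ x hx).1).1,
        (k5 β hβ x hx).2⟩, fun β hβ => Or.inr (Or.inl rfl)⟩, hnum F _ k3 ?_, k4⟩
      simp [cn3, Finset.insert_subset_iff, hZ1, hZ2, hZ3, h4]
    · obtain ⟨E, hE⟩ := h.z6
      obtain ⟨f, F, -, -, k1, k2, k3, k4, k5, -⟩ := plx hE (c \ {a2, a3}) {4} {0, 1, 2}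
        (fun _ => a1)
        (wt3 a1 a2 a3) (by simp) (by simp [hZ1, h12, h13]) (by simp) (by simp [hcd, h4])
        (by intro j; rcases j with _ | _ | _ | _ | _ | j <;> simp) (by simp [w1]) (by simp) hp
      refine ⟨F, ⟨k1, k2, fun β hβ x hx => ⟨(Finset.mem_sdiff.1 (k5 β hβ x hx).1).1,
        (k5 β hβ x hx).2⟩, fun β hβ => Or.inr (Or.inl rfl)⟩, hnum F _ k3 ?_, k4⟩
      simp [cn3, Finset.insert_subset_iff, hZ1, hZ2, hZ3, h4, Nat.choose]
  have hnot : ¬ (a1 ∈ c ∧ a2 ∈ c ∧ a3 ∈ c) := by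
    rintro ⟨k1, k2, k3⟩
    refine hcZ (hpk.eq_of_three (T := {a1, a2, a3}) (Finset.card_eq_three.2
      ⟨a1, a2, a3, h12, h13, h23, rfl⟩) hc hZ ?_ ?_)
    · simp [Finset.insert_subset_iff, k1, k2, k3]
    · simp [Finset.insert_subset_iff, hZ1, hZ2, hZ3]
  rcases hs c hc with h4 | h4
  · by_cases m1 : a1 ∈ c <;> by_cases m2 : a2 ∈ c <;> by_cases m3 : a3 ∈ c
    · exact absurd ⟨m1, m2, m3⟩ hnot
    · obtain ⟨F, k1, k2, k3, k4, k5, k6⟩ := hmix D a2 true 105 h.k hcZ h4 m1 m2 h12.symm hZ2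
        (Or.inl m2)
      refine ⟨F, ⟨k1, k2, k5, fun β hβ => Or.inr (Or.inr (Or.inl (k6 β hβ)))⟩, hnum F _ k3 ?_, k4⟩
      simp [cn3, Finset.insert_subset_iff, m1, m2, m3, h4, Nat.choose]
    · obtain ⟨F, k1, k2, k3, k4, k5, k6⟩ := hmix D' a3 false 93 h.k' hcZ h4 m1 m3 h13.symm hZ3
        (Or.inr m3)
      refine ⟨F, ⟨k1, k2, k5, fun β hβ => Or.inr (Or.inr (Or.inr (Or.inl (k6 β hβ))))⟩,
        hnum F _ k3 ?_, k4⟩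
      simp [cn3, Finset.insert_subset_iff, m1, m2, m3, h4, Nat.choose]
    · obtain ⟨E, hE⟩ := h.td
      obtain ⟨f, F, -, hf, k1, k2, k3, k4, k5, k6⟩ := plx hE c {4} {0, 1, 2} (fun _ => a1)
        (wt3 a1 a2 a3) (by simp) (by simp [m1]) (by simp) (by simp [h4])
        (by intro j; rcases j with _ | _ | _ | _ | _ | j <;> simp) (by simp [w1]) (by simp)
        (fun p hp hj => w6 p (hj 4 (by simp)).symm (fun e => m2 (e ▸ hp)) (fun e => m3 (e ▸ hp)))
      refine ⟨F, ⟨k1, k2, k5, ?_⟩, hnum F _ k3 ?_, k4⟩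
      · intro β hβ
        obtain ⟨l, hl, ht, hi, rfl, e, hm⟩ := k6 β hβ
        rw [tH, Bool.and_eq_true] at ht
        exact Or.inl (trB_sound hf hm ht.1)
      · simp [cn3, Finset.insert_subset_iff, m1, m2, m3, h4, Nat.choose]
    · obtain ⟨E, hE⟩ := h.t4
      have hsub : ({a2, a3} : Finset α) ⊆ c := by simp [Finset.insert_subset_iff, m2, m3]
      have hcd : (c \ {a2, a3}).card = c.card - 2 := by
        rw [Finset.card_sdiff_of_subset hsub, Finset.card_pair h23]
      obtain ⟨f, F, -, hf, k1, k2, k3, k4, k5, k6⟩ := plx hE (c \ {a2, a3}) ∅ {0, 1} (fun _ => a1)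
        (wt3 a1 a2 a3) (by simp) (by simp) (by simp) (by simp [h4, hcd])
        (by intro j; rcases j with _ | _ | j <;> simp) (by simp) (by simp)
        (by
          intro p hp _
          simp only [Finset.mem_sdiff, Finset.mem_insert, Finset.mem_singleton, not_or] at hp
          exact w6 p (fun e => m1 (e ▸ hp.1)) hp.2.1 hp.2.2)
      refine ⟨F, ⟨k1, k2, fun β hβ x hx => ⟨(Finset.mem_sdiff.1 (k5 β hβ x hx).1).1,
        (k5 β hβ x hx).2⟩, ?_⟩, hnum F _ k3 ?_, k4⟩
      · intro β hβ
        obtain ⟨l, hl, ht, hi, rfl, e, hm⟩ := k6 β hβ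
        rw [tN, Bool.and_eq_true] at ht
        exact Or.inr (Or.inr (Or.inr (Or.inr (Or.inl ⟨m2, m3, n3B_sound hf hm ht.1⟩))))
      · simp [cn3, Finset.insert_subset_iff, m1, m2, m3, h4, Nat.choose]
    · obtain ⟨E, hE⟩ := h.l2
      obtain ⟨f, F, -, hf, k1, k2, k3, k4, k5, k6⟩ := plx hE c {5} {0, 1, 2} (fun _ => a2)
        (wt3 a1 a2 a3) (by simp) (by simp [m2]) (by simp) (by simp [h4])
        (by intro j; rcases j with _ | _ | _ | _ | _ | _ | j <;> simp) (by simp) (by simp)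
        (fun p hp hj => w6 p (fun e => m1 (e ▸ hp)) (hj 5 (by simp)).symm (fun e => m3 (e ▸ hp)))
      refine ⟨F, ⟨k1, k2, k5, ?_⟩, hnum F _ k3 ?_, k4⟩
      · intro β hβ
        obtain ⟨l, hl, ht, hi, rfl, e, hm⟩ := k6 β hβ
        rw [tL, Bool.and_eq_true] at ht
        rcases lpB_sound hf hm (z := 5) (by simp) ht.1 with h | h
        · exact Or.inl h
        · exact Or.inr (Or.inr (Or.inr (Or.inr (Or.inr (Or.inl ⟨m2, m1, h.2.2, h.2.1⟩)))))
      · simp [cn3, Finset.insert_subset_iff, m1, m2, m3, h4, Nat.choose]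
    · obtain ⟨E, hE⟩ := h.l3
      obtain ⟨f, F, -, hf, k1, k2, k3, k4, k5, k6⟩ := plx hE c {4} {0, 1, 2} (fun _ => a3)
        (wt3 a1 a2 a3) (by simp) (by simp [m3]) (by simp) (by simp [h4])
        (by intro j; rcases j with _ | _ | _ | _ | _ | j <;> simp) (by simp) (by simp)
        (fun p hp hj => w6 p (fun e => m1 (e ▸ hp)) (fun e => m2 (e ▸ hp)) (hj 4 (by simp)).symm)
      refine ⟨F, ⟨k1, k2, k5, ?_⟩, hnum F _ k3 ?_, k4⟩
      · intro β hβ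
        obtain ⟨l, hl, ht, hi, rfl, e, hm⟩ := k6 β hβ
        rw [tL, Bool.and_eq_true] at ht
        rcases lpB_sound hf hm (z := 4) (by simp) ht.1 with h | h
        · exact Or.inl h
        · exact Or.inr (Or.inr (Or.inr (Or.inr (Or.inr (Or.inr ⟨m3, m1, h.2.2, h.2.1⟩)))))
      · simp [cn3, Finset.insert_subset_iff, m1, m2, m3, h4, Nat.choose]
    · obtain ⟨E, hE⟩ := h.h4
      obtain ⟨f, F, -, hf, k1, k2, k3, k4, k5, k6⟩ := plx hE c ∅ {0, 1, 2, 3} (fun _ => a1)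
        (wt3 a1 a2 a3) (by simp) (by simp) (by simp) (by simp [h4])
        (by intro j; rcases j with _ | _ | _ | _ | j <;> simp) (by simp) (by simp)
        (fun p hp _ => w6 p (fun e => m1 (e ▸ hp)) (fun e => m2 (e ▸ hp)) (fun e => m3 (e ▸ hp)))
      refine ⟨F, ⟨k1, k2, k5, ?_⟩, hnum F _ k3 ?_, k4⟩
      · intro β hβ
        obtain ⟨l, hl, ht, hi, rfl, e, hm⟩ := k6 β hβ
        rw [tH, Bool.and_eq_true] at ht
        exact Or.inl (trB_sound hf hm ht.1)
      · simp [cn3, Finset.insert_subset_iff, m1, m2, m3, h4, Nat.choose]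
  · obtain ⟨m1, m2, m3⟩ := h6 c hc h4 hcZ
    obtain ⟨E, hE⟩ := h.h6
    obtain ⟨f, F, -, hf, k1, k2, k3, k4, k5, k6⟩ := plx hE c ∅ {0, 1, 2, 3, 4, 5} (fun _ => a1)
      (wt3 a1 a2 a3) (by simp) (by simp) (by simp) (by simp [h4])
      (by intro j; rcases j with _ | _ | _ | _ | _ | _ | j <;> simp) (by simp) (by simp)
      (fun p hp _ => w6 p (fun e => m1 (e ▸ hp)) (fun e => m2 (e ▸ hp)) (fun e => m3 (e ▸ hp)))
    refine ⟨F, ⟨k1, k2, k5, ?_⟩, hnum F _ k3 ?_, k4⟩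
    · intro β hβ
      obtain ⟨l, hl, ht, hi, rfl, e, hm⟩ := k6 β hβ
      rw [tH, Bool.and_eq_true] at ht
      exact Or.inl (trB_sound hf hm ht.1)
    · simp [cn3, Finset.insert_subset_iff, m1, m2, m3, h4, Nat.choose]

end W3b


section Data3

set_option maxRecDepth 100000

theorem i_dTd : ingB [6, 6, 6, 0, 5] dTd tH 180 0 = true := by decide +kernel
theorem i_dK12 : ingB [6, 6, 0, 0, 5] dK12 (tK true) 105 0 = true := by decide +kernel
theorem i_dK13 : ingB [6, 6, 0, 0, 5] dK13 (tK false) 93 0 = true := by decide +kernel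
theorem i_dT4 : ingB [6, 6] dT4 tN 45 0 = true := by decide +kernel
theorem i_dZ4 : ingB [6, 0, 0, 0, 5] dZ4 tO 35 0 = true := by decide +kernel
theorem i_dZ6 : ingB [6, 6, 6, 0, 5] dZ6 tO 419 0 = true := by decide +kernel
theorem ds_0 : dsB 0 dK12 dK13 = true := by decide +kernel
theorem ds_1 : dsB 1 dK12 dK13 = true := by decide +kernel

theorem wi3 : WI3 dK12 dK13 :=
  ⟨⟨_, i_dH4⟩, ⟨_, i_dH6⟩, ⟨_, i_dTd⟩, ⟨_, i_dHx0⟩, ⟨_, i_dPr0⟩, i_dK12, i_dK13, ⟨_, i_dT4⟩,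
    ⟨_, i_dZ4⟩, ⟨_, i_dZ6⟩, by
      intro i hi
      interval_cases i
      · exact ds_0
      · exact ds_1⟩

end Data3


section W3c

variable {α : Type*} [DecidableEq α]

theorem sum_wt3 [Fintype α] {a b c : α} (hab : a ≠ b) (hac : a ≠ c) (hbc : b ≠ c) :
    ∑ p, wt3 a b c p = 5 + 6 * (Fintype.card α - 3) := by
  have mb : b ∈ (Finset.univ : Finset α).erase a := Finset.mem_erase.2 ⟨hab.symm, Finset.mem_univ b⟩
  have mc : c ∈ ((Finset.univ : Finset α).erase a).erase b :=
    Finset.mem_erase.2 ⟨hbc.symm, Finset.mem_erase.2 ⟨hac.symm, Finset.mem_univ c⟩⟩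
  rw [← Finset.add_sum_erase _ _ (Finset.mem_univ a), ← Finset.add_sum_erase _ _ mb,
    ← Finset.add_sum_erase _ _ mc]
  have : ∑ x ∈ ((Finset.univ.erase a).erase b).erase c, wt3 a b c x =
      ∑ x ∈ ((Finset.univ.erase a).erase b).erase c, 6 := by
    apply Finset.sum_congr rfl
    intro x hx
    simp only [Finset.mem_erase, Finset.mem_univ, and_true] at hx
    simp [wt3, hx.1, hx.2.1, hx.2.2]
  rw [this, Finset.sum_const, Finset.card_erase_of_mem mc, Finset.card_erase_of_mem mb,
    Finset.card_erase_of_mem (Finset.mem_univ a), Finset.card_univ]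
  simp [wt3, hab.symm, hac.symm, mul_comm, Nat.sub_sub]

theorem IsE.hub [Fintype α] {B : Finset (Finset α)} (h : IsE B) (hv : 3 ≤ Fintype.card α) :
    ∃ Z ∈ B, ∀ c ∈ B, c.card = 6 → c ≠ Z → Disjoint Z c := by
  by_cases hex : ∃ c ∈ B, c.card = 6
  · obtain ⟨Z, hZ, h6⟩ := hex
    exact ⟨Z, hZ, fun c hc hc6 hne => h.dis Z hZ c hc h6 hc6 hne.symm⟩
  · obtain ⟨T, -, hT⟩ := Finset.exists_subset_card_eq (s := (Finset.univ : Finset α)) (n := 3)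
      (by rw [Finset.card_univ]; exact hv)
    obtain ⟨Z, hZ, -⟩ := h.ex3 hT
    exact ⟨Z, hZ, fun c hc hc6 _ => absurd ⟨c, hc, hc6⟩ hex⟩

theorem WI3.main {D D' : List (List ℕ)} (h : WI3 D D') [Fintype α] {B : Finset (Finset α)}
    (hB : IsE B) {n : ℕ} (hv : 3 ≤ Fintype.card α) (hn' : n = 5 + 6 * (Fintype.card α - 3)) :
    ∃ A : Finset (Finset (Fin n)), Pk A ∧ S46 A ∧
      (2 * num 4 A : ℤ) = 108 * ((Fintype.card α).choose 3 : ℕ) -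
        150 * ((Fintype.card α - 1).choose 2 : ℕ) + 45 * (Fintype.card α - 2 : ℕ) - 2 ∧
      num 6 A = 0 := by
  obtain ⟨Z, hZ, hdis⟩ := hB.hub hv
  obtain ⟨a1, hZ1, a2, hZ2, a3, hZ3, h12, h13, h23⟩ := Finset.two_lt_card.1
    (show 2 < Z.card by have := hB.s46 Z hZ; omega)
  have h6 : ∀ c ∈ B, c.card = 6 → c ≠ Z → a1 ∉ c ∧ a2 ∉ c ∧ a3 ∉ c := by
    intro c hc hc6 hne
    have := Finset.disjoint_left.1 (hdis c hc hc6 hne)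
    exact ⟨this hZ1, this hZ2, this hZ3⟩
  obtain ⟨col, hcol⟩ := colouring hB hZ hZ1 hZ2 hZ3 h12 h13 (by
    intro c hc hc1 hne
    rcases hB.s46 c hc with h | h
    · exact h
    · exact absurd hc1 (h6 c hc h hne).1)
  have hF := fun c (hc : c ∈ B) =>
    h.fams hB.s46 hB.pk hZ hZ1 hZ2 hZ3 h12 h13 h23 h6 hcol hc
  choose! F hSp hcnt hcnt6 using hF
  have hpt : ∀ c ∈ B, ∀ β ∈ F c, ∀ x ∈ β, x.1 ∈ c ∧ x.2 < 6 ∧ x.1 ≠ a2 ∧ x.1 ≠ a3 := by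
    intro c hc β hβ x hx
    obtain ⟨k1, k2⟩ := (hSp c hc).pts β hβ x hx
    refine ⟨k1, ?_, ?_, ?_⟩
    · unfold wt3 at k2
      split_ifs at k2 <;> omega
    · intro e; simp [wt3, e, h12.symm] at k2
    · intro e; simp [wt3, e, h13.symm] at k2
  obtain ⟨hpk, hs46, hnum⟩ := combine B F (fun c hc => (hSp c hc).pk)
    (fun c hc => (hSp c hc).s46) (by
      intro c hc c' hc' hne β hβ β' hβ'
      exact Loc3.cross h12 h13 hZ1 hZ2 hZ3 h.ds hne (hpt c hc β hβ) (hpt c' hc' β' hβ')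
        (hB.pk c hc c' hc' hne) ((hSp c hc).loc β hβ) ((hSp c' hc').loc β' hβ'))
  have hsub : ∀ β ∈ B.biUnion F, β ⊆ pset (wt3 a1 a2 a3) := by
    intro β hβ x hx
    obtain ⟨c, hc, hβ⟩ := Finset.mem_biUnion.1 hβ
    exact mem_pset.2 ((hSp c hc).pts β hβ x hx).2
  obtain ⟨A, hA1, hA2, hA3, -⟩ := toFin (pset (wt3 a1 a2 a3)) n (by omega)
    (by rw [card_pset, sum_wt3 h12 h13 h23, hn']) _ hsub hpk
  refine ⟨A, hA1, hA2 hs46, ?_, ?_⟩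
  · have c3 : ({a1, a2, a3} : Finset α).card = 3 :=
      Finset.card_eq_three.2 ⟨a1, a2, a3, h12, h13, h23, rfl⟩
    have d0 := hB.dc ∅ (by simp)
    have d1 := hB.dc {a1} (by simp)
    have d2 := hB.dc {a2} (by simp)
    have d3 := hB.dc {a3} (by simp)
    have d12 := hB.dc {a1, a2} (by rw [Finset.card_pair h12]; omega)
    have d13 := hB.dc {a1, a3} (by rw [Finset.card_pair h13]; omega)
    have d23 := hB.dc {a2, a3} (by rw [Finset.card_pair h23]; omega)
    have d123 := hB.dc {a1, a2, a3} (by rw [c3])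
    rw [Finset.card_pair h12] at d12
    rw [Finset.card_pair h13] at d13
    rw [Finset.card_pair h23] at d23
    rw [c3] at d123
    simp only [Finset.empty_subset, if_true, Finset.card_empty, Nat.sub_zero,
      Finset.card_singleton] at d0 d1 d2 d3
    rw [hA3, hnum 4 (by omega)]
    push_cast
    rw [Finset.mul_sum, Finset.sum_congr rfl hcnt]
    show ∑ c ∈ B, cn3 a1 a2 a3 c = _
    unfold cn3
    simp only [Finset.sum_add_distrib, Finset.sum_sub_distrib, ← Finset.mul_sum,
      ← Nat.cast_sum]
    simp only [Nat.reduceSub] at d12 d13 d23 d123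
    rw [d0, d1, d2, d3, d12, d13, d23, d123]
    simp only [Nat.choose_one_right, Nat.choose_zero_right]
    push_cast
    ring
  · rw [hA3, hnum 6 (by omega), Finset.sum_congr rfl hcnt6]
    simp

end W3c


section Upper

variable {α : Type*} [DecidableEq α]

/-- pair degree -/
def pd (B : Finset (Finset α)) (x y : α) : ℕ := (B.filter fun b => x ∈ b ∧ y ∈ b).card

/-- points joined to a pair -/
def pu (B : Finset (Finset α)) (x y : α) : Finset α :=
  (B.filter fun b => x ∈ b ∧ y ∈ b).biUnion fun b => b \ {x, y}

theorem pu_card {B : Finset (Finset α)} (h4 : ∀ b ∈ B, b.card = 4) (hpk : Pk B) {x y : α}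
    (hxy : x ≠ y) : (pu B x y).card = 2 * pd B x y := by
  have e : ∀ b ∈ B.filter fun b => x ∈ b ∧ y ∈ b, (b \ {x, y}).card = 2 := by
    intro b hb
    obtain ⟨hb, hx, hy⟩ := Finset.mem_filter.1 hb
    rw [Finset.card_sdiff_of_subset (by simp [Finset.insert_subset_iff, hx, hy]), h4 b hb,
      Finset.card_pair hxy]
  rw [pu, Finset.card_biUnion, Finset.sum_congr rfl e]
  · simp [pd, mul_comm]
  · intro b hb b' hb' hne
    rw [Function.onFun, Finset.disjoint_left]
    intro z hz hz'
    obtain ⟨hb, hx, hy⟩ := Finset.mem_filter.1 hb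
    obtain ⟨hb', hx', hy'⟩ := Finset.mem_filter.1 hb'
    simp only [Finset.mem_sdiff, Finset.mem_insert, Finset.mem_singleton, not_or] at hz hz'
    refine hne (hpk.eq_of_three (T := {x, y, z}) (Finset.card_eq_three.2
      ⟨x, y, z, hxy, Ne.symm hz.2.1, Ne.symm hz.2.2, rfl⟩) hb hb' ?_ ?_)
    · simp [Finset.insert_subset_iff, hx, hy, hz.1]
    · simp [Finset.insert_subset_iff, hx', hy', hz'.1]

variable [Fintype α]

theorem pu_sub (B : Finset (Finset α)) (x y : α) : pu B x y ⊆ Finset.univ \ {x, y} := by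
  intro z hz
  obtain ⟨b, -, hz⟩ := Finset.mem_biUnion.1 hz
  simp only [Finset.mem_sdiff, Finset.mem_univ, true_and] at hz ⊢
  exact hz.2

theorem pd_le {B : Finset (Finset α)} (h4 : ∀ b ∈ B, b.card = 4) (hpk : Pk B) {x y : α}
    (hxy : x ≠ y) : pd B x y ≤ (Fintype.card α - 2) / 2 := by
  have h := Finset.card_le_card (pu_sub B x y)
  rw [pu_card h4 hpk hxy, Finset.card_sdiff_of_subset (Finset.subset_univ _), Finset.card_univ,
    Finset.card_pair hxy] at h
  omega

theorem deg_sum {B : Finset (Finset α)} (h4 : ∀ b ∈ B, b.card = 4) (x : α) :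
    ∑ y ∈ Finset.univ.erase x, pd B x y = 3 * (B.filter fun b => x ∈ b).card := by
  simp only [pd, Finset.card_filter]
  rw [Finset.sum_comm, Finset.mul_sum]
  apply Finset.sum_congr rfl
  intro b hb
  by_cases hx : x ∈ b
  · simp only [hx, true_and, if_true]
    rw [← Finset.card_filter]
    have : (Finset.univ.erase x).filter (fun y => y ∈ b) = b.erase x := by
      ext y; simp
    rw [this, Finset.card_erase_of_mem hx, h4 b hb, mul_one]
  · simp [hx]

theorem blk_sum {B : Finset (Finset α)} (h4 : ∀ b ∈ B, b.card = 4) :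
    ∑ x, (B.filter fun b => x ∈ b).card = 4 * B.card := by
  simp only [Finset.card_filter]
  rw [Finset.sum_comm]
  have : ∀ b ∈ B, (∑ x, if x ∈ b then 1 else 0) = 4 := by
    intro b hb
    rw [← Finset.card_filter]
    simp [h4 b hb]
  rw [Finset.sum_congr rfl this]
  simp [mul_comm]

theorem ub_of_deg {B : Finset (Finset α)} (h4 : ∀ b ∈ B, b.card = 4) {m : ℕ}
    (hm : ∀ x, (B.filter fun b => x ∈ b).card ≤ m) : B.card ≤ Fintype.card α * m / 4 := by
  have h := blk_sum h4
  have h' := Finset.sum_le_sum (fun x (_ : x ∈ (Finset.univ : Finset α)) => hm x)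
  rw [h, Finset.sum_const, Finset.card_univ, smul_eq_mul] at h'
  omega

theorem deg_le {B : Finset (Finset α)} (h4 : ∀ b ∈ B, b.card = 4) (hpk : Pk B) (x : α) :
    (B.filter fun b => x ∈ b).card ≤ (Fintype.card α - 1) * ((Fintype.card α - 2) / 2) / 3 := by
  have h := deg_sum h4 x
  have h' : ∑ y ∈ Finset.univ.erase x, pd B x y ≤
      ∑ y ∈ Finset.univ.erase x, (Fintype.card α - 2) / 2 := Finset.sum_le_sum fun y hy =>
    pd_le h4 hpk (Finset.ne_of_mem_erase hy).symm
  rw [h, Finset.sum_const, Finset.card_erase_of_mem (Finset.mem_univ x), Finset.card_univ,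
    smul_eq_mul] at h'
  omega

theorem deg_le6 {B : Finset (Finset α)} (h4 : ∀ b ∈ B, b.card = 4) (hpk : Pk B) (x : α)
    (h6 : Fintype.card α % 6 = 0) :
    (B.filter fun b => x ∈ b).card ≤ (Fintype.card α - 1) * (Fintype.card α - 2) / 6 - 1 := by
  obtain ⟨j, hj⟩ : ∃ j, Fintype.card α = 6 * (j + 1) := by
    have : 0 < Fintype.card α := Fintype.card_pos_iff.2 ⟨x⟩
    exact ⟨Fintype.card α / 6 - 1, by omega⟩
  have hdiv : (Fintype.card α - 1) * (Fintype.card α - 2) / 6 = 6 * j * j + 9 * j + 3 := by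
    rw [hj, show 6 * (j + 1) - 1 = 6 * j + 5 by omega, show 6 * (j + 1) - 2 = 6 * j + 4 by omega,
      show (6 * j + 5) * (6 * j + 4) = 2 + 6 * (6 * j * j + 9 * j + 3) by ring]
    omega
  rw [hdiv]
  by_contra hlt
  have h := deg_sum h4 x
  have hle : ∀ y ∈ Finset.univ.erase x, pd B x y ≤ 3 * j + 2 := by
    intro y hy
    have := pd_le h4 hpk (Finset.ne_of_mem_erase hy).symm
    omega
  have hc : (Finset.univ.erase x).card = 6 * j + 5 := by
    rw [Finset.card_erase_of_mem (Finset.mem_univ x), Finset.card_univ]; omega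
  have hex : ∃ y ∈ Finset.univ.erase x, pd B x y ≤ 3 * j + 1 := by
    by_contra hno
    push Not at hno
    have e : ∑ y ∈ Finset.univ.erase x, pd B x y = ∑ y ∈ Finset.univ.erase x, (3 * j + 2) :=
      Finset.sum_congr rfl fun y hy => le_antisymm (hle y hy) (hno y hy)
    rw [h, Finset.sum_const, hc, smul_eq_mul,
      show (6 * j + 5) * (3 * j + 2) = 3 * (6 * j * j + 9 * j + 3) + 1 by ring] at e
    omega
  obtain ⟨y, hy, hyd⟩ := hex
  have hxy := (Finset.ne_of_mem_erase hy).symm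
  have hz : ∃ z ∈ Finset.univ \ {x, y}, z ∉ pu B x y := by
    by_contra hno
    push Not at hno
    have h1 := Finset.card_le_card (show Finset.univ \ {x, y} ⊆ pu B x y from hno)
    rw [pu_card h4 hpk hxy, Finset.card_sdiff_of_subset (Finset.subset_univ _), Finset.card_univ,
      Finset.card_pair hxy] at h1
    omega
  obtain ⟨z, hz, hzu⟩ := hz
  simp only [Finset.mem_sdiff, Finset.mem_univ, true_and, Finset.mem_insert,
    Finset.mem_singleton, not_or] at hz
  have hzd : pd B x z ≤ 3 * j + 1 := by
    have hsub : pu B x z ⊆ Finset.univ \ {x, z, y} := by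
      intro w hw
      have hw1 := pu_sub B x z hw
      simp only [Finset.mem_sdiff, Finset.mem_univ, true_and, Finset.mem_insert,
        Finset.mem_singleton, not_or] at hw1 ⊢
      refine ⟨hw1.1, hw1.2, ?_⟩
      rintro rfl
      obtain ⟨b, hb, hwb⟩ := Finset.mem_biUnion.1 hw
      obtain ⟨hb, hxb, hzb⟩ := Finset.mem_filter.1 hb
      apply hzu
      refine Finset.mem_biUnion.2 ⟨b, Finset.mem_filter.2 ⟨hb, hxb, (Finset.mem_sdiff.1 hwb).1⟩, ?_⟩
      simp [hzb, hz.1, hz.2]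
    have h1 := Finset.card_le_card hsub
    rw [pu_card h4 hpk (Ne.symm hz.1), Finset.card_sdiff_of_subset (Finset.subset_univ _),
      Finset.card_univ, Finset.card_eq_three.2 ⟨x, z, y, Ne.symm hz.1, hxy, hz.2, rfl⟩] at h1
    omega
  have hzm : z ∈ (Finset.univ.erase x).erase y :=
    Finset.mem_erase.2 ⟨hz.2, Finset.mem_erase.2 ⟨hz.1, Finset.mem_univ z⟩⟩
  have h2 : ∑ w ∈ ((Finset.univ.erase x).erase y).erase z, pd B x w ≤
      ∑ w ∈ ((Finset.univ.erase x).erase y).erase z, (3 * j + 2) := Finset.sum_le_sum fun w hw =>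
    hle w (Finset.mem_of_mem_erase (Finset.mem_of_mem_erase hw))
  rw [Finset.sum_const, Finset.card_erase_of_mem hzm, Finset.card_erase_of_mem hy, hc,
    smul_eq_mul] at h2
  rw [← Finset.add_sum_erase _ _ hy, ← Finset.add_sum_erase _ _ hzm] at h
  rw [show 6 * j + 5 - 1 - 1 = 6 * j + 3 by omega,
    show (6 * j + 3) * (3 * j + 2) = 3 * (6 * j * j + 9 * j + 3) - (6 * j + 3) by
      rw [show 3 * (6 * j * j + 9 * j + 3) = (6 * j + 3) * (3 * j + 2) + (6 * j + 3) by ring]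
      omega] at h2
  omega

end Upper


section Lower

/-- there is a packing by `m` quadruples on `n` points -/
def LB (n m : ℕ) : Prop :=
  ∃ B : Finset (Finset (Fin n)), (∀ b ∈ B, b.card = 4) ∧ Pk B ∧ B.card = m

theorem LB.of {n m : ℕ} {A : Finset (Finset (Fin n))} (hpk : Pk A) (hs : S46 A)
    (h6 : num 6 A = 0) (h4 : num 4 A = m) : LB n m := by
  refine ⟨A, ?_, hpk, by rw [card_num hs]; omega⟩
  intro b hb
  rcases hs b hb with h | h
  · exact h
  · rw [num, Finset.card_eq_zero] at h6
    have : b ∈ A.filter fun b => b.card = 6 := Finset.mem_filter.2 ⟨hb, h⟩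
    rw [h6] at this
    exact absurd this (Finset.notMem_empty _)

theorem lb_even {n : ℕ} (hn : 4 ≤ n) (he : n % 2 = 0) (h6 : n % 6 ≠ 0) :
    ∃ m, 24 * m = n * (n - 1) * (n - 2) ∧ LB n m := by
  obtain ⟨B, hB⟩ := ex_even n hn he
  have n6 := hB.n6
  have tot := hB.tot
  simp only [Fintype.card_fin, h6, if_false] at n6 tot
  refine ⟨num 4 B, ?_, LB.of hB.pk hB.s46 n6 rfl⟩
  obtain ⟨k, rfl⟩ : ∃ k, n = k + 2 := ⟨n - 2, by omega⟩
  have := c3 k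
  rw [show k + 2 - 1 = k + 1 by omega, Nat.add_sub_cancel]
  omega

theorem lb_odd {n : ℕ} (hn : 4 ≤ n) (ho : n % 6 = 1 ∨ n % 6 = 3) :
    ∃ m, 24 * m = n * (n - 1) * (n - 3) ∧ LB n m := by
  obtain ⟨B, hB⟩ := ex_even (n + 1) (by omega) (by omega)
  have n6 := hB.n6
  have tot := hB.tot
  have hne : (n + 1) % 6 ≠ 0 := by omega
  simp only [Fintype.card_fin, hne, if_false] at n6 tot
  have h4 : ∀ b ∈ B, b.card = 4 := by
    intro b hb
    rcases hB.s46 b hb with h | h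
    · exact h
    · rw [num, Finset.card_eq_zero] at n6
      have : b ∈ B.filter fun b => b.card = 6 := Finset.mem_filter.2 ⟨hb, h⟩
      rw [n6] at this
      exact absurd this (Finset.notMem_empty _)
  let x : Fin (n + 1) := 0
  have hd := hB.dc {x} (by simp)
  have hd' : (B.filter fun b => x ∈ b).card * 3 = n.choose 2 := by
    simp only [Finset.card_singleton, Fintype.card_fin, Nat.add_sub_cancel, Nat.reduceSub,
      Finset.singleton_subset_iff] at hd
    rw [← hd, ← Finset.sum_filter, ← smul_eq_mul, ← Finset.sum_const]
    apply Finset.sum_congr rfl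
    intro b hb
    rw [h4 b (Finset.mem_filter.1 hb).1]
    rfl
  have hsum := Finset.card_filter_add_card_filter_not (s := B) (fun b => x ∈ b)
  obtain ⟨A, hA1, hA2, hA3, -⟩ := toFin (Finset.univ.erase x) n (by omega) (by simp)
    (B.filter fun b => ¬ x ∈ b) (by
      intro b hb y hy
      rw [Finset.mem_erase]
      refine ⟨?_, Finset.mem_univ _⟩
      rintro rfl
      exact (Finset.mem_filter.1 hb).2 hy) (by
      intro b hb b' hb' hne
      exact hB.pk b (Finset.mem_filter.1 hb).1 b' (Finset.mem_filter.1 hb').1 hne)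
  have hs : S46 (B.filter fun b => ¬ x ∈ b) := fun b hb => hB.s46 b (Finset.mem_filter.1 hb).1
  have h6' : num 6 (B.filter fun b => ¬ x ∈ b) = 0 := by
    rw [num, Finset.card_eq_zero, Finset.filter_eq_empty_iff]
    intro b hb
    rw [h4 b (Finset.mem_filter.1 hb).1]; omega
  refine ⟨num 4 A, ?_, LB.of hA1 (hA2 hs) (by rw [hA3, h6']) rfl⟩
  rw [hA3]
  have e1 := card_num hs
  have e2 := card_num hB.s46
  obtain ⟨k, rfl⟩ : ∃ k, n = k + 3 := ⟨n - 3, by omega⟩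
  have e3 := c3 (k + 2)
  have e4 := c2 (k + 2)
  rw [show k + 3 - 1 = k + 2 by omega, Nat.add_sub_cancel]
  rw [show k + 2 + 2 = k + 3 + 1 by omega, show k + 2 + 1 = k + 3 by omega] at e3
  rw [show k + 2 + 1 = k + 3 by omega] at e4
  have h24 : 24 * num 4 (B.filter fun b => ¬ x ∈ b) + 4 * ((k + 3) * (k + 2)) =
      (k + 3 + 1) * (k + 3) * (k + 2) := by omega
  nlinarith

theorem split6 {α : Type*} [DecidableEq α] {b : Finset α} (h : b.card = 6) :
    ∃ F : Finset (Finset α), Pk F ∧ S46 F ∧ num 4 F = 3 ∧ num 6 F = 0 ∧ ∀ β ∈ F, β ⊆ b := by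
  obtain ⟨P, hP, hP2⟩ := Finset.exists_subset_card_eq (s := b) (n := 2) (by omega)
  obtain ⟨Q, hQ, hQ2⟩ := Finset.exists_subset_card_eq (s := b \ P) (n := 2)
    (by rw [Finset.card_sdiff_of_subset hP]; omega)
  obtain ⟨R, hR, hR2⟩ := Finset.exists_subset_card_eq (s := (b \ P) \ Q) (n := 2)
    (by rw [Finset.card_sdiff_of_subset hQ, Finset.card_sdiff_of_subset hP]; omega)
  have hRQ : Disjoint Q R := (Finset.disjoint_of_subset_left hR Finset.sdiff_disjoint).symm
  have hQP : Disjoint P Q := (Finset.disjoint_of_subset_left hQ Finset.sdiff_disjoint).symm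
  have hRP : Disjoint P R := (Finset.disjoint_of_subset_left (hR.trans Finset.sdiff_subset)
    Finset.sdiff_disjoint).symm
  have hQb : Q ⊆ b := hQ.trans Finset.sdiff_subset
  have hRb : R ⊆ b := hR.trans (Finset.sdiff_subset.trans Finset.sdiff_subset)
  have key : ∀ X Y W : Finset α, X.card = 2 → Disjoint Y W → ((X ∪ Y) ∩ (X ∪ W)).card = 2 := by
    intro X Y W hX hYW
    rw [← Finset.union_inter_distrib_left, Finset.disjoint_iff_inter_eq_empty.1 hYW,
      Finset.union_empty, hX]
  have c1 : (P ∪ Q).card = 4 := by rw [Finset.card_union_of_disjoint hQP]; omega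
  have c2 : (P ∪ R).card = 4 := by rw [Finset.card_union_of_disjoint hRP]; omega
  have c3 : (Q ∪ R).card = 4 := by rw [Finset.card_union_of_disjoint hRQ]; omega
  have i1 : ((P ∪ Q) ∩ (P ∪ R)).card = 2 := key P Q R hP2 hRQ
  have i2 : ((P ∪ Q) ∩ (Q ∪ R)).card = 2 := by
    rw [Finset.union_comm P Q]; exact key Q P R hQ2 hRP
  have i3 : ((P ∪ R) ∩ (Q ∪ R)).card = 2 := by
    rw [Finset.union_comm P R, Finset.union_comm Q R]; exact key R P Q hR2 hQP
  have n1 : P ∪ Q ≠ P ∪ R := by intro e; rw [e, Finset.inter_self] at i1; omega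
  have n2 : P ∪ Q ≠ Q ∪ R := by intro e; rw [e, Finset.inter_self] at i2; omega
  have n3 : P ∪ R ≠ Q ∪ R := by intro e; rw [e, Finset.inter_self] at i3; omega
  have hF : ∀ β ∈ ({P ∪ Q, P ∪ R, Q ∪ R} : Finset (Finset α)), β.card = 4 := by
    intro β hβ
    simp only [Finset.mem_insert, Finset.mem_singleton] at hβ
    rcases hβ with rfl | rfl | rfl <;> assumption
  refine ⟨{P ∪ Q, P ∪ R, Q ∪ R}, ?_, fun β hβ => Or.inl (hF β hβ), ?_, ?_, ?_⟩
  · intro β hβ β' hβ' hne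
    have i1' := i1
    have i2' := i2
    have i3' := i3
    rw [Finset.inter_comm] at i1' i2' i3'
    simp only [Finset.mem_insert, Finset.mem_singleton] at hβ hβ'
    rcases hβ with rfl | rfl | rfl <;> rcases hβ' with rfl | rfl | rfl <;>
      first | exact absurd rfl hne | omega
  · rw [num, Finset.filter_true_of_mem hF]
    exact Finset.card_eq_three.2 ⟨_, _, _, n1, n2, n3, rfl⟩
  · rw [num, Finset.card_eq_zero, Finset.filter_eq_empty_iff]
    intro β hβ
    rw [hF β hβ]; omega
  · intro β hβ
    simp only [Finset.mem_insert, Finset.mem_singleton] at hβ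
    rcases hβ with rfl | rfl | rfl <;> apply Finset.union_subset <;> assumption

theorem lb_six {j : ℕ} (hj : 1 ≤ j) : ∃ m, 4 * m + 20 * j = (6 * j).choose 3 + 12 * j ∧ LB (6 * j) m := by
  obtain ⟨B, hB⟩ := ex_even (6 * j) (by omega) (by omega)
  have n6 := hB.n6
  have tot := hB.tot
  have hz : 6 * j % 6 = 0 := by omega
  simp only [Fintype.card_fin, hz, if_true] at n6 tot
  have hF : ∀ b ∈ B, ∃ F : Finset (Finset (Fin (6 * j))), Pk F ∧ S46 F ∧
      num 4 F = (if b.card = 4 then 1 else 0) + 3 * (if b.card = 6 then 1 else 0) ∧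
      num 6 F = 0 ∧ ∀ β ∈ F, β ⊆ b := by
    intro b hb
    rcases hB.s46 b hb with h | h
    · refine ⟨{b}, ?_, ?_, ?_, ?_, ?_⟩
      · intro x hx y hy hne
        rw [Finset.mem_singleton] at hx hy
        exact absurd (hx.trans hy.symm) hne
      · intro x hx
        rw [Finset.mem_singleton.1 hx]; exact Or.inl h
      · simp [num, h, Finset.filter_singleton]
      · simp [num, h, Finset.filter_singleton]
      · intro x hx
        rw [Finset.mem_singleton.1 hx]
    · obtain ⟨F, k1, k2, k3, k4, k5⟩ := split6 h
      exact ⟨F, k1, k2, by simp [k3, h], k4, k5⟩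
  choose! F k1 k2 k3 k4 k5 using hF
  obtain ⟨hpk, hs46, hnum⟩ := combine B F k1 k2 (by
    intro b hb b' hb' hne β hβ β' hβ'
    exact (Finset.card_le_card (Finset.inter_subset_inter (k5 b hb β hβ) (k5 b' hb' β' hβ'))).trans
      (hB.pk b hb b' hb' hne))
  refine ⟨num 4 (B.biUnion F), ?_, LB.of hpk hs46 ?_ rfl⟩
  · rw [hnum 4 (by omega), Finset.sum_congr rfl k3, Finset.sum_add_distrib, ← Finset.mul_sum,
      ← Finset.card_filter, ← Finset.card_filter]
    change 4 * (num 4 B + 3 * num 6 B) + _ = _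
    omega
  · rw [hnum 6 (by omega), Finset.sum_congr rfl k4]; simp

theorem lb_five {k : ℕ} (hk : 1 ≤ k) : LB (12 * k + 5) (72 * k ^ 3 + 66 * k ^ 2 + 18 * k + 1) := by
  obtain ⟨B, hB⟩ := ex_even (2 * k + 2) (by omega) (by omega)
  obtain ⟨A, hA1, hA2, -, hA4, hA6⟩ := wi_5.main hB (n := 12 * k + 5) (by omega)
    (by rw [Fintype.card_fin]; omega) (by rw [Fintype.card_fin]; omega)
  refine LB.of hA1 hA2 (by rw [hA6]; simp) ?_
  rw [Fintype.card_fin, Nat.add_sub_cancel, show 2 * k + 2 - 1 = 2 * k + 1 by omega] at hA4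
  have e3 := c3 (2 * k)
  have e2 := c2 (2 * k)
  zify at e3 e2 ⊢
  push_cast at hA4
  nlinarith

theorem lb_eleven {k : ℕ} (hk : 1 ≤ k) :
    ∃ m, m + 42 * k ^ 2 + 1 = 72 * k ^ 3 + 6 * k ∧ LB (12 * k - 1) m := by
  obtain ⟨B, hB⟩ := ex_even (2 * k + 2) (by omega) (by omega)
  obtain ⟨A, hA1, hA2, hA4, hA6⟩ := wi3.main hB (n := 12 * k - 1)
    (by rw [Fintype.card_fin]; omega) (by rw [Fintype.card_fin]; omega)
  refine ⟨num 4 A, ?_, LB.of hA1 hA2 hA6 rfl⟩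
  rw [Fintype.card_fin, Nat.add_sub_cancel, show 2 * k + 2 - 1 = 2 * k + 1 by omega] at hA4
  have e3 := c3 (2 * k)
  have e2 := c2 (2 * k)
  zify at e3 e2 ⊢
  push_cast at hA4
  nlinarith

end Lower


section Final

theorem set_iff {n m : ℕ} : (∃ B : Finset (Finset (Fin n)), (∀ b ∈ B, b.card = 4) ∧
    (∀ T : Finset (Fin n), T.card = 3 → (B.filter (fun b => T ⊆ b)).card ≤ 1) ∧
    B.card = m) ↔ LB n m := by
  have key : ∀ B : Finset (Finset (Fin n)),
      (∀ T : Finset (Fin n), T.card = 3 → (B.filter (fun b => T ⊆ b)).card ≤ 1) ↔ Pk B := by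
    intro B
    constructor
    · intro h b hb b' hb' hne
      by_contra hlt
      obtain ⟨T, hT, hT3⟩ := Finset.exists_subset_card_eq (s := b ∩ b') (n := 3) (by omega)
      have h1 := Finset.card_le_one.1 (h T hT3) b
        (Finset.mem_filter.2 ⟨hb, hT.trans Finset.inter_subset_left⟩) b'
        (Finset.mem_filter.2 ⟨hb', hT.trans Finset.inter_subset_right⟩)
      exact hne h1
    · intro h T hT
      rw [Finset.card_le_one]
      intro b hb b' hb'
      rw [Finset.mem_filter] at hb hb'
      exact h.eq_of_three hT hb.1 hb'.1 hb.2 hb'.2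
  constructor
  · rintro ⟨B, h1, h2, h3⟩
    exact ⟨B, h1, (key B).1 h2, h3⟩
  · rintro ⟨B, h1, h2, h3⟩
    exact ⟨B, h1, (key B).2 h2, h3⟩

theorem pn_eq {n m : ℕ} (h : LB n m) (hu : ∀ m', LB n m' → m' ≤ m) : packingNumber n 4 3 = m := by
  unfold packingNumber
  apply IsGreatest.csSup_eq
  exact ⟨set_iff.2 h, fun m' hm' => hu m' (set_iff.1 hm')⟩

theorem ub_gen {n m : ℕ} (h : LB n m) : m ≤ n * ((n - 1) * ((n - 2) / 2) / 3) / 4 := by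
  obtain ⟨B, h4, hpk, rfl⟩ := h
  have := ub_of_deg h4 (deg_le h4 hpk)
  rwa [Fintype.card_fin] at this

theorem ub_six {n m : ℕ} (h6 : n % 6 = 0) (h : LB n m) :
    m ≤ n * ((n - 1) * (n - 2) / 6 - 1) / 4 := by
  obtain ⟨B, h4, hpk, rfl⟩ := h
  have := ub_of_deg h4 (fun x => deg_le6 h4 hpk x (by rwa [Fintype.card_fin]))
  rwa [Fintype.card_fin] at this

theorem in_eq {a b c : ℕ} (d : ℕ) (hd : d < 3) (h : a * b = d + 3 * c) : a * b / 3 = c := by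
  omega

theorem lb_main (n : ℕ) (hn : 4 ≤ n) (h6 : n % 6 ≠ 0) :
    LB n (n * ((n - 1) * ((n - 2) / 2) / 3) / 4) := by
  have hr : n % 6 = 1 ∨ n % 6 = 2 ∨ n % 6 = 3 ∨ n % 6 = 4 ∨ n % 6 = 5 := by omega
  rcases hr with hr | hr | hr | hr | hr
  · obtain ⟨m, hm, hL⟩ := lb_odd hn (Or.inl hr)
    obtain ⟨j, rfl⟩ : ∃ j, n = 6 * j + 7 := ⟨n / 6 - 1, by omega⟩
    rw [show 6 * j + 7 - 1 = 6 * j + 6 by omega, show 6 * j + 7 - 3 = 6 * j + 4 by omega] at hm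
    rw [show 6 * j + 7 - 1 = 6 * j + 6 by omega, show (6 * j + 7 - 2) / 2 = 3 * j + 2 by omega,
      in_eq 0 (by omega) (show (6 * j + 6) * (3 * j + 2) = 0 + 3 * ((2 * j + 2) * (3 * j + 2)) by
        ring)]
    have e : 4 * m = (6 * j + 7) * ((2 * j + 2) * (3 * j + 2)) := by nlinarith
    rwa [← e, Nat.mul_div_cancel_left _ (by omega)]
  · obtain ⟨m, hm, hL⟩ := lb_even hn (by omega) h6
    obtain ⟨j, rfl⟩ : ∃ j, n = 6 * j + 2 := ⟨n / 6, by omega⟩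
    rw [show 6 * j + 2 - 1 = 6 * j + 1 by omega, show 6 * j + 2 - 2 = 6 * j by omega] at hm
    rw [show 6 * j + 2 - 1 = 6 * j + 1 by omega, show (6 * j + 2 - 2) / 2 = 3 * j by omega,
      in_eq 0 (by omega) (show (6 * j + 1) * (3 * j) = 0 + 3 * ((6 * j + 1) * j) by ring)]
    have e : 4 * m = (6 * j + 2) * ((6 * j + 1) * j) := by nlinarith
    rwa [← e, Nat.mul_div_cancel_left _ (by omega)]
  · obtain ⟨m, hm, hL⟩ := lb_odd hn (Or.inr hr)
    obtain ⟨j, rfl⟩ : ∃ j, n = 6 * j + 3 := ⟨n / 6, by omega⟩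
    rw [show 6 * j + 3 - 1 = 6 * j + 2 by omega, show 6 * j + 3 - 3 = 6 * j by omega] at hm
    rw [show 6 * j + 3 - 1 = 6 * j + 2 by omega, show (6 * j + 3 - 2) / 2 = 3 * j by omega,
      in_eq 0 (by omega) (show (6 * j + 2) * (3 * j) = 0 + 3 * ((6 * j + 2) * j) by ring)]
    have e : 4 * m = (6 * j + 3) * ((6 * j + 2) * j) := by nlinarith
    rwa [← e, Nat.mul_div_cancel_left _ (by omega)]
  · obtain ⟨m, hm, hL⟩ := lb_even hn (by omega) h6
    obtain ⟨j, rfl⟩ : ∃ j, n = 6 * j + 4 := ⟨n / 6, by omega⟩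
    rw [show 6 * j + 4 - 1 = 6 * j + 3 by omega, show 6 * j + 4 - 2 = 6 * j + 2 by omega] at hm
    rw [show 6 * j + 4 - 1 = 6 * j + 3 by omega, show (6 * j + 4 - 2) / 2 = 3 * j + 1 by omega,
      in_eq 0 (by omega) (show (6 * j + 3) * (3 * j + 1) = 0 + 3 * ((2 * j + 1) * (3 * j + 1)) by
        ring)]
    have e : 4 * m = (6 * j + 4) * ((2 * j + 1) * (3 * j + 1)) := by nlinarith
    rwa [← e, Nat.mul_div_cancel_left _ (by omega)]
  · have h12 : n % 12 = 5 ∨ n % 12 = 11 := by omega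
    rcases h12 with h12 | h12
    · obtain ⟨k, rfl⟩ : ∃ k, n = 12 * k + 5 := ⟨n / 12, by omega⟩
      rcases Nat.eq_zero_or_pos k with rfl | hk
      · refine ⟨{{0, 1, 2, 3}}, ?_, ?_, by simp⟩
        · intro b hb
          rw [Finset.mem_singleton.1 hb]; decide
        · intro b hb b' hb' hne
          rw [Finset.mem_singleton] at hb hb'
          exact absurd (hb.trans hb'.symm) hne
      · have hL := lb_five hk
        rw [show 12 * k + 5 - 1 = 12 * k + 4 by omega,
          show (12 * k + 5 - 2) / 2 = 6 * k + 1 by omega,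
          in_eq 1 (by omega) (show (12 * k + 4) * (6 * k + 1) =
            1 + 3 * (24 * k ^ 2 + 12 * k + 1) by ring),
          show (12 * k + 5) * (24 * k ^ 2 + 12 * k + 1) =
            1 + 4 * (72 * k ^ 3 + 66 * k ^ 2 + 18 * k + 1) by ring,
          Nat.add_mul_div_left _ _ (by omega)]
        simpa using hL
    · obtain ⟨m, hm, hL⟩ := lb_eleven (k := n / 12 + 1) (by omega)
      obtain ⟨k, rfl⟩ : ∃ k, n = 12 * k + 11 := ⟨n / 12, by omega⟩
      rw [show (12 * k + 11) / 12 + 1 = k + 1 by omega] at hm hL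
      rw [show 12 * (k + 1) - 1 = 12 * k + 11 by omega] at hL
      rw [show 12 * k + 11 - 1 = 12 * k + 10 by omega,
          show (12 * k + 11 - 2) / 2 = 6 * k + 4 by omega,
          in_eq 1 (by omega) (show (12 * k + 10) * (6 * k + 4) =
            1 + 3 * (24 * k ^ 2 + 36 * k + 13) by ring)]
      have e : (12 * k + 11) * (24 * k ^ 2 + 36 * k + 13) = 3 + 4 * m := by nlinarith
      rw [e, Nat.add_mul_div_left _ _ (by omega)]
      simpa using hL

theorem lb_main6 (n : ℕ) (hn : 4 ≤ n) (h6 : n % 6 = 0) :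
    LB n (n * ((n - 1) * (n - 2) / 6 - 1) / 4) := by
  obtain ⟨j, rfl⟩ : ∃ j, n = 6 * (j + 1) := ⟨n / 6 - 1, by omega⟩
  obtain ⟨m, hm, hL⟩ := lb_six (j := j + 1) (by omega)
  have hc := c3 (6 * j + 4)
  rw [show 6 * j + 4 + 2 = 6 * (j + 1) by ring] at hc
  have hdiv : (6 * (j + 1) - 1) * (6 * (j + 1) - 2) / 6 = 6 * j * j + 9 * j + 3 := by
    rw [show 6 * (j + 1) - 1 = 6 * j + 5 by omega, show 6 * (j + 1) - 2 = 6 * j + 4 by omega,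
      show (6 * j + 5) * (6 * j + 4) = 2 + 6 * (6 * j * j + 9 * j + 3) by ring]
    omega
  rw [hdiv, show 6 * j * j + 9 * j + 3 - 1 = 6 * j * j + 9 * j + 2 by omega]
  have e : 6 * (j + 1) * (6 * j * j + 9 * j + 2) = 4 * m := by nlinarith
  rwa [e, Nat.mul_div_cancel_left _ (by omega)]

end Final

theorem stmt13 (n : ℕ) (hn : 4 ≤ n) :
    (n % 6 ≠ 0 → packingNumber n 4 3 = n * ((n - 1) * ((n - 2) / 2) / 3) / 4) ∧
    (n % 6 = 0 → packingNumber n 4 3 = n * ((n - 1) * (n - 2) / 6 - 1) / 4) := by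
  constructor
  · intro h6
    exact pn_eq (lb_main n hn h6) fun m' h => ub_gen h
  · intro h6
    exact pn_eq (lb_main6 n hn h6) fun m' h => ub_six h6 h
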